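/- arXiv:2004.12653 — 5 statements merged into one kernel-verified Lean document; each statement's English description precedes it below -/
import Mathlib

section
/- The kneading group K is amenable: there exists a finitely additive probability measure μ defined on all subsets of K which is left-invariant, i.e. μ(gA) = μ(A) for every g ∈ K and every A ⊆ K. -/
/-- States of the kneading automaton: `a i` is the paper's `a_{i+1}` (for `i < k`),
`b i` is the paper's `b_{i+1}` (for `i < p`), and `id` is the identity state. -/
inductive KState : Type
  | a (i : ℕ)
  | b (i : ℕ)
  | id
  deriving DecidableEq

/-- Transition function of the kneading automaton `𝒦(x₁…x_k, y₁…y_p)`, where the paper's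
`x_i` is `x (i-1)` and `y_i` is `y (i-1)`.  `KTrans k p x y s z = (output letter, restriction)`. -/
def KTrans (k p : ℕ) (x y : ℕ → ℤ) : KState → ℤ → ℤ × KState
  | .a 0, z => (z + 1, .id)
  | .a (i+1), z => if z = x i then (z, .a i) else (z, .id)
  | .b 0, z =>
      if z = x (k-1) then (z, .a (k-1))
      else if z = y (p-1) then (z, .b (p-1))
      else (z, .id)
  | .b (i+1), z => if z = y i then (z, .b i) else (z, .id)
  | .id, z => (z, .id)

/-- The action of a state on the tree `ℤ*` of finite words over `ℤ`,
defined recursively by `q(zv) = q(z)·(q|_z)(v)`. -/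
def stateAct (k p : ℕ) (x y : ℕ → ℤ) : KState → List ℤ → List ℤ
  | _, [] => []
  | s, z :: v => (KTrans k p x y s z).1 :: stateAct k p x y (KTrans k p x y s z).2 v

/-- The generating states `S = {a₁,…,a_k, b₁,…,b_p}`. -/
def IsGen (k p : ℕ) (s : KState) : Prop :=
  (∃ i, i < k ∧ s = .a i) ∨ (∃ j, j < p ∧ s = .b j)

/-- The generators of the kneading group, as permutations of `List ℤ` whose underlying
function is the action of a generating state. -/
def SGens (k p : ℕ) (x y : ℕ → ℤ) : Set (Equiv.Perm (List ℤ)) :=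
  {g | ∃ s : KState, IsGen k p s ∧ ⇑g = stateAct k p x y s}

/-- The kneading group `K = 𝕂(x₁…x_k, y₁…y_p)`. -/
def Kgroup (k p : ℕ) (x y : ℕ → ℤ) : Subgroup (Equiv.Perm (List ℤ)) :=
  Subgroup.closure (SGens k p x y)

/-!
The generators act on the tree by translations of the letters, so each is encoded by a portrait: an
integer label at every vertex. Taken modulo functions vanishing on all deep vertices, the labels
satisfy a cocycle identity and give an affine action of the group of portraits on label germs. The
stabilizers of this action are conjugate to subgroups of the group of finitary portraits, which is
amenable, being a union of iterated wreath products of abelian groups. Hence a group of portraits is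
amenable as soon as its action on label germs has an invariant mean.

For the kneading group, the germ of `a_i` is zero and the germ of `b_j` is a single lamp placed at a
periodic end `ξ_j` of the tree, while the linear part of the action permutes lamps as the group
permutes ends. So the action is of lamplighter type, and it has almost invariant means as soon as
the lamps `ξ_j` are recurrent (have zero capacity) for the action on ends: let each lamp be lit with
a probability that is one at the `ξ_j` and varies slowly in the sense of Dirichlet energy, and let
the state of a lit lamp be uniform on a long interval of `ℕ`; this random configuration is hardly
changed by moving the lamps, nor by adding one to the lamp at `ξ_j`. Recurrence holds because a
generator is active at a single vertex of each level of the tree, where it translates the letter by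
one, and the walk on `ℤ` is recurrent. This is the strategy of Juschenko, Nekrashevych and de la
Salle.
-/

open Filter Topology

/-! ### Means and amenable actions -/

theorem exists_nat_two_div_lt {ε : ℝ} (hε : 0 < ε) : ∃ n : ℕ, 2 / (n + 1 : ℝ) < ε := by
  obtain ⟨n, hn⟩ := exists_nat_one_div_lt (half_pos hε)
  exact ⟨n, by linarith [mul_one_div (2 : ℝ) (n + 1)]⟩

/-- A mean on `Y`: a finitely additive probability measure, given by its integral. Only the values
on bounded functions matter; the integral of an unbounded function is an arbitrary number. -/
structure Mean (Y : Type*) where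
  integral : (Y → ℝ) →ₗ[ℝ] ℝ
  integral_one : integral 1 = 1
  integral_nonneg : ∀ f : Y → ℝ, (∀ y, f y ∈ Set.Icc 0 1) → 0 ≤ integral f

namespace Mean

variable {X Y Z ι : Type*}

instance : CoeFun (Mean Y) fun _ => (Y → ℝ) → ℝ := ⟨fun M => M.integral⟩

theorem integral_le_one (M : Mean Y) {f : Y → ℝ} (hf : ∀ y, f y ∈ Set.Icc 0 1) : M f ≤ 1 := by
  have h := M.integral_nonneg (1 - f) fun y => by
    have := hf y
    exact ⟨sub_nonneg.2 this.2, sub_le_self _ this.1⟩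
  rw [map_sub, M.integral_one] at h
  linarith

theorem abs_integral_le_one (M : Mean Y) {f : Y → ℝ} (hf : ∀ y, |f y| ≤ 1) : |M f| ≤ 1 := by
  have half_mem (y : Y) : ((1 / 2 : ℝ) • (f + 1)) y ∈ Set.Icc (0 : ℝ) 1 := by
    have := abs_le.1 (hf y)
    simp only [Pi.smul_apply, Pi.add_apply, Pi.one_apply, smul_eq_mul, Set.mem_Icc]
    constructor <;> linarith
  have hnonneg := M.integral_nonneg _ half_mem
  have hle := M.integral_le_one half_mem
  rw [map_smul, map_add, M.integral_one, smul_eq_mul] at hnonneg hle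
  exact abs_le.2 ⟨by linarith, by linarith⟩

/-- The pushforward of a mean. -/
def map (M : Mean Y) (e : Y → Z) : Mean Z where
  integral := M.integral ∘ₗ LinearMap.funLeft ℝ ℝ e
  integral_one := M.integral_one
  integral_nonneg _ hf := M.integral_nonneg _ fun y => hf (e y)

theorem map_apply (M : Mean Y) (e : Y → Z) (f : Z → ℝ) : M.map e f = M fun y => f (e y) := rfl

/-- The average of a family of means against a mean on its index set. -/
def bind (M : Mean Y) (q : Y → Mean Z) : Mean Z where
  integral := M.integral ∘ₗ LinearMap.pi fun y => (q y).integral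
  integral_one := by
    convert M.integral_one using 1
    exact congrArg M (funext fun y => (q y).integral_one)
  integral_nonneg f hf :=
    M.integral_nonneg _ fun y => ⟨(q y).integral_nonneg f hf, (q y).integral_le_one hf⟩

theorem bind_apply (M : Mean Y) (q : Y → Mean Z) (f : Z → ℝ) :
    M.bind q f = M fun y => q y f := rfl

/-- The finitely supported mean with weights `w` on `s`. -/
def ofWeights (s : Finset Y) (w : Y → ℝ) (hw : ∀ y ∈ s, 0 ≤ w y) (hsum : ∑ y ∈ s, w y = 1) :
    Mean Y where
  integral := ∑ y ∈ s, w y • LinearMap.proj y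
  integral_one := by simpa using hsum
  integral_nonneg f hf := by
    simpa using Finset.sum_nonneg fun y hy => mul_nonneg (hw y hy) (hf y).1

theorem ofWeights_apply (s : Finset Y) (w : Y → ℝ) (hw : ∀ y ∈ s, 0 ≤ w y)
    (hsum : ∑ y ∈ s, w y = 1) (f : Y → ℝ) : ofWeights s w hw hsum f = ∑ y ∈ s, w y * f y := by
  simp [ofWeights]

/-- `M` is invariant under `u` up to an error `ε` in total variation. -/
def AlmostInvariant (M : Mean Y) (u : Y → Y) (ε : ℝ) : Prop :=
  ∀ f : Y → ℝ, (∀ y, |f y| ≤ 1) → |M (fun y => f (u y)) - M f| ≤ ε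

/-- `M` is invariant under `u`. -/
def Invariant (M : Mean Y) (u : Y → Y) : Prop :=
  ∀ f : Y → ℝ, (∀ y, |f y| ≤ 1) → M (fun y => f (u y)) = M f

theorem AlmostInvariant.mono {M : Mean Y} {u : Y → Y} {δ ε : ℝ} (h : M.AlmostInvariant u δ)
    (hδε : δ ≤ ε) : M.AlmostInvariant u ε :=
  fun f hf => (h f hf).trans hδε

theorem AlmostInvariant.comp {M : Mean Y} {u v : Y → Y} {δ ε : ℝ} (hu : M.AlmostInvariant u δ)
    (hv : M.AlmostInvariant v ε) : M.AlmostInvariant (u ∘ v) (δ + ε) := by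
  intro f hf
  have hfu := hv (fun y => f (u y)) fun y => hf _
  rw [add_comm]
  exact (abs_sub_le _ _ _).trans (add_le_add hfu (hu f hf))

theorem AlmostInvariant.of_leftInverse {M : Mean Y} {u v : Y → Y} {ε : ℝ}
    (hu : M.AlmostInvariant u ε) (hvu : Function.LeftInverse v u) : M.AlmostInvariant v ε := by
  intro f hf
  have hfv := hu (fun y => f (v y)) fun y => hf _
  simp only [hvu _] at hfv
  rwa [abs_sub_comm]

theorem Invariant.almostInvariant {M : Mean Y} {u : Y → Y} {ε : ℝ} (h : M.Invariant u)
    (hε : 0 ≤ ε) : M.AlmostInvariant u ε := by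
  intro f hf
  rwa [h f hf, sub_self, abs_zero]

theorem Invariant.comp {M : Mean Y} {u v : Y → Y} (hu : M.Invariant u) (hv : M.Invariant v) :
    M.Invariant (u ∘ v) :=
  fun f hf => (hv (fun y => f (u y)) fun _ => hf _).trans (hu f hf)

theorem Invariant.of_leftInverse {M : Mean Y} {u v : Y → Y} (hu : M.Invariant u)
    (hvu : Function.LeftInverse v u) : M.Invariant v := by
  intro f hf
  have hfv := hu (fun y => f (v y)) fun y => hf _
  simp only [hvu _] at hfv
  exact hfv.symm

theorem Invariant.map {M : Mean Y} {u : Y → Y} {v : Z → Z} {e : Y → Z} (h : M.Invariant u)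
    (he : Function.Semiconj e u v) : (M.map e).Invariant v := by
  intro f hf
  simp only [map_apply, ← he.eq]
  exact h (fun y => f (e y)) fun y => hf _

theorem exists_tendsto_of_abs_le_one (U : Ultrafilter ι) {a : ι → ℝ} (ha : ∀ i, |a i| ≤ 1) :
    ∃ c, Tendsto a U (𝓝 c) := by
  obtain ⟨c, -, hc⟩ := (isCompact_Icc (a := (-1 : ℝ)) (b := 1)).ultrafilter_le_nhds (U.map a)
    (le_principal_iff.2 (mem_map.2 (univ_mem' fun i => abs_le.1 (ha i))))
  exact ⟨c, hc⟩

/-- The sequences converging along a filter. -/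
def convergentSubmodule (l : Filter ι) : Submodule ℝ (ι → ℝ) where
  carrier := {a | ∃ c, Tendsto a l (𝓝 c)}
  add_mem' := fun ⟨c, hc⟩ ⟨d, hd⟩ => ⟨c + d, hc.add hd⟩
  zero_mem' := ⟨0, tendsto_const_nhds⟩
  smul_mem' r _ := fun ⟨c, hc⟩ => ⟨r * c, hc.const_mul r⟩

theorem exists_linearMap_eq_lim (l : Filter ι) [l.NeBot] :
    ∃ L : (ι → ℝ) →ₗ[ℝ] ℝ, ∀ a c, Tendsto a l (𝓝 c) → L a = c := by
  choose lim hlim using fun a : convergentSubmodule l => a.2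
  let limₗ : convergentSubmodule l →ₗ[ℝ] ℝ :=
    { toFun := lim
      map_add' := fun a b => tendsto_nhds_unique (hlim (a + b)) ((hlim a).add (hlim b))
      map_smul' := fun r a => tendsto_nhds_unique (hlim (r • a)) ((hlim a).const_mul r) }
  obtain ⟨L, hL⟩ := limₗ.exists_extend
  refine ⟨L, fun a c ha => ?_⟩
  have : L a = lim ⟨a, c, ha⟩ := LinearMap.congr_fun hL ⟨a, c, ha⟩
  exact this.trans (tendsto_nhds_unique (hlim _) ha)

theorem exists_eq_lim (l : Filter ι) [l.NeBot] :
    ∃ L : Mean ι, ∀ a c, Tendsto a l (𝓝 c) → L a = c := by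
  let U := Ultrafilter.of l
  obtain ⟨L, hL⟩ := exists_linearMap_eq_lim (U : Filter ι)
  refine ⟨⟨L, hL 1 1 tendsto_const_nhds, fun a ha => ?_⟩,
    fun a c hac => hL a c (hac.mono_left (Ultrafilter.of_le l))⟩
  obtain ⟨c, hc⟩ := exists_tendsto_of_abs_le_one U fun i =>
    (abs_of_nonneg (ha i).1).trans_le (ha i).2
  rw [hL a c hc]
  exact ge_of_tendsto' hc fun i => (ha i).1

theorem exists_invariant (u : ι → Y → Y)
    (h : ∀ T : Finset ι, ∀ ε > 0, ∃ M : Mean Y, ∀ i ∈ T, M.AlmostInvariant (u i) ε) :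
    ∃ M : Mean Y, ∀ i, M.Invariant (u i) := by
  classical
  choose P hP using fun j : Finset ι × ℕ => h j.1 (1 / (j.2 + 1)) Nat.one_div_pos_of_nat
  obtain ⟨L, hL⟩ := exists_eq_lim (atTop : Filter (Finset ι × ℕ))
  refine ⟨L.bind P, fun i f hf => ?_⟩
  suffices hdiff : Tendsto ((fun j => P j fun y => f (u i y)) - fun j => P j f) atTop (𝓝 0) by
    rw [bind_apply, bind_apply, ← sub_eq_zero, ← map_sub]
    exact hL _ _ hdiff
  have hsnd_atTop : Tendsto (Prod.snd : Finset ι × ℕ → ℕ) atTop atTop := by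
    rw [← prod_atTop_atTop_eq]
    exact tendsto_snd
  have hsnd : Tendsto (fun j : Finset ι × ℕ => (1 : ℝ) / (j.2 + 1)) atTop (𝓝 0) :=
    tendsto_one_div_add_atTop_nhds_zero_nat.comp hsnd_atTop
  refine squeeze_zero_norm' ?_ hsnd
  filter_upwards [eventually_ge_atTop (({i} : Finset ι), 0)] with j hj
  exact hP j i (hj.1 (Finset.mem_singleton_self i)) f hf

/-- The uniform mean on `{0, …, n}`. -/
noncomputable def uniform (n : ℕ) : Mean ℕ :=
  ofWeights (Finset.range (n + 1)) (fun _ => 1 / (n + 1)) (fun _ _ => by positivity)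
    (by simp [Nat.cast_add_one_ne_zero])

theorem uniform_apply (n : ℕ) (f : ℕ → ℝ) :
    uniform n f = (∑ i ∈ Finset.range (n + 1), f i) / (n + 1) := by
  rw [uniform, ofWeights_apply, ← Finset.mul_sum, one_div_mul_eq_div]

theorem uniform_almostInvariant_succ (n : ℕ) :
    (uniform n).AlmostInvariant (· + 1) (2 / (n + 1)) := by
  intro f hf
  have telescope := Finset.sum_range_sub f (n + 1)
  rw [Finset.sum_sub_distrib] at telescope
  rw [uniform_apply, uniform_apply, ← sub_div, telescope, abs_div,
    abs_of_pos (Nat.cast_add_one_pos (α := ℝ) n)]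
  gcongr
  linarith [abs_sub (f (n + 1)) (f 0), hf (n + 1), hf 0]

theorem exists_invariant_succ : ∃ M : Mean ℕ, M.Invariant (· + 1) := by
  obtain ⟨M, hM⟩ := exists_invariant (fun _ : Unit => (· + 1)) fun _ ε hε => by
    obtain ⟨n, hn⟩ := exists_nat_two_div_lt hε
    exact ⟨uniform n, fun _ _ => (uniform_almostInvariant_succ n).mono hn.le⟩
  exact ⟨M, hM ()⟩

/-- The group elements leaving a mean invariant. -/
def stabilizer (G : Type*) [Group G] [MulAction G Y] (M : Mean Y) : Subgroup G where
  carrier := {g | M.Invariant (g • ·)}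
  one_mem' f _ := by simp only [one_smul]
  mul_mem' {a b} ha hb := by
    simpa only [Set.mem_ofPred_eq, mul_smul, Function.comp_def] using Invariant.comp ha hb
  inv_mem' {a} ha := Invariant.of_leftInverse ha (inv_smul_smul a)

end Mean

/-- The action of `G` on `Y` has an invariant mean. -/
def IsAmenableAction (G Y : Type*) [SMul G Y] : Prop :=
  ∃ M : Mean Y, ∀ g : G, M.Invariant (g • ·)

/-- Amenability of a group: the left translation action has an invariant mean. -/
abbrev IsAmenable (G : Type*) [Group G] : Prop := IsAmenableAction G G

namespace IsAmenableAction

theorem closure {G Y : Type*} [Group G] [MulAction G Y] {S : Set G}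
    (h : ∀ ε > 0, ∃ M : Mean Y, ∀ g ∈ S, M.AlmostInvariant (g • ·) ε) :
    IsAmenableAction (Subgroup.closure S) Y := by
  obtain ⟨M, hM⟩ := Mean.exists_invariant (fun g : S => ((g : G) • ·)) fun _ ε hε =>
    let ⟨M, hM⟩ := h ε hε
    ⟨M, fun g _ => hM g g.2⟩
  have hle : Subgroup.closure S ≤ M.stabilizer G := (Subgroup.closure_le _).2 fun g hg => hM ⟨g, hg⟩
  exact ⟨M, fun g => hle g.2⟩

open MulAction in
theorem isAmenable_of_stabilizers {G Y : Type*} [Group G] [MulAction G Y]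
    (hY : IsAmenableAction G Y) (hstab : ∀ y : Y, IsAmenable (stabilizer G y)) :
    IsAmenable G := by
  obtain ⟨P, hP⟩ := hY
  have hstab' (y : Y) : ∃ q : Mean G, ∀ g ∈ stabilizer G y, q.Invariant (g * ·) := by
    obtain ⟨q, hq⟩ := hstab y
    exact ⟨q.map (↑), fun g hg => (hq ⟨g, hg⟩).map fun _ => rfl⟩
  choose q hq using hstab'
  let rep (y : Y) : Y := (Quotient.mk (orbitRel G Y) y).out
  have rep_smul (g : G) (y : Y) : rep (g • y) = rep y :=
    congrArg Quotient.out (Quotient.sound (s := orbitRel G Y) (mem_orbit y g))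
  have exists_smul_rep (y : Y) : ∃ g : G, g • rep y = y :=
    (orbitRel G Y).symm (Quotient.mk_out (s := orbitRel G Y) y)
  choose σ hσ using exists_smul_rep
  refine ⟨P.bind fun y => (q (rep y)).map (σ y * ·), fun g f hf => ?_⟩
  -- `g * σ y` and `σ (g • y)` differ by an element of the stabilizer of `rep y`.
  have cocycle_mem (y : Y) : (σ (g • y))⁻¹ * g * σ y ∈ stabilizer G (rep y) := by
    rw [mem_stabilizer_iff, mul_smul, mul_smul, hσ, inv_smul_eq_iff, ← rep_smul g y, hσ]
  have integral_fiber (y : Y) :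
      q (rep y) (fun h => f (g * (σ y * h))) = q (rep (g • y)) fun h => f (σ (g • y) * h) := by
    rw [rep_smul, ← hq (rep y) _ (cocycle_mem y) (fun h => f (σ (g • y) * h)) fun _ => hf _]
    exact congrArg (q (rep y)) (funext fun h => by group)
  simp only [Mean.bind_apply, Mean.map_apply, smul_eq_mul, integral_fiber]
  exact hP g (fun y => q (rep y) fun h => f (σ y * h))
    fun y => (q (rep y)).abs_integral_le_one fun _ => hf _

end IsAmenableAction

namespace IsAmenable

variable {G H : Type*} [Group G] [Group H]

theorem of_commute (hcomm : ∀ g h : G, Commute g h) : IsAmenable G := by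
  classical
  have finite_invariant (T : Finset G) : ∃ M : Mean G, ∀ g ∈ T, M.Invariant (g * ·) := by
    induction T using Finset.induction_on with
    | empty => exact ⟨Mean.exists_invariant_succ.choose.map fun _ => 1, by simp⟩
    | insert t T _ ih =>
      obtain ⟨P, hP⟩ := ih
      obtain ⟨N, hN⟩ := Mean.exists_invariant_succ
      have hQ : (N.map (t ^ ·)).Invariant (t * ·) := hN.map fun n => pow_succ' t n
      refine ⟨(N.map (t ^ ·)).bind fun w => P.map (w * ·), fun g hg f hf => ?_⟩
      simp only [Mean.bind_apply (N.map _), Mean.map_apply P]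
      rcases Finset.mem_insert.1 hg with rfl | hg
      · simp only [← mul_assoc]
        exact hQ (fun w => P fun v => f (w * v)) fun w => P.abs_integral_le_one fun _ => hf _
      · congr 1
        funext w
        simp only [← mul_assoc, (hcomm g w).eq]
        simp only [mul_assoc]
        exact hP g hg (fun v => f (w * v)) fun _ => hf _
  exact Mean.exists_invariant _ fun T ε hε =>
    let ⟨M, hM⟩ := finite_invariant T
    ⟨M, fun g hg => (hM g hg).almostInvariant hε.le⟩

theorem of_injective (φ : H →* G) (hφ : Function.Injective φ) (hG : IsAmenable G) :
    IsAmenable H := by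
  obtain ⟨M, hM⟩ := hG
  let := MulAction.compHom G φ
  refine IsAmenableAction.isAmenable_of_stabilizers (Y := G) ⟨M, fun h => hM (φ h)⟩
    fun w => of_commute fun g h => ?_
  have eq_one (g : MulAction.stabilizer H w) : g = 1 :=
    Subtype.ext (hφ ((mul_eq_right.1 g.2).trans (map_one φ).symm))
  rw [eq_one g]
  exact Commute.one_left h

theorem of_surjective (φ : G →* H) (hφ : Function.Surjective φ) (hG : IsAmenable G) :
    IsAmenable H := by
  obtain ⟨M, hM⟩ := hG
  refine ⟨M.map φ, fun h => ?_⟩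
  obtain ⟨g, rfl⟩ := hφ h
  exact (hM g).map (map_mul φ g)

theorem of_finset_subset
    (h : ∀ T : Finset G, ∃ H : Subgroup G, (T : Set G) ⊆ H ∧ IsAmenable H) : IsAmenable G :=
  Mean.exists_invariant _ fun T ε hε => by
    obtain ⟨H, hTH, M, hM⟩ := h T
    refine ⟨M.map Subtype.val, fun g hg => ?_⟩
    have hinv : (M.map Subtype.val).Invariant (g * ·) := (hM ⟨g, hTH hg⟩).map fun _ => rfl
    exact hinv.almostInvariant hε.le

theorem exists_finitelyAdditive_measure (hG : IsAmenable G) :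
    ∃ μ : Set G → ℝ, μ Set.univ = 1 ∧ (∀ A, 0 ≤ μ A) ∧
      (∀ A B, Disjoint A B → μ (A ∪ B) = μ A + μ B) ∧
      ∀ (g : G) (A : Set G), μ ((fun a => g * a) '' A) = μ A := by
  obtain ⟨M, hM⟩ := hG
  have indicator_mem (A : Set G) (g : G) : A.indicator (1 : G → ℝ) g ∈ Set.Icc 0 1 :=
    ⟨Set.indicator_nonneg (fun _ _ => zero_le_one) g,
      Set.indicator_le_self' (fun _ _ => zero_le_one) g⟩
  refine ⟨fun A => M (A.indicator 1), by simp [M.integral_one],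
    fun A => M.integral_nonneg _ (indicator_mem A),
    fun A B hAB => ?_, fun g A => ?_⟩
  · rw [← map_add]
    exact congrArg M (Set.indicator_union_of_disjoint hAB _)
  have hinv := hM g (((g * ·) '' A).indicator 1) fun h =>
    (abs_of_nonneg (indicator_mem _ h).1).trans_le (indicator_mem _ h).2
  exact hinv.symm.trans
    (congrArg M (funext fun _ => Set.indicator_image (mul_right_injective g)))

end IsAmenable

/-! ### Portraits of tree automorphisms -/

/-- An automorphism of the tree of words over `A` acting by a translation below each vertex, given
by the translation amounts. Words are stored in reverse, the last letter first. -/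
@[ext] structure Portrait (A : Type*) where
  label : List A → A

namespace Portrait

variable {A : Type*} [AddCommGroup A]

/-- The image of a word under a portrait. -/
def apply (g : Portrait A) : List A → List A
  | [] => []
  | z :: v => (z + g.label v) :: apply g v

instance : SMul (Portrait A) (List A) := ⟨apply⟩

theorem smul_nil (g : Portrait A) : g • ([] : List A) = [] := rfl

theorem smul_cons (g : Portrait A) (z : A) (v : List A) :
    g • (z :: v) = (z + g.label v) :: g • v := rfl

@[simp] theorem length_smul (g : Portrait A) (v : List A) : (g • v).length = v.length := by
  induction v with
  | nil => rfl
  | cons z v ih => simp only [smul_cons, List.length_cons, ih]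

/-- The preimage of a word under a portrait. -/
def applyInv (g : Portrait A) : List A → List A
  | [] => []
  | z :: v => (z - g.label (applyInv g v)) :: applyInv g v

theorem applyInv_smul (g : Portrait A) (v : List A) : g.applyInv (g • v) = v := by
  induction v with
  | nil => rfl
  | cons z v ih => rw [smul_cons, applyInv, ih, add_sub_cancel_right]

instance : Mul (Portrait A) := ⟨fun a b => ⟨fun v => b.label v + a.label (b • v)⟩⟩

instance : One (Portrait A) := ⟨⟨fun _ => 0⟩⟩

instance : Inv (Portrait A) := ⟨fun g => ⟨fun v => -g.label (g.applyInv v)⟩⟩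

theorem mul_label (a b : Portrait A) (v : List A) :
    (a * b).label v = b.label v + a.label (b • v) := rfl

theorem one_label (v : List A) : (1 : Portrait A).label v = 0 := rfl

theorem inv_label (g : Portrait A) (v : List A) : g⁻¹.label v = -g.label (g.applyInv v) := rfl

theorem mul_smul_word (a b : Portrait A) (v : List A) : (a * b) • v = a • b • v := by
  induction v with
  | nil => rfl
  | cons z v ih => simp only [smul_cons, mul_label, ih, add_assoc]

theorem one_smul_word (v : List A) : (1 : Portrait A) • v = v := by
  induction v with
  | nil => rfl
  | cons z v ih => rw [smul_cons, one_label, ih, add_zero]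

instance : Group (Portrait A) :=
  .ofLeftAxioms
    (fun a b c => by ext v; simp only [mul_label, mul_smul_word, add_assoc])
    (fun a => by ext v; rw [mul_label, one_label, add_zero])
    (fun a => by ext v; rw [mul_label, inv_label, applyInv_smul, add_neg_cancel, one_label])

instance : MulAction (Portrait A) (List A) where
  one_smul := one_smul_word
  mul_smul := mul_smul_word

theorem inv_label_smul (g : Portrait A) (v : List A) : g⁻¹.label (g • v) = -g.label v := by
  rw [inv_label, applyInv_smul]

/-- The homomorphism from portraits to permutations of words written first letter first. -/
def wordPerm : Portrait A →* Equiv.Perm (List A) :=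
  (List.reverse_involutive.toPerm.permCongrHom.toMonoidHom).comp
    (MulAction.toPermHom (Portrait A) (List A))

theorem wordPerm_apply (g : Portrait A) (w : List A) :
    wordPerm g w = (g • w.reverse).reverse := rfl

/-! ### Finitary portraits -/

/-- The portraits whose labels vanish at all depths outside `D`. -/
def supportedAt (A : Type*) [AddCommGroup A] (D : Set ℕ) : Subgroup (Portrait A) where
  carrier := {g | ∀ v, v.length ∉ D → g.label v = 0}
  one_mem' _ _ := rfl
  mul_mem' {a b} ha hb v hv := by
    rw [mul_label, hb v hv, ha _ (by rwa [length_smul]), add_zero]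
  inv_mem' {a} ha v hv := by
    rw [← smul_inv_smul a v, inv_label_smul, ha _ (by rwa [length_smul]), neg_zero]

theorem supportedAt_mono {D E : Set ℕ} (h : D ⊆ E) : supportedAt A D ≤ supportedAt A E :=
  fun _ hg v hv => hg v fun hD => hv (h hD)

theorem smul_eq_self_of_mem_supportedAt_singleton {n : ℕ} {g : Portrait A}
    (hg : g ∈ supportedAt A {n}) {v : List A} (hv : v.length ≤ n) : g • v = v := by
  induction v with
  | nil => rfl
  | cons z v ih =>
    rw [List.length_cons] at hv
    rw [smul_cons, ih (by lia), hg v (by rw [Set.mem_singleton_iff]; lia), add_zero]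

theorem commute_of_mem_supportedAt_singleton {n : ℕ} {g h : Portrait A}
    (hg : g ∈ supportedAt A {n}) (hh : h ∈ supportedAt A {n}) : Commute g h := by
  ext v
  rw [mul_label, mul_label]
  by_cases hv : v.length = n
  · rw [smul_eq_self_of_mem_supportedAt_singleton hg hv.le,
      smul_eq_self_of_mem_supportedAt_singleton hh hv.le, add_comm]
  · rw [hg v hv, hh v hv, hg _ (by rwa [length_smul]), hh _ (by rwa [length_smul])]

theorem smul_eq_smul_of_label_eq {n : ℕ} {g h : Portrait A}
    (hgh : ∀ v : List A, v.length < n → g.label v = h.label v) {v : List A} (hv : v.length ≤ n) :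
    g • v = h • v := by
  induction v with
  | nil => rfl
  | cons z v ih =>
    rw [List.length_cons] at hv
    rw [smul_cons, smul_cons, ih (by lia), hgh v (by lia)]

/-- The action on the first `n` levels of the tree. -/
def truncate (A : Type*) [AddCommGroup A] (n : ℕ) : Portrait A →* supportedAt A (Set.Iio n) where
  toFun g := ⟨⟨fun v => if v.length < n then g.label v else 0⟩, fun _ hv => if_neg hv⟩
  map_one' := by ext v; exact ite_self _
  map_mul' a b := by
    ext v
    by_cases hv : v.length < n
    · have htrunc := smul_eq_smul_of_label_eq (n := n) (h := b)
        (g := ⟨fun v => if v.length < n then b.label v else 0⟩) (fun _ hw => if_pos hw) hv.le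
      simp [mul_label, hv, htrunc]
    · simp [mul_label, hv]

theorem truncate_eq_one_iff {n : ℕ} {g : Portrait A} :
    truncate A n g = 1 ↔ ∀ v, v.length < n → g.label v = 0 := by
  refine ⟨fun h v hv => ?_, fun h => Subtype.ext (Portrait.ext (funext fun v => ?_))⟩
  · exact (if_pos hv).symm.trans (congrArg (fun g : supportedAt A _ => g.1.label v) h)
  · exact ite_eq_right_iff.2 (h v)

theorem isAmenable_supportedAt_Iio (n : ℕ) : IsAmenable (supportedAt A (Set.Iio n)) := by
  induction n with
  | zero =>
    refine IsAmenable.of_commute fun g h => ?_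
    have eq_one (g : supportedAt A (Set.Iio 0)) : g = 1 :=
      Subtype.ext (Portrait.ext (funext fun v => g.2 v (Nat.not_lt_zero _)))
    rw [eq_one g]
    exact Commute.one_left h
  | succ n ih =>
    -- The kernel of the truncation is supported at depth `n`, hence commutative.
    obtain ⟨M, hM⟩ := ih
    let φ := (truncate A n).comp (supportedAt A (Set.Iio (n + 1))).subtype
    let := MulAction.compHom (supportedAt A (Set.Iio n)) φ
    refine IsAmenableAction.isAmenable_of_stabilizers (Y := supportedAt A (Set.Iio n))
      ⟨M, fun g => hM (φ g)⟩ fun y => IsAmenable.of_commute fun g h => ?_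
    have mem_level (g : MulAction.stabilizer (supportedAt A (Set.Iio (n + 1))) y) :
        g.1.1 ∈ supportedAt A {n} := fun v hv => by
      rcases lt_or_gt_of_ne hv with hlt | hgt
      · exact truncate_eq_one_iff.1 (mul_eq_right.1 g.2) v hlt
      · exact g.1.2 v (Set.notMem_Iio.2 hgt)
    exact Subtype.ext (Subtype.ext
      (commute_of_mem_supportedAt_singleton (mem_level g) (mem_level h)))

/-- The portraits with nonzero labels at finitely many depths only. -/
def finitary (A : Type*) [AddCommGroup A] : Subgroup (Portrait A) where
  carrier := {g | ∃ n, g ∈ supportedAt A (Set.Iio n)}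
  one_mem' := ⟨0, one_mem _⟩
  mul_mem' := fun ⟨m, ha⟩ ⟨n, hb⟩ => ⟨max m n, mul_mem
    (supportedAt_mono (Set.Iio_subset_Iio (le_max_left m n)) ha)
    (supportedAt_mono (Set.Iio_subset_Iio (le_max_right m n)) hb)⟩
  inv_mem' := fun ⟨n, ha⟩ => ⟨n, inv_mem ha⟩

theorem isAmenable_finitary : IsAmenable (finitary A) := by
  refine IsAmenable.of_finset_subset fun T => ?_
  choose depth hdepth using fun g : finitary A => g.2
  refine ⟨(supportedAt A (Set.Iio (T.sup depth))).subgroupOf (finitary A), fun g hg => ?_, ?_⟩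
  · exact supportedAt_mono (Set.Iio_subset_Iio (Finset.le_sup hg)) (hdepth g)
  · have hle : supportedAt A (Set.Iio (T.sup depth)) ≤ finitary A := fun _ hg => ⟨_, hg⟩
    exact IsAmenable.of_injective (Subgroup.subgroupOfEquivOfLe hle).toMonoidHom
      (Subgroup.subgroupOfEquivOfLe hle).injective (isAmenable_supportedAt_Iio _)

end Portrait

/-! ### The affine action on label germs -/

/-- Functions on the vertices of the tree up to equality at large depth. -/
def LabelGerm (A : Type*) : Type _ := Germ (comap List.length atTop : Filter (List A)) A

namespace LabelGerm

variable {A : Type*}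

/-- The germ of a function on the vertices of the tree. -/
def mk (β : List A → A) : LabelGerm A := Germ.ofFun β

theorem mk_surjective : Function.Surjective (mk : (List A → A) → LabelGerm A) := Quot.mk_surjective

theorem mk_eq_mk_iff {β γ : List A → A} :
    mk β = mk γ ↔ ∃ n : ℕ, ∀ v : List A, n ≤ v.length → β v = γ v := by
  refine Germ.coe_eq.trans ?_
  simp only [EventuallyEq, eventually_comap, eventually_atTop]
  exact ⟨fun ⟨n, hn⟩ => ⟨n, fun v hv => hn _ hv v rfl⟩,
    fun ⟨n, hn⟩ => ⟨n, fun _ hm v hv => hn v (hv ▸ hm)⟩⟩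

variable [AddCommGroup A]

instance : AddCommGroup (LabelGerm A) :=
  inferInstanceAs (AddCommGroup (Germ (comap List.length atTop : Filter (List A)) A))

theorem tendsto_smul_comap_length (g : Portrait A) :
    Tendsto (g • · : List A → List A) (comap List.length atTop) (comap List.length atTop) :=
  tendsto_comap_iff.2 (by simpa [Function.comp_def] using tendsto_comap)

/-- Precomposition of germs with a portrait. -/
def precomp (g : Portrait A) : LabelGerm A →+ LabelGerm A where
  toFun y := Germ.compTendsto y (g • ·) (tendsto_smul_comap_length g)
  map_zero' := rfl
  map_add' y z := Germ.inductionOn₂ y z fun _ _ => rfl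

theorem precomp_mk (g : Portrait A) (β : List A → A) :
    precomp g (mk β) = mk fun v => β (g • v) := rfl

instance : SMul (Portrait A) (LabelGerm A) := ⟨fun g y => precomp g⁻¹ y + mk g⁻¹.label⟩

theorem inv_smul_def (g : Portrait A) (y : LabelGerm A) :
    g⁻¹ • y = precomp g y + mk g.label := by
  change precomp g⁻¹⁻¹ y + mk g⁻¹⁻¹.label = _
  rw [inv_inv]

theorem smul_mk_label (g h : Portrait A) : g • mk h.label = mk (h * g⁻¹).label :=
  congrArg mk (funext fun _ => add_comm _ _)

instance : MulAction (Portrait A) (LabelGerm A) where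
  one_smul y := by
    obtain ⟨β, rfl⟩ := mk_surjective y
    rw [smul_mk_label 1 ⟨β⟩, inv_one, mul_one]
  mul_smul a b y := by
    obtain ⟨β, rfl⟩ := mk_surjective y
    rw [smul_mk_label _ ⟨β⟩, smul_mk_label _ ⟨β⟩, smul_mk_label, mul_inv_rev, mul_assoc]

theorem mk_label_eq_mk_label_iff {g h : Portrait A} :
    mk g.label = mk h.label ↔ g * h⁻¹ ∈ Portrait.finitary A := by
  have label_div (v : List A) : (g * h⁻¹).label (h • v) = g.label v - h.label v := by
    rw [Portrait.mul_label, Portrait.inv_label_smul, inv_smul_smul, neg_add_eq_sub]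
  rw [mk_eq_mk_iff]
  refine exists_congr fun n => ⟨fun heq v hv => ?_, fun hmem v hv => sub_eq_zero.1 ?_⟩
  · rw [← smul_inv_smul h v, label_div, heq _ (by simpa using hv), sub_self]
  · rw [← label_div, hmem _ (by simpa using hv)]

theorem conj_mem_finitary_of_mem_stabilizer {g h : Portrait A}
    (hg : g ∈ MulAction.stabilizer (Portrait A) (mk h.label)) :
    h * g * h⁻¹ ∈ Portrait.finitary A := by
  rw [MulAction.mem_stabilizer_iff, smul_mk_label, eq_comm, mk_label_eq_mk_label_iff] at hg
  simpa only [mul_inv_rev, inv_inv, mul_assoc] using hg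

end LabelGerm

/- The affine action is the right action on the cosets `Finitary \ Portrait`. -/
theorem Portrait.isAmenable_of_isAmenableAction_labelGerm {A : Type*} [AddCommGroup A]
    (H : Subgroup (Portrait A)) (hH : IsAmenableAction H (LabelGerm A)) : IsAmenable H := by
  refine hH.isAmenable_of_stabilizers fun y => ?_
  obtain ⟨β, rfl⟩ := LabelGerm.mk_surjective y
  let φ := ((MulAut.conj (⟨β⟩ : Portrait A)).toMonoidHom.comp H.subtype).comp
    (MulAction.stabilizer H (LabelGerm.mk β)).subtype
  have hφ (g) : φ g ∈ finitary A :=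
    LabelGerm.conj_mem_finitary_of_mem_stabilizer (h := ⟨β⟩) g.2
  refine IsAmenable.of_injective (φ.codRestrict (finitary A) hφ) ?_ isAmenable_finitary
  refine (Function.Injective.of_comp (f := Subtype.val) ?_)
  exact (MulAut.conj _).injective.comp (Subtype.val_injective.comp Subtype.val_injective)

/-! ### Sets of zero capacity -/

section Capacity

variable {X Z ι : Type*}

/-- The Dirichlet energy of `Φ` along the edges `x — u x` with `x ∈ s` is at most `ε`. -/
def EnergyLEOn (s : Set X) (u : X → X) (Φ : X → ℝ) (ε : ℝ) : Prop :=
  ∀ E : Finset X, ↑E ⊆ s → ∑ x ∈ E, (Φ (u x) - Φ x) ^ 2 ≤ ε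

/-- The finitely supported functions with values in `[0, 1]` competing for the capacity of `K`. -/
structure IsTestFunction (K : Set X) (Φ : X → ℝ) : Prop where
  finite_support : (Function.support Φ).Finite
  mem_Icc : ∀ x, Φ x ∈ Set.Icc 0 1
  eq_one : ∀ x ∈ K, Φ x = 1

/-- The set `K` has capacity zero in the graph with edges `x — u i x`: it carries test functions of
arbitrarily small energy. For a single point this is recurrence of the simple random walk. -/
def ZeroCapacity (u : ι → X → X) (K : Set X) : Prop :=
  ∀ ε > 0, ∃ Φ : X → ℝ, IsTestFunction K Φ ∧ ∀ i, EnergyLEOn Set.univ (u i) Φ ε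

theorem sq_max_sub_max_le (a b c d : ℝ) :
    (max a b - max c d) ^ 2 ≤ (a - c) ^ 2 + (b - d) ^ 2 := by
  have h := sq_le_sq' (neg_le_of_abs_le (abs_max_sub_max_le_max a b c d)) (le_of_abs_le
    (abs_max_sub_max_le_max a b c d))
  rcases max_choice |a - c| |b - d| with hmax | hmax <;> rw [hmax, sq_abs] at h <;>
    linarith [sq_nonneg (a - c), sq_nonneg (b - d)]

theorem EnergyLEOn.max {s : Set X} {u : X → X} {Φ Ψ : X → ℝ} {δ ε : ℝ}
    (hΦ : EnergyLEOn s u Φ δ) (hΨ : EnergyLEOn s u Ψ ε) :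
    EnergyLEOn s u (fun x => max (Φ x) (Ψ x)) (δ + ε) := by
  intro E hE
  refine le_trans ?_ (add_le_add (hΦ E hE) (hΨ E hE))
  rw [← Finset.sum_add_distrib]
  exact Finset.sum_le_sum fun x _ => sq_max_sub_max_le _ _ _ _

theorem EnergyLEOn.symm {σ : Equiv.Perm X} {Φ : X → ℝ} {ε : ℝ}
    (h : EnergyLEOn Set.univ σ Φ ε) : EnergyLEOn Set.univ σ.symm Φ ε := by
  intro E _
  have hmap := h (E.map σ.symm.toEmbedding) (Set.subset_univ _)
  rw [Finset.sum_map] at hmap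
  simpa only [Equiv.coe_toEmbedding, Equiv.apply_symm_apply, sub_sq_comm] using hmap

theorem IsTestFunction.max {K L : Set X} {Φ Ψ : X → ℝ} (hΦ : IsTestFunction K Φ)
    (hΨ : IsTestFunction L Ψ) : IsTestFunction (K ∪ L) fun x => max (Φ x) (Ψ x) where
  finite_support := by
    refine (hΦ.finite_support.union hΨ.finite_support).subset fun x hx => ?_
    by_contra hzero
    simp only [Set.mem_union, Function.mem_support, not_or, not_not] at hzero
    exact hx (by simp only [hzero.1, hzero.2, max_self])
  mem_Icc x := ⟨le_max_of_le_left (hΦ.mem_Icc x).1, max_le (hΦ.mem_Icc x).2 (hΨ.mem_Icc x).2⟩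
  eq_one := by
    rintro x (hx | hx)
    · rw [hΦ.eq_one x hx, max_eq_left (hΨ.mem_Icc x).2]
    · rw [hΨ.eq_one x hx, max_eq_right (hΦ.mem_Icc x).2]

namespace ZeroCapacity

theorem symm {π : ι → Equiv.Perm X} {K : Set X} (h : ZeroCapacity (fun i => ⇑(π i)) K) :
    ZeroCapacity (fun i => ⇑(π i).symm) K := fun ε hε =>
  let ⟨Φ, hΦ, hen⟩ := h ε hε
  ⟨Φ, hΦ, fun i => (hen i).symm⟩

theorem empty (u : ι → X → X) : ZeroCapacity u ∅ := fun ε hε =>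
  ⟨0, ⟨by simp, fun _ => ⟨le_rfl, zero_le_one⟩, fun _ h => h.elim⟩,
    fun i E _ => by simpa using hε.le⟩

theorem union {u : ι → X → X} {K L : Set X} (hK : ZeroCapacity u K) (hL : ZeroCapacity u L) :
    ZeroCapacity u (K ∪ L) := by
  intro ε hε
  obtain ⟨Φ, hΦ, henΦ⟩ := hK (ε / 2) (half_pos hε)
  obtain ⟨Ψ, hΨ, henΨ⟩ := hL (ε / 2) (half_pos hε)
  exact ⟨_, hΦ.max hΨ, fun i => add_halves ε ▸ (henΦ i).max (henΨ i)⟩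

theorem of_finite {u : ι → X → X} {K : Set X} (hK : K.Finite)
    (h : ∀ x ∈ K, ZeroCapacity u {x}) : ZeroCapacity u K := by
  induction K, hK using Set.Finite.induction_on with
  | empty => exact empty u
  | insert _ _ ih =>
    rw [Set.insert_eq]
    exact (h _ (Set.mem_insert _ _)).union (ih fun x hx => h x (Set.mem_insert_of_mem _ hx))

theorem image {u : ι → X → X} {w : ι → Z → Z} {K : Set X} (h : ZeroCapacity u K) {e : X → Z}
    (he : Function.Injective e) (hsemi : ∀ i, Function.Semiconj e (u i) (w i))
    (hrange : ∀ i z, w i z ∈ Set.range e → z ∈ Set.range e) : ZeroCapacity w (e '' K) := by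
  intro ε hε
  obtain ⟨Φ, hΦ, hen⟩ := h ε hε
  refine ⟨Function.extend e Φ 0, ⟨?_, fun z => ?_, ?_⟩, fun i E _ => ?_⟩
  · refine (hΦ.finite_support.image e).subset fun z hz => ?_
    by_cases hzr : z ∈ Set.range e
    · obtain ⟨x, rfl⟩ := hzr
      exact Set.mem_image_of_mem e (by rwa [Function.mem_support, he.extend_apply] at hz)
    · exact absurd (Function.extend_apply' Φ (0 : Z → ℝ) z hzr) hz
  · by_cases hzr : z ∈ Set.range e
    · obtain ⟨x, rfl⟩ := hzr
      rw [he.extend_apply]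
      exact hΦ.mem_Icc x
    · rw [Function.extend_apply' Φ (0 : Z → ℝ) z hzr]
      exact ⟨le_rfl, zero_le_one⟩
  · rintro _ ⟨x, hx, rfl⟩
    rw [he.extend_apply, hΦ.eq_one x hx]
  · have hmap := hen i (E.preimage e he.injOn) (Set.subset_univ _)
    refine le_trans (le_of_eq ?_) hmap
    rw [← Finset.sum_preimage e E he.injOn]
    · simp only [← (hsemi i).eq, he.extend_apply]
    · intro z _ hz
      have hwz : w i z ∉ Set.range e := fun h => hz (hrange i z h)
      simp [Function.extend_apply' Φ (0 : Z → ℝ) _ hz, Function.extend_apply' Φ (0 : Z → ℝ) _ hwz]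

end ZeroCapacity

/-- The average of `F 0, …, F (N - 1)`. -/
noncomputable def cesaroMean (F : ℕ → X → ℝ) (N : ℕ) (x : X) : ℝ :=
  (∑ n ∈ Finset.range N, F n x) / N

theorem isTestFunction_cesaroMean {K : Set X} {F : ℕ → X → ℝ} (hF : ∀ n, IsTestFunction K (F n))
    {N : ℕ} (hN : 0 < N) : IsTestFunction K (cesaroMean F N) where
  finite_support := by
    refine ((Finset.range N).finite_toSet.biUnion fun n _ => (hF n).finite_support).subset
      fun x hx => ?_
    obtain ⟨n, hn, hnx⟩ := Finset.exists_ne_zero_of_sum_ne_zero (div_ne_zero_iff.1 hx).1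
    exact Set.mem_biUnion hn hnx
  mem_Icc x := by
    refine ⟨div_nonneg (Finset.sum_nonneg fun n _ => ((hF n).mem_Icc x).1) N.cast_nonneg,
      div_le_one_of_le₀ ?_ N.cast_nonneg⟩
    simpa using Finset.sum_le_card_nsmul (Finset.range N) _ _ fun n _ => ((hF n).mem_Icc x).2
  eq_one x hx := by
    simp [cesaroMean, (hF _).eq_one x hx, hN.ne']

theorem sum_sq_cesaroMean_le {E : Finset X} {f : ℕ → X → ℝ} {c : ℝ}
    (hf : ∀ n, ∑ x ∈ E, f n x ^ 2 ≤ c) {N : ℕ} (hN : 0 < N) :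
    ∑ x ∈ E, cesaroMean f N x ^ 2 ≤ c := by
  have jensen (x : X) : cesaroMean f N x ^ 2 ≤ cesaroMean (fun n x => f n x ^ 2) N x := by
    have := sq_sum_le_card_mul_sum_sq (s := Finset.range N) (f := fun n => f n x)
    rw [Finset.card_range] at this
    rw [cesaroMean, cesaroMean, div_pow, div_le_div_iff₀ (by positivity) (by positivity)]
    nlinarith [Nat.cast_pos (α := ℝ).2 hN]
  calc ∑ x ∈ E, cesaroMean f N x ^ 2
    _ ≤ ∑ x ∈ E, cesaroMean (fun n x => f n x ^ 2) N x := Finset.sum_le_sum fun x _ => jensen x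
    _ = (∑ n ∈ Finset.range N, ∑ x ∈ E, f n x ^ 2) / N := by
        rw [Finset.sum_comm, Finset.sum_div]; rfl
    _ ≤ c := by
        rw [div_le_iff₀ (Nat.cast_pos.2 hN), mul_comm]
        simpa using Finset.sum_le_card_nsmul (Finset.range N) _ _ fun n _ => hf n

theorem sum_sq_cesaroMean_le_of_disjoint {E : Finset X} {f : ℕ → X → ℝ}
    {B : ℕ → Finset X} {m : ℕ} (hdisj : Pairwise (Function.onFun Disjoint B))
    (hcard : ∀ n, (B n).card ≤ m) (hf : ∀ n x, |f n x| ≤ 1) (hfB : ∀ n, ∀ x ∉ B n, f n x = 0)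
    (N : ℕ) : ∑ x ∈ E, cesaroMean f N x ^ 2 ≤ m / N := by
  classical
  rcases N.eq_zero_or_pos with rfl | hN
  · simp [cesaroMean]
  have sq_sum (x : X) : (∑ n ∈ Finset.range N, f n x) ^ 2 = ∑ n ∈ Finset.range N, f n x ^ 2 := by
    rw [sq, Finset.sum_mul_sum]
    refine Finset.sum_congr rfl fun n hn => ?_
    rw [Finset.sum_eq_single_of_mem n hn, sq]
    intro l _ hl
    by_cases hx : x ∈ B n
    · rw [hfB l x (Finset.disjoint_left.1 (hdisj hl.symm) hx), mul_zero]
    · rw [hfB n x hx, zero_mul]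
  have sum_sq_le (n : ℕ) : ∑ x ∈ E, f n x ^ 2 ≤ m := by
    have hsupp : ∑ x ∈ E, f n x ^ 2 = ∑ x ∈ E ∩ B n, f n x ^ 2 := by
      refine (Finset.sum_subset Finset.inter_subset_left fun x hxE hx => ?_).symm
      rw [hfB n x fun hxB => hx (Finset.mem_inter.2 ⟨hxE, hxB⟩), sq, zero_mul]
    rw [hsupp]
    refine (Finset.sum_le_card_nsmul _ _ 1 fun x _ => (sq_le_one_iff_abs_le_one _).2 (hf n x)).trans
      ?_
    rw [nsmul_one]
    exact_mod_cast (Finset.card_le_card Finset.inter_subset_right).trans (hcard n)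
  calc ∑ x ∈ E, cesaroMean f N x ^ 2
    _ = (∑ n ∈ Finset.range N, ∑ x ∈ E, f n x ^ 2) / N ^ 2 := by
        simp only [cesaroMean, div_pow, sq_sum, ← Finset.sum_div]
        rw [Finset.sum_comm]
    _ ≤ N * m / N ^ 2 := by
        gcongr
        simpa using Finset.sum_le_card_nsmul (Finset.range N) _ _ fun n _ => sum_sq_le n
    _ = m / N := by field_simp

theorem cesaroMean_sub (F G : ℕ → X → ℝ) (N : ℕ) (x y : X) :
    cesaroMean F N x - cesaroMean G N y = (∑ n ∈ Finset.range N, (F n x - G n y)) / N := by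
  rw [cesaroMean, cesaroMean, ← sub_div, Finset.sum_sub_distrib]

theorem energyLEOn_cesaroMean {K : Set X} {u : X → X} {F : ℕ → X → ℝ}
    {B : ℕ → Finset X} {m : ℕ} {ε : ℝ} (hF : ∀ n, IsTestFunction K (F n))
    (hdisj : Pairwise (Function.onFun Disjoint B)) (hcard : ∀ n, (B n).card ≤ m)
    (hen : ∀ n, EnergyLEOn (↑(B n))ᶜ u (F n) ε) {N : ℕ} (hN : 0 < N) :
    EnergyLEOn Set.univ u (cesaroMean F N) (2 * (ε + m / N)) := by
  classical
  intro E _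
  let onB (n : ℕ) (x : X) : ℝ := if x ∈ B n then F n (u x) - F n x else 0
  let offB (n : ℕ) (x : X) : ℝ := if x ∈ B n then 0 else F n (u x) - F n x
  have abs_diff_le (n : ℕ) (x : X) : |F n (u x) - F n x| ≤ 1 :=
    abs_sub_le_of_nonneg_of_le ((hF n).mem_Icc _).1 ((hF n).mem_Icc _).2
      ((hF n).mem_Icc _).1 ((hF n).mem_Icc _).2
  have split (x : X) :
      cesaroMean F N (u x) - cesaroMean F N x
        = cesaroMean offB N x + cesaroMean onB N x := by
    rw [cesaroMean_sub, cesaroMean, cesaroMean, ← add_div, ← Finset.sum_add_distrib]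
    congr 2
    funext n
    by_cases hx : x ∈ B n <;> simp [onB, offB, hx]
  have off_le : ∑ x ∈ E, cesaroMean offB N x ^ 2 ≤ ε := by
    refine sum_sq_cesaroMean_le (fun n => ?_) hN
    have hfilter := hen n (E.filter (· ∉ B n)) fun x hx => (Finset.mem_filter.1 hx).2
    simpa only [Finset.sum_filter, offB, ite_not, ite_pow, ne_eq, OfNat.ofNat_ne_zero,
      not_false_eq_true, zero_pow] using hfilter
  have on_le : ∑ x ∈ E, cesaroMean onB N x ^ 2 ≤ m / N := by
    refine sum_sq_cesaroMean_le_of_disjoint hdisj hcard (fun n x => ?_) (fun n x hx => if_neg hx) N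
    by_cases hx : x ∈ B n
    · simpa only [onB, if_pos hx] using abs_diff_le n x
    · simp [hx]
  calc ∑ x ∈ E, (cesaroMean F N (u x) - cesaroMean F N x) ^ 2
    _ ≤ ∑ x ∈ E, 2 * (cesaroMean offB N x ^ 2 + cesaroMean onB N x ^ 2) :=
        Finset.sum_le_sum fun x _ => by rw [split]; exact add_sq_le
    _ ≤ 2 * (ε + m / N) := by
        rw [← Finset.mul_sum, Finset.sum_add_distrib]
        gcongr

theorem ZeroCapacity.of_disjoint_boundaries {u : ι → X → X} {K : Set X} (m : ℕ)
    (h : ∀ ε > 0, ∃ (F : ℕ → X → ℝ) (B : ι → ℕ → Finset X), (∀ n, IsTestFunction K (F n)) ∧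
      ∀ i, Pairwise (Function.onFun Disjoint (B i)) ∧
        ∀ n, (B i n).card ≤ m ∧ EnergyLEOn (↑(B i n))ᶜ (u i) (F n) ε) :
    ZeroCapacity u K := by
  classical
  intro ε hε
  obtain ⟨F, B, hF, hB⟩ := h (ε / 4) (by positivity)
  obtain ⟨N, hN⟩ := exists_nat_gt (4 * m / ε)
  have hN_pos : (0 : ℝ) < N := lt_of_le_of_lt (by positivity) hN
  refine ⟨cesaroMean F N, isTestFunction_cesaroMean hF (Nat.cast_pos.1 hN_pos), fun i E hE =>
    (energyLEOn_cesaroMean hF (hB i).1 (fun n => ((hB i).2 n).1) (fun n => ((hB i).2 n).2)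
      (Nat.cast_pos.1 hN_pos) E hE).trans ?_⟩
  have : m / N ≤ ε / 4 := by
    rw [div_lt_iff₀ hε] at hN
    rw [div_le_iff₀ hN_pos]
    linarith
  linarith

theorem zeroCapacity_int_succ (K : Finset ℤ) :
    ZeroCapacity (fun _ : Unit => (· + 1 : ℤ → ℤ)) (K : Set ℤ) := by
  classical
  let R : ℕ := K.sup Int.natAbs
  let I (n : ℕ) : Finset ℤ := Finset.Icc (-(R + n : ℕ)) (R + n : ℕ)
  let F (n : ℕ) (z : ℤ) : ℝ := if z ∈ I n then 1 else 0
  refine ZeroCapacity.of_disjoint_boundaries 2 fun ε hε =>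
    ⟨F, fun _ n => {-((R + n : ℕ) : ℤ) - 1, ((R + n : ℕ) : ℤ)},
      fun n => ⟨?_, fun z => ?_, fun z hz => ?_⟩,
      fun _ => ⟨fun n l hnl => ?_, fun n => ⟨Finset.card_le_two, fun E hE => ?_⟩⟩⟩
  · exact (I n).finite_toSet.subset fun z hz => by_contra fun hzI => hz (if_neg hzI)
  · simp only [F]
    split_ifs <;> simp
  · have : z.natAbs ≤ R := Finset.le_sup (f := Int.natAbs) hz
    exact if_pos (Finset.mem_Icc.2 (by lia))
  · simp only [Function.onFun, Finset.disjoint_insert_left, Finset.disjoint_insert_right,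
      Finset.mem_insert, Finset.mem_singleton, Finset.disjoint_singleton]
    lia
  · refine (Finset.sum_eq_zero fun z hz => ?_).trans_le hε.le
    have hzB := hE hz
    simp only [Finset.coe_insert, Finset.coe_singleton, Set.mem_compl_iff, Set.mem_insert_iff,
      Set.mem_singleton_iff] at hzB
    have : z + 1 ∈ I n ↔ z ∈ I n := by
      simp only [I, Finset.mem_Icc]
      lia
    simp [F, this]

end Capacity

section Lamps

open AddMonoidAlgebra Finset

/-! ### Convolution of finitely supported measures -/

section Pairing

variable {Y Z : Type*}

/-- The integral of a function against an element of `ℝ[Y]`, viewed as a finitely supported signed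
measure on `Y`. The product of `ℝ[Y]` is then the convolution of measures. -/
noncomputable def pairing : ℝ[Y] →ₗ[ℝ] (Y → ℝ) →ₗ[ℝ] ℝ :=
  Finsupp.linearCombination ℝ (fun y => LinearMap.proj y) ∘ₗ (coeffLinearEquiv ℝ).toLinearMap

theorem pairing_single (y : Y) (a : ℝ) (f : Y → ℝ) : pairing (single y a) f = a * f y := by
  simp [pairing]

theorem pairing_mapDomain (e : Y → Z) (p : ℝ[Y]) (f : Z → ℝ) :
    pairing (mapDomain e p) f = pairing p fun y => f (e y) := by
  induction p using AddMonoidAlgebra.induction_linear with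
  | zero => simp
  | add p q hp hq => simp [mapDomain_add, hp, hq]
  | single y a => simp [pairing_single]

variable [AddCommMonoid Y]

theorem pairing_one (f : Y → ℝ) : pairing 1 f = f 0 := by
  rw [one_def, pairing_single, one_mul]

theorem pairing_mul (p q : ℝ[Y]) (f : Y → ℝ) :
    pairing (p * q) f = pairing p fun y => pairing q fun z => f (y + z) := by
  induction p using AddMonoidAlgebra.induction_linear with
  | zero => simp
  | add p p' hp hp' => simp [add_mul, hp, hp']
  | single y a =>
    rw [pairing_single]
    induction q using AddMonoidAlgebra.induction_linear with
    | zero => simp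
    | add q q' hq hq' => simp [mul_add, hq, hq']
    | single z b => rw [single_mul_single, pairing_single, pairing_single, mul_assoc]

variable (Y) in
/-- The finitely supported probability measures on `Y`. -/
def probabilities : Submonoid ℝ[Y] where
  carrier := {p | pairing p 1 = 1 ∧ ∀ f : Y → ℝ, (∀ y, 0 ≤ f y) → 0 ≤ pairing p f}
  one_mem' := ⟨pairing_one _, fun f hf => (pairing_one f).symm ▸ hf 0⟩
  mul_mem' {p q} hp hq := by
    refine ⟨?_, fun f hf => ?_⟩
    · rw [pairing_mul]
      exact (congrArg (pairing p) (funext fun _ => hq.1)).trans hp.1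
    · rw [pairing_mul]
      exact hp.2 _ fun y => hq.2 _ fun z => hf _

theorem single_mem_probabilities (y : Y) : single y 1 ∈ probabilities Y :=
  ⟨by simp [pairing_single], fun f hf => by simpa [pairing_single] using hf y⟩

theorem sum_smul_mem_probabilities {ι : Type*} {s : Finset ι} {w : ι → ℝ} {p : ι → ℝ[Y]}
    (hw : ∀ i ∈ s, 0 ≤ w i) (hsum : ∑ i ∈ s, w i = 1) (hp : ∀ i ∈ s, p i ∈ probabilities Y) :
    ∑ i ∈ s, w i • p i ∈ probabilities Y := by
  refine ⟨?_, fun f hf => ?_⟩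
  · simp only [map_sum, map_smul, LinearMap.sum_apply, LinearMap.smul_apply, smul_eq_mul]
    rw [← hsum]
    exact sum_congr rfl fun i hi => by rw [(hp i hi).1, mul_one]
  · simp only [map_sum, map_smul, LinearMap.sum_apply, LinearMap.smul_apply, smul_eq_mul]
    exact sum_nonneg fun i hi => mul_nonneg (hw i hi) ((hp i hi).2 f hf)

/-- A finitely supported probability measure, as a mean. -/
noncomputable def Mean.ofProbability {p : ℝ[Y]} (hp : p ∈ probabilities Y) : Mean Y where
  integral := pairing p
  integral_one := hp.1
  integral_nonneg f hf := hp.2 f fun y => (hf y).1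

theorem abs_pairing_le_one {p : ℝ[Y]} (hp : p ∈ probabilities Y) {f : Y → ℝ}
    (hf : ∀ y, |f y| ≤ 1) : |pairing p f| ≤ 1 :=
  (Mean.ofProbability hp).abs_integral_le_one hf

end Pairing

/-! ### Continuity of product measures in the Hellinger distance -/

theorem one_sub_sum_one_sub_le_prod {α : Type*} {s : Finset α} {v : α → ℝ}
    (hv : ∀ a ∈ s, v a ∈ Set.Icc 0 1) : 1 - ∑ a ∈ s, (1 - v a) ≤ ∏ a ∈ s, v a := by
  classical
  induction s using Finset.induction_on with
  | empty => simp
  | insert a s ha ih =>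
    have hs : ∀ b ∈ s, v b ∈ Set.Icc (0 : ℝ) 1 := fun b hb => hv b (mem_insert_of_mem hb)
    have hprod : ∏ b ∈ s, v b ≤ 1 := prod_le_one (fun b hb => (hs b hb).1) fun b hb => (hs b hb).2
    have hva := hv a (mem_insert_self a s)
    rw [sum_insert ha, prod_insert ha]
    nlinarith [ih hs, hva.1, hva.2]

theorem sum_abs_sq_sub_sq_le {α : Type*} {s : Finset α} {p q : α → ℝ}
    (hp : ∑ a ∈ s, p a ^ 2 = 1) (hq : ∑ a ∈ s, q a ^ 2 = 1) :
    ∑ a ∈ s, |p a ^ 2 - q a ^ 2| ≤ √(8 * (1 - ∑ a ∈ s, p a * q a)) := by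
  have hsub : ∑ a ∈ s, (p a - q a) ^ 2 = 2 * (1 - ∑ a ∈ s, p a * q a) := by
    simp only [sub_sq, sum_add_distrib, sum_sub_distrib, hp, hq, mul_assoc, ← mul_sum]
    ring
  have hadd : ∑ a ∈ s, (p a + q a) ^ 2 = 2 * (1 + ∑ a ∈ s, p a * q a) := by
    simp only [add_sq, sum_add_distrib, hp, hq, mul_assoc, ← mul_sum]
    ring
  have hsub_nonneg : 0 ≤ ∑ a ∈ s, (p a - q a) ^ 2 := sum_nonneg fun _ _ => sq_nonneg _
  refine Real.le_sqrt_of_sq_le ?_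
  calc (∑ a ∈ s, |p a ^ 2 - q a ^ 2|) ^ 2
      = (∑ a ∈ s, |p a - q a| * |p a + q a|) ^ 2 := by
        congr 1
        exact sum_congr rfl fun a _ => by rw [← abs_mul, sq_sub_sq, mul_comm]
    _ ≤ (∑ a ∈ s, |p a - q a| ^ 2) * ∑ a ∈ s, |p a + q a| ^ 2 := sum_mul_sq_le_sq_mul_sq _ _ _
    _ ≤ 8 * (1 - ∑ a ∈ s, p a * q a) := by
        simp only [sq_abs, hsub, hadd]
        nlinarith

variable {X : Type*}

/-- The amplitude, whose square is the probability, of the event that `T` is the set of lit lamps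
among the independent lamps `E`, where the lamp at `x` is lit with probability `sin² (θ x)`. -/
noncomputable def litAmplitude [DecidableEq X] (E : Finset X) (θ : X → ℝ) (T : Finset X) : ℝ :=
  (∏ x ∈ T, Real.sin (θ x)) * ∏ x ∈ E \ T, Real.cos (θ x)

theorem sum_litAmplitude_mul [DecidableEq X] (E : Finset X) (θ θ' : X → ℝ) :
    ∑ T ∈ E.powerset, litAmplitude E θ T * litAmplitude E θ' T =
      ∏ x ∈ E, Real.cos (θ x - θ' x) := by
  calc ∑ T ∈ E.powerset, litAmplitude E θ T * litAmplitude E θ' T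
      = ∏ x ∈ E, (Real.sin (θ x) * Real.sin (θ' x) + Real.cos (θ x) * Real.cos (θ' x)) := by
        rw [prod_add]
        refine sum_congr rfl fun T _ => ?_
        simp only [litAmplitude, prod_mul_distrib]
        ring
    _ = ∏ x ∈ E, Real.cos (θ x - θ' x) := prod_congr rfl fun x _ => by rw [Real.cos_sub, add_comm]

theorem sum_litAmplitude_sq [DecidableEq X] (E : Finset X) (θ : X → ℝ) :
    ∑ T ∈ E.powerset, litAmplitude E θ T ^ 2 = 1 := by
  simpa [sq] using sum_litAmplitude_mul E θ θ

theorem sum_abs_litAmplitude_sq_sub_le [DecidableEq X] (E : Finset X) {θ θ' : X → ℝ}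
    (hθ : ∀ x, θ x ∈ Set.Icc 0 (Real.pi / 2)) (hθ' : ∀ x, θ' x ∈ Set.Icc 0 (Real.pi / 2)) :
    ∑ T ∈ E.powerset, |litAmplitude E θ T ^ 2 - litAmplitude E θ' T ^ 2| ≤
      √(4 * ∑ x ∈ E, (θ x - θ' x) ^ 2) := by
  have hcos : ∀ x ∈ E, Real.cos (θ x - θ' x) ∈ Set.Icc (0 : ℝ) 1 := fun x _ =>
    ⟨Real.cos_nonneg_of_mem_Icc ⟨by linarith [(hθ x).1, (hθ' x).2],
      by linarith [(hθ x).2, (hθ' x).1]⟩, Real.cos_le_one _⟩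
  have hdefect : 1 - ∏ x ∈ E, Real.cos (θ x - θ' x) ≤ (∑ x ∈ E, (θ x - θ' x) ^ 2) / 2 := by
    rw [sum_div]
    refine (sub_le_comm.1 (one_sub_sum_one_sub_le_prod hcos)).trans (sum_le_sum fun x _ => ?_)
    linarith [Real.one_sub_sq_div_two_le_cos (x := θ x - θ' x)]
  refine (sum_abs_sq_sub_sq_le (sum_litAmplitude_sq E θ) (sum_litAmplitude_sq E θ')).trans
    (Real.sqrt_le_sqrt ?_)
  rw [sum_litAmplitude_mul]
  linarith

/-! ### Random lamp configurations -/

section LampLaw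

variable {Y : Type*} [AddCommMonoid Y]

/-- The uniform measure on `0, y, …, n • y`. -/
noncomputable def progressionLaw (n : ℕ) (y : Y) : ℝ[Y] :=
  ∑ i ∈ range (n + 1), ((n : ℝ) + 1)⁻¹ • single y 1 ^ i

theorem progressionLaw_mem_probabilities (n : ℕ) (y : Y) :
    progressionLaw n y ∈ probabilities Y := by
  refine sum_smul_mem_probabilities (fun _ _ => by positivity) ?_
    fun i _ => pow_mem (single_mem_probabilities y) i
  rw [sum_const, card_range, nsmul_eq_mul]
  push_cast
  exact mul_inv_cancel₀ (by positivity)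

theorem sub_one_mul_progressionLaw (n : ℕ) (y : Y) :
    (single y 1 - 1) * progressionLaw n y =
      ((n : ℝ) + 1)⁻¹ • ((single y 1 : ℝ[Y]) ^ (n + 1) - 1) := by
  rw [progressionLaw, ← smul_sum, mul_smul_comm, mul_geom_sum]

/-- The law of a lamp which is off (in state `0`) with probability `cos² θ` and otherwise
distributed along `0, y, …, n • y`. -/
noncomputable def lampLaw (n : ℕ) (y : Y) (θ : ℝ) : ℝ[Y] :=
  Real.sin θ ^ 2 • progressionLaw n y + Real.cos θ ^ 2 • 1

@[simp]
theorem lampLaw_zero (n : ℕ) (y : Y) : lampLaw n y 0 = 1 := by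
  simp [lampLaw]

theorem lampLaw_pi_div_two (n : ℕ) (y : Y) :
    lampLaw n y (Real.pi / 2) = progressionLaw n y := by
  simp [lampLaw]

theorem map_lampLaw {Z : Type*} [AddCommMonoid Z] (L : Y →+ Z) (n : ℕ) (y : Y) (θ : ℝ) :
    mapDomainAlgHom ℝ ℝ L (lampLaw n y θ) = lampLaw n (L y) θ := by
  simp only [lampLaw, progressionLaw, map_add, map_smul, map_sum, map_pow, map_one]
  simp

theorem prod_lampLaw [DecidableEq X] (n : ℕ) (e : X → Y) (E : Finset X) (θ : X → ℝ) :
    ∏ x ∈ E, lampLaw n (e x) (θ x) =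
      ∑ T ∈ E.powerset, litAmplitude E θ T ^ 2 • ∏ x ∈ T, progressionLaw n (e x) := by
  simp only [lampLaw, prod_add]
  refine sum_congr rfl fun T _ => ?_
  rw [prod_smul, prod_smul, prod_const_one, smul_mul_smul_comm, mul_one, litAmplitude, mul_pow,
    prod_pow, prod_pow]

/-- The law of the sum of independent lamps, the one at `x` having angle `θ x`. -/
noncomputable def lampConfigurationLaw (n : ℕ) (e : X → Y) (θ : X →₀ ℝ) : ℝ[Y] :=
  θ.prod fun x => lampLaw n (e x)

theorem lampConfigurationLaw_eq_prod (n : ℕ) (e : X → Y) {θ : X →₀ ℝ} {E : Finset X}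
    (hE : θ.support ⊆ E) :
    lampConfigurationLaw n e θ = ∏ x ∈ E, lampLaw n (e x) (θ x) :=
  θ.prod_of_support_subset hE _ fun _ _ => lampLaw_zero _ _

theorem lampConfigurationLaw_mem_probabilities (n : ℕ) (e : X → Y) (θ : X →₀ ℝ) :
    lampConfigurationLaw n e θ ∈ probabilities Y := by
  classical
  rw [lampConfigurationLaw_eq_prod n e Subset.rfl, prod_lampLaw]
  exact sum_smul_mem_probabilities (fun _ _ => sq_nonneg _) (sum_litAmplitude_sq _ _)
    fun T _ => prod_mem fun x _ => progressionLaw_mem_probabilities n (e x)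

theorem mapDomain_lampConfigurationLaw (n : ℕ) {e : X → Y} {L : Y →+ Y} {π : Equiv.Perm X}
    (hL : ∀ x, L (e x) = e (π x)) (θ : X →₀ ℝ) :
    mapDomain L (lampConfigurationLaw n e θ) = lampConfigurationLaw n e (θ.mapDomain π) := by
  calc mapDomain L (lampConfigurationLaw n e θ)
      = mapDomainAlgHom ℝ ℝ L (lampConfigurationLaw n e θ) := rfl
    _ = θ.prod fun x t => lampLaw n (e (π x)) t := by
        simp only [lampConfigurationLaw, map_finsuppProd, map_lampLaw, hL]
    _ = lampConfigurationLaw n e (θ.mapDomain π) :=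
        (Finsupp.prod_mapDomain_index_inj (h := fun x => lampLaw n (e x)) π.injective).symm

theorem abs_pairing_lampConfigurationLaw_sub_le (n : ℕ) (e : X → Y) {θ θ' : X →₀ ℝ} {δ : ℝ}
    (hθ : ∀ x, θ x ∈ Set.Icc 0 (Real.pi / 2)) (hθ' : ∀ x, θ' x ∈ Set.Icc 0 (Real.pi / 2))
    (hδ : ∀ E : Finset X, ∑ x ∈ E, (θ x - θ' x) ^ 2 ≤ δ) {f : Y → ℝ} (hf : ∀ y, |f y| ≤ 1) :
    |pairing (lampConfigurationLaw n e θ) f - pairing (lampConfigurationLaw n e θ') f| ≤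
      √(4 * δ) := by
  classical
  set E := θ.support ∪ θ'.support
  rw [lampConfigurationLaw_eq_prod n e (subset_union_left : _ ⊆ E),
    lampConfigurationLaw_eq_prod n e (subset_union_right : _ ⊆ E), prod_lampLaw, prod_lampLaw,
    ← LinearMap.sub_apply, ← map_sub, ← sum_sub_distrib]
  simp only [← sub_smul, map_sum, map_smul, LinearMap.sum_apply, LinearMap.smul_apply, smul_eq_mul]
  calc |∑ T ∈ E.powerset, (litAmplitude E θ T ^ 2 - litAmplitude E θ' T ^ 2) *
          pairing (∏ x ∈ T, progressionLaw n (e x)) f|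
      ≤ ∑ T ∈ E.powerset, |litAmplitude E θ T ^ 2 - litAmplitude E θ' T ^ 2| := by
        refine (abs_sum_le_sum_abs _ _).trans (sum_le_sum fun T _ => ?_)
        rw [abs_mul]
        exact mul_le_of_le_one_right (abs_nonneg _)
          (abs_pairing_le_one (prod_mem fun x _ => progressionLaw_mem_probabilities n (e x)) hf)
    _ ≤ √(4 * ∑ x ∈ E, (θ x - θ' x) ^ 2) := sum_abs_litAmplitude_sq_sub_le E hθ hθ'
    _ ≤ √(4 * δ) := Real.sqrt_le_sqrt (by linarith [hδ E])

/-- `lampConfigurationLaw` as a mean. -/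
noncomputable def lampMean (n : ℕ) (e : X → Y) (θ : X →₀ ℝ) : Mean Y :=
  Mean.ofProbability (lampConfigurationLaw_mem_probabilities n e θ)

theorem lampMean_almostInvariant_linear (n : ℕ) {e : X → Y} {L : Y →+ Y} {π : Equiv.Perm X}
    (hL : ∀ x, L (e x) = e (π x)) {θ : X →₀ ℝ} (hθ : ∀ x, θ x ∈ Set.Icc 0 (Real.pi / 2)) {δ : ℝ}
    (hδ : EnergyLEOn Set.univ π θ δ) : (lampMean n e θ).AlmostInvariant L √(4 * δ) := by
  have hmoved x : θ.mapDomain π x = θ (π.symm x) := by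
    rw [← Finsupp.equivMapDomain_eq_mapDomain, Finsupp.equivMapDomain_apply]
  intro f hf
  change |pairing (lampConfigurationLaw n e θ) (fun y => f (L y)) - pairing _ f| ≤ _
  rw [← pairing_mapDomain, mapDomain_lampConfigurationLaw n hL]
  refine abs_pairing_lampConfigurationLaw_sub_le n e (fun x => hmoved x ▸ hθ _) hθ (fun E => ?_) hf
  simpa only [hmoved] using hδ.symm E (Set.subset_univ _)

theorem lampMean_almostInvariant_translate (n : ℕ) (e : X → Y) {θ : X →₀ ℝ} {x : X}
    (hx : θ x = Real.pi / 2) : (lampMean n e θ).AlmostInvariant (· + e x) (2 / (n + 1)) := by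
  intro f hf
  change |pairing (lampConfigurationLaw n e θ) (fun y => f (y + e x)) - pairing _ f| ≤ _
  let others : ℝ[Y] := lampConfigurationLaw n e (θ.erase x)
  have hothers : others ∈ probabilities Y := lampConfigurationLaw_mem_probabilities n e _
  have hxθ : x ∈ θ.support := by
    simp [hx]
  have hsplit : lampConfigurationLaw n e θ = progressionLaw n (e x) * others := by
    rw [lampConfigurationLaw, ← Finsupp.mul_prod_erase θ x _ hxθ, hx, lampLaw_pi_div_two]
    rfl
  have htranslate (p : ℝ[Y]) :
      pairing p (fun y => f (y + e x)) = pairing (single (e x) 1 * p) f := by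
    simp only [pairing_mul, pairing_single, one_mul, add_comm]
  have hdifference : single (e x) 1 * lampConfigurationLaw n e θ - lampConfigurationLaw n e θ =
      ((n : ℝ) + 1)⁻¹ • (single (e x) 1 ^ (n + 1) * others - others) := by
    rw [← sub_one_mul, hsplit, ← mul_assoc, sub_one_mul_progressionLaw, smul_mul_assoc, sub_one_mul]
  rw [htranslate, ← LinearMap.sub_apply, ← map_sub, hdifference, map_smul, map_sub,
    LinearMap.smul_apply, LinearMap.sub_apply, smul_eq_mul, abs_mul, abs_of_nonneg (by positivity),
    inv_mul_eq_div]
  have hmoved := abs_pairing_le_one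
    (mul_mem (pow_mem (single_mem_probabilities (e x)) (n + 1)) hothers) hf
  have hfixed := abs_pairing_le_one hothers hf
  gcongr
  linarith [abs_sub (pairing (single (e x) 1 ^ (n + 1) * others) f) (pairing others f)]

end LampLaw

/- A test function `Φ` lights the lamp at `x` with probability `sin² (π / 2 * Φ x)`. The lamps of
`K` are always lit, hence insensitive to translation, and the linear part only moves the angles,
which costs the energy of `Φ`. -/
theorem ZeroCapacity.exists_almostInvariant_affine {Y ι : Type*} [AddCommMonoid Y] {e : X → Y}
    {L : ι → Y →+ Y} {t : ι → Y} {π : ι → Equiv.Perm X} {K : Set X}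
    (hK : ZeroCapacity (fun i => ⇑(π i)) K) (hL : ∀ i x, L i (e x) = e (π i x))
    (ht : ∀ i, t i = 0 ∨ ∃ x ∈ K, t i = e x) {ε : ℝ} (hε : 0 < ε) :
    ∃ M : Mean Y, ∀ i, M.AlmostInvariant (fun y => L i y + t i) ε := by
  obtain ⟨n, hn⟩ := exists_nat_two_div_lt (half_pos hε)
  obtain ⟨Φ, hΦ, henergy⟩ := hK (ε ^ 2 / 64) (by positivity)
  let θ : X →₀ ℝ := Finsupp.ofSupportFinite (fun x => Real.pi / 2 * Φ x)
    (hΦ.finite_support.subset (Function.support_mul_subset_right _ _))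
  have hθ x : θ x ∈ Set.Icc 0 (Real.pi / 2) :=
    ⟨mul_nonneg (by positivity) (hΦ.mem_Icc x).1,
      mul_le_of_le_one_right (by positivity) (hΦ.mem_Icc x).2⟩
  have hθ_energy i : EnergyLEOn Set.univ (π i) θ (ε ^ 2 / 16) := fun E hE => by
    calc ∑ x ∈ E, (Real.pi / 2 * Φ (π i x) - Real.pi / 2 * Φ x) ^ 2
        = (Real.pi / 2) ^ 2 * ∑ x ∈ E, (Φ (π i x) - Φ x) ^ 2 := by
          simp only [← mul_sub, mul_pow, mul_sum]
      _ ≤ 2 ^ 2 * (ε ^ 2 / 64) := by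
          have hpi : Real.pi / 2 ≤ 2 := by linarith [Real.pi_le_four]
          gcongr
          exact henergy i E hE
      _ = ε ^ 2 / 16 := by ring
  have hlinear i : (lampMean n e θ).AlmostInvariant (L i) (ε / 2) := by
    refine (lampMean_almostInvariant_linear n (hL i) hθ (hθ_energy i)).mono (le_of_eq ?_)
    rw [show 4 * (ε ^ 2 / 16) = (ε / 2) ^ 2 by ring, Real.sqrt_sq (half_pos hε).le]
  have htranslate i : (lampMean n e θ).AlmostInvariant (· + t i) (ε / 2) := by
    rcases ht i with hzero | ⟨x, hx, hlamp⟩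
    · exact Mean.Invariant.almostInvariant (fun f _ => by simp [hzero]) (half_pos hε).le
    · have hlit : θ x = Real.pi / 2 := (congrArg _ (hΦ.eq_one x hx)).trans (mul_one _)
      exact hlamp ▸ (lampMean_almostInvariant_translate n e hlit).mono hn.le
  exact ⟨lampMean n e θ, fun i => add_halves ε ▸ (htranslate i).comp (hlinear i)⟩

end Lamps

/-! ### Recurrence on the levels of the tree -/

section Levels

/-- The level-`n` label of `g` is `0` away from the vertex `c n`, where it is `0` or `1`. -/
def Portrait.IsCarriedBy (g : Portrait ℤ) (c : ℕ → List ℤ) : Prop :=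
  ∀ v, g.label v = 0 ∨ v = c v.length ∧ g.label v = 1

/-- The product of a function of the head and a function of the tail of a word. -/
def consProd (h : ℤ → ℝ) (φ : List ℤ → ℝ) : List ℤ → ℝ
  | [] => 0
  | z :: w => h z * φ w

theorem IsTestFunction.consProd {K : Set ℤ} {L : Set (List ℤ)} {h : ℤ → ℝ} {φ : List ℤ → ℝ}
    (hh : IsTestFunction K h) (hφ : IsTestFunction L φ) :
    IsTestFunction (Set.image2 List.cons K L) (consProd h φ) where
  finite_support := by
    refine (hh.finite_support.image2 List.cons hφ.finite_support).subset fun v hv => ?_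
    cases v with
    | nil => exact absurd rfl hv
    | cons z w => exact ⟨z, left_ne_zero_of_mul hv, w, right_ne_zero_of_mul hv, rfl⟩
  mem_Icc
    | [] => ⟨le_rfl, zero_le_one⟩
    | z :: w => ⟨mul_nonneg (hh.mem_Icc z).1 (hφ.mem_Icc w).1,
        mul_le_one₀ (hh.mem_Icc z).2 (hφ.mem_Icc w).1 (hφ.mem_Icc w).2⟩
  eq_one := by
    rintro _ ⟨z, hz, w, hw, rfl⟩
    exact (congrArg₂ _ (hh.eq_one z hz) (hφ.eq_one w hw)).trans (one_mul 1)

theorem IsTestFunction.sum_sq_le {X : Type*} {K : Set X} {Φ : X → ℝ} (hΦ : IsTestFunction K Φ)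
    (E : Finset X) : ∑ x ∈ E, Φ x ^ 2 ≤ (Function.support Φ).ncard := by
  classical
  have hfin := hΦ.finite_support
  calc ∑ x ∈ E, Φ x ^ 2
    _ = ∑ x ∈ E with x ∈ Function.support Φ, Φ x ^ 2 := by
        refine (Finset.sum_filter_of_ne fun x _ hx => ?_).symm
        exact fun hzero => hx (by rw [hzero, sq, zero_mul])
    _ ≤ ∑ x ∈ hfin.toFinset, Φ x ^ 2 :=
        Finset.sum_le_sum_of_subset_of_nonneg
          (fun x hx => hfin.mem_toFinset.2 (Finset.mem_filter.1 hx).2) fun _ _ _ => sq_nonneg _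
    _ ≤ hfin.toFinset.card • (1 : ℝ) :=
        Finset.sum_le_card_nsmul _ _ _ fun x _ =>
          pow_le_one₀ (hΦ.mem_Icc x).1 (hΦ.mem_Icc x).2
    _ = (Function.support Φ).ncard := by rw [nsmul_one, Set.ncard_eq_toFinset_card _ hfin]

variable {g : Portrait ℤ} {c : ℕ → List ℤ} {h : ℤ → ℝ} {φ : List ℤ → ℝ} {K : Set ℤ} {n : ℕ}
  {δ η : ℝ}

theorem sum_sq_consProd_fiber_le (hg : g.IsCarriedBy c) (hh : IsTestFunction K h)
    (hen : EnergyLEOn Set.univ (· + 1) h δ) (hc : φ (c n) = 1) (hgc : φ (g • c n) = 1)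
    {w : List ℤ} (hw : w.length = n) (A : Finset ℤ) :
    ∑ z ∈ A, (consProd h φ (g • (z :: w)) - consProd h φ (z :: w)) ^ 2 ≤
      (if w = c n then δ else 0) + (Function.support h).ncard * (φ (g • w) - φ w) ^ 2 := by
  have hδ : 0 ≤ δ := by simpa using hen ∅ (Set.subset_univ _)
  simp only [Portrait.smul_cons, consProd]
  rcases hg w with hlabel | ⟨hwc, hlabel⟩
  · calc ∑ z ∈ A, (h (z + g.label w) * φ (g • w) - h z * φ w) ^ 2
      _ = (∑ z ∈ A, h z ^ 2) * (φ (g • w) - φ w) ^ 2 := by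
          simp only [hlabel, add_zero, ← mul_sub, mul_pow, Finset.sum_mul]
      _ ≤ (Function.support h).ncard * (φ (g • w) - φ w) ^ 2 := by
          gcongr
          exact hh.sum_sq_le A
      _ ≤ _ := le_add_of_nonneg_left (by split_ifs <;> simp [hδ])
  · rw [hw] at hwc
    rw [if_pos hwc, hlabel, hwc, hc, hgc]
    simpa using hen A (Set.subset_univ _)

theorem energyLEOn_consProd (hg : g.IsCarriedBy c) (hh : IsTestFunction K h)
    (hen : EnergyLEOn Set.univ (· + 1) h δ) (hc : φ (c n) = 1) (hgc : φ (g • c n) = 1)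
    (henφ : EnergyLEOn {w | w.length = n} (g • ·) φ η) :
    EnergyLEOn {v | v.length = n + 1} (g • ·) (consProd h φ)
      (δ + (Function.support h).ncard * η) := by
  classical
  intro E hE
  let heads := E.image List.headI
  let tails := E.image List.tail
  have htails : ∀ w ∈ tails, w.length = n := by
    intro w hw
    obtain ⟨v, hv, rfl⟩ := Finset.mem_image.1 hw
    rw [List.length_tail, hE hv, Nat.add_sub_cancel]
  have hsub : E ⊆ (tails ×ˢ heads).image fun q => q.2 :: q.1 := by
    intro v hv
    refine Finset.mem_image.2 ⟨(v.tail, v.headI), Finset.mem_product.2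
      ⟨Finset.mem_image_of_mem _ hv, Finset.mem_image_of_mem _ hv⟩, ?_⟩
    exact List.cons_head!_tail (List.ne_nil_of_length_eq_add_one (hE hv))
  have hδ : 0 ≤ δ := by simpa using hen ∅ (Set.subset_univ _)
  calc ∑ v ∈ E, (consProd h φ (g • v) - consProd h φ v) ^ 2
    _ ≤ ∑ v ∈ (tails ×ˢ heads).image fun q => q.2 :: q.1,
          (consProd h φ (g • v) - consProd h φ v) ^ 2 :=
        Finset.sum_le_sum_of_subset_of_nonneg hsub fun _ _ _ => sq_nonneg _
    _ = ∑ w ∈ tails, ∑ z ∈ heads, (consProd h φ (g • (z :: w)) - consProd h φ (z :: w)) ^ 2 := by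
        rw [Finset.sum_image, Finset.sum_product]
        rintro ⟨w, z⟩ _ ⟨w', z'⟩ _ hq
        exact Prod.ext (List.cons.inj hq).2 (List.cons.inj hq).1
    _ ≤ ∑ w ∈ tails, ((if w = c n then δ else 0) +
          (Function.support h).ncard * (φ (g • w) - φ w) ^ 2) :=
        Finset.sum_le_sum fun w hw =>
          sum_sq_consProd_fiber_le hg hh hen hc hgc (htails w hw) heads
    _ ≤ δ + (Function.support h).ncard * η := by
        rw [Finset.sum_add_distrib, ← Finset.mul_sum, Finset.sum_ite_eq']
        gcongr
        · split_ifs <;> simp [hδ]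
        · exact henφ tails htails

theorem exists_isTestFunction_level {ι : Type*} [Finite ι] {g : ι → Portrait ℤ}
    (hg : ∀ i, (g i).IsCarriedBy c) (hc : ∀ n, (c n).length = n) (n : ℕ) {ε : ℝ} (hε : 0 < ε)
    {V : Set (List ℤ)} (hV : V.Finite) (hVn : ∀ v ∈ V, v.length = n) :
    ∃ φ : List ℤ → ℝ, IsTestFunction V φ ∧
      ∀ i, EnergyLEOn {v | v.length = n} (g i • ·) φ ε := by
  classical
  induction n generalizing ε V with
  | zero =>
    refine ⟨fun v => if v = [] then 1 else 0, ⟨?_, fun v => ?_, fun v hv => ?_⟩, fun i E hE => ?_⟩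
    · exact (Set.finite_singleton []).subset fun v hv => by_contra fun hne => hv (if_neg hne)
    · split_ifs <;> simp
    · exact if_pos (List.length_eq_zero_iff.1 (hVn v hv))
    · refine (Finset.sum_eq_zero fun v hv => ?_).trans_le hε.le
      rw [List.length_eq_zero_iff.1 (hE hv)]
      simp [Portrait.smul_nil]
  | succ n ih =>
    obtain ⟨h, hh, hen⟩ :=
      zeroCapacity_int_succ (hV.image List.headI).toFinset (ε / 2) (half_pos hε)
    let H : ℝ := (Function.support h).ncard
    let W := List.tail '' V ∪ insert (c n) (Set.range fun i => g i • c n)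
    have hWn : ∀ w ∈ W, w.length = n := by
      rintro w (⟨v, hv, rfl⟩ | rfl | ⟨i, rfl⟩)
      · rw [List.length_tail, hVn v hv, Nat.add_sub_cancel]
      · exact hc n
      · exact (Portrait.length_smul _ _).trans (hc n)
    obtain ⟨φ, hφ, henφ⟩ := ih (ε := ε / (2 * (H + 1))) (by positivity)
      ((hV.image List.tail).union ((Set.finite_range _).insert _)) hWn
    refine ⟨consProd h φ, ?_, fun i E hE => ?_⟩
    · have hprod := hh.consProd hφ
      refine ⟨hprod.finite_support, hprod.mem_Icc, fun v hv => hprod.eq_one v ?_⟩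
      exact ⟨v.headI, by simpa using ⟨v, hv, rfl⟩, v.tail, .inl ⟨v, hv, rfl⟩,
        List.cons_head!_tail (List.ne_nil_of_length_eq_add_one (hVn v hv))⟩
    · refine (energyLEOn_consProd (hg i) hh (hen ()) (hφ.eq_one _ (.inr (.inl rfl)))
        (hφ.eq_one _ (.inr (.inr ⟨i, rfl⟩))) (henφ i) E hE).trans ?_
      have : H * (ε / (2 * (H + 1))) ≤ ε / 2 := by
        rw [mul_div_assoc', div_le_div_iff₀ (by positivity) two_pos]
        nlinarith
      linarith

end Levels

/-! ### Recurrence on the boundary of the tree -/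

/-- Infinite words over `A`, that is, ends of the tree. -/
def Ray (A : Type*) : Type _ := ℕ → A

namespace Ray

variable {A : Type*}

/-- The word formed by the first `n` letters of a ray, stored last letter first. -/
def take (r : Ray A) : ℕ → List A
  | 0 => []
  | n + 1 => r n :: take r n

@[simp] theorem length_take (r : Ray A) (n : ℕ) : (r.take n).length = n := by
  induction n with
  | zero => rfl
  | succ n ih => rw [take, List.length_cons, ih]

theorem getElem?_reverse_take (r : Ray A) (n t : ℕ) :
    (r.take n).reverse[t]? = if t < n then some (r t) else none := by
  induction n with
  | zero => rfl
  | succ n ih =>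
    rw [take, List.reverse_cons, List.getElem?_append, ih, List.length_reverse, length_take]
    grind

theorem take_eq_take_iff {r s : Ray A} {n : ℕ} : r.take n = s.take n ↔ ∀ t < n, r t = s t := by
  induction n with
  | zero => simp [take]
  | succ n ih => rw [take, take, List.cons.injEq, ih, Nat.forall_lt_succ_right, and_comm]

theorem take_succ_eq_append (r : Ray A) (n : ℕ) :
    r.take (n + 1) = take (fun t => r (t + 1)) n ++ [r 0] := by
  induction n with
  | zero => rfl
  | succ n ih => rw [take, ih]; rfl

theorem take_suffix_take (r : Ray A) {m n : ℕ} (h : m ≤ n) : r.take m <:+ r.take n := by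
  induction n, h using Nat.le_induction with
  | base => exact List.suffix_rfl
  | succ n _ ih => exact ih.trans (List.suffix_cons _ _)

/-- The two rays agree from the `n`-th letter on. -/
def EqFrom (n : ℕ) (r s : Ray A) : Prop := ∀ t, n ≤ t → r t = s t

theorem EqFrom.eq_of_take_eq {n : ℕ} {r s ξ : Ray A} (hr : EqFrom n r ξ) (hs : EqFrom n s ξ)
    (h : r.take n = s.take n) : r = s := by
  funext t
  rcases lt_or_ge t n with ht | ht
  · exact take_eq_take_iff.1 h t ht
  · rw [hr t ht, hs t ht]

/-- The position of the first letter at which two rays differ. -/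
def FirstDifferAt (r s : Ray A) (m : ℕ) : Prop := (∀ t < m, r t = s t) ∧ r m ≠ s m

theorem FirstDifferAt.unique {r s : Ray A} {m m' : ℕ} (h : FirstDifferAt r s m)
    (h' : FirstDifferAt r s m') : m = m' :=
  le_antisymm (not_lt.1 fun hlt => h'.2 (h.1 m' hlt)) (not_lt.1 fun hlt => h.2 (h'.1 m hlt))

/-- The ray obtained from `r` by replacing an initial segment by `v`. -/
def graft (v : List A) (r : Ray A) : Ray A := fun t => v.reverse[t]?.getD (r t)

theorem EqFrom.graft_take {n : ℕ} {r ξ : Ray A} (h : EqFrom n r ξ) : graft (r.take n) ξ = r := by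
  funext t
  rw [graft, getElem?_reverse_take]
  split_ifs with ht
  · rfl
  · exact (h t (not_lt.1 ht)).symm

variable [AddCommGroup A]

instance : SMul (Portrait A) (Ray A) := ⟨fun g r n => r n + g.label (r.take n)⟩

theorem smul_apply (g : Portrait A) (r : Ray A) (n : ℕ) :
    (g • r) n = r n + g.label (r.take n) := rfl

theorem take_smul (g : Portrait A) (r : Ray A) (n : ℕ) : (g • r).take n = g • r.take n := by
  induction n with
  | zero => rfl
  | succ n ih => rw [take, take, ih, Portrait.smul_cons, smul_apply]

instance : MulAction (Portrait A) (Ray A) where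
  one_smul r := funext fun n => add_zero (r n)
  mul_smul g h r := by
    funext n
    rw [smul_apply, smul_apply, smul_apply, Portrait.mul_label, take_smul, add_assoc]

/-- The portrait `g` changes the letter of `r` at position `l`. -/
def IsActiveAt (g : Portrait A) (r : Ray A) (l : ℕ) : Prop := g.label (r.take l) ≠ 0

theorem eqFrom_smul_iff {g : Portrait A} {n : ℕ} {r ξ : Ray A}
    (h : ∀ l ≥ n, ¬IsActiveAt g r l) : EqFrom n (g • r) ξ ↔ EqFrom n r ξ :=
  forall₂_congr fun t ht => by rw [smul_apply, not_not.1 (h t ht), add_zero]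

end Ray

section Recurrence

open Ray

variable {φ : List ℤ → ℝ} {ξ : Ray ℤ} {n C : ℕ} {g : Portrait ℤ} {c : ℕ → List ℤ} {ε : ℝ}

open Classical in
/-- The function `φ` of the first `n` letters, extended by zero from the rays agreeing with `ξ`
after the `n`-th letter to all rays. -/
noncomputable def extendAlong (φ : List ℤ → ℝ) (ξ : Ray ℤ) (n : ℕ) (r : Ray ℤ) : ℝ :=
  if EqFrom n r ξ then φ (r.take n) else 0

theorem isTestFunction_extendAlong (hφ : IsTestFunction {ξ.take n} φ) :
    IsTestFunction {ξ} (extendAlong φ ξ n) where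
  finite_support := by
    have eqFrom : ∀ r ∈ Function.support (extendAlong φ ξ n), EqFrom n r ξ := fun r hr =>
      by_contra fun hne => hr (if_neg hne)
    refine Set.Finite.of_finite_image (f := fun r : Ray ℤ => r.take n)
      (hφ.finite_support.subset ?_) fun r hr s hs => (eqFrom r hr).eq_of_take_eq (eqFrom s hs)
    rintro _ ⟨r, hr, rfl⟩
    exact fun hzero => hr ((if_pos (eqFrom r hr)).trans hzero)
  mem_Icc r := by
    rw [extendAlong]
    split_ifs
    exacts [hφ.mem_Icc _, ⟨le_rfl, zero_le_one⟩]
  eq_one := by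
    rintro _ rfl
    exact (if_pos fun _ _ => rfl).trans (hφ.eq_one _ rfl)

theorem energyLEOn_extendAlong (hen : EnergyLEOn {v | v.length = n} (g • ·) φ ε) :
    EnergyLEOn {r | ∀ l ≥ n, ¬IsActiveAt g r l} (g • ·) (extendAlong φ ξ n) ε := by
  classical
  intro E hE
  have injOn : Set.InjOn (fun r : Ray ℤ => r.take n) ({r ∈ E | EqFrom n r ξ} : Finset (Ray ℤ)) :=
    fun r hr s hs => (Finset.mem_filter.1 hr).2.eq_of_take_eq (Finset.mem_filter.1 hs).2
  calc ∑ r ∈ E, (extendAlong φ ξ n (g • r) - extendAlong φ ξ n r) ^ 2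
    _ = ∑ r ∈ E with EqFrom n r ξ, (φ (g • r.take n) - φ (r.take n)) ^ 2 := by
        rw [Finset.sum_filter]
        refine Finset.sum_congr rfl fun r hr => ?_
        simp only [extendAlong, eqFrom_smul_iff (hE hr), take_smul]
        split_ifs <;> simp
    _ = ∑ v ∈ {r ∈ E | EqFrom n r ξ}.image fun r => r.take n, (φ (g • v) - φ v) ^ 2 := by
        rw [Finset.sum_image injOn]
    _ ≤ ε := hen _ fun v hv => by
        obtain ⟨r, -, rfl⟩ := Finset.mem_image.1 hv
        exact length_take r n

/-- The rays obtained from `ξ` by replacing an initial segment of length in `[n, n + C)` by the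
vertex `c l` of the same length `l`. -/
noncomputable def carrierRays (c : ℕ → List ℤ) (ξ : Ray ℤ) (C n : ℕ) : Finset (Ray ℤ) :=
  open Classical in (Finset.Ico n (n + C)).image fun l => graft (c l) ξ

theorem mem_carrierRays (hg : g.IsCarriedBy c) {r : Ray ℤ} {l : ℕ} (hr : EqFrom n r ξ)
    (hl : IsActiveAt g r l) (hnl : n ≤ l) (hlC : l < n + C) : r ∈ carrierRays c ξ C n := by
  classical
  refine Finset.mem_image.2 ⟨l, Finset.mem_Ico.2 ⟨hnl, hlC⟩, ?_⟩
  have hcl : r.take l = c l := by simpa using ((hg (r.take l)).resolve_left hl).1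
  rw [← hcl]
  exact EqFrom.graft_take fun t ht => hr t (hnl.trans ht)

open Classical in
/-- A finite set containing the rays with an active position in `[n * C, n * C + C)` at which
`extendAlong φ ξ (n * C)` can change its value under `g`. -/
noncomputable def rayBoundary (g : Portrait ℤ) (c : ℕ → List ℤ) (ξ : Ray ℤ) (C n : ℕ) :
    Finset (Ray ℤ) :=
  {r ∈ carrierRays c ξ C (n * C) ∪ (carrierRays c ξ C (n * C)).image (g⁻¹ • ·) |
    ∃ l, l / C = n ∧ IsActiveAt g r l}

theorem card_rayBoundary_le (g : Portrait ℤ) (c : ℕ → List ℤ) (ξ : Ray ℤ) (C n : ℕ) :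
    (rayBoundary g c ξ C n).card ≤ 2 * C := by
  classical
  have hcard : (carrierRays c ξ C (n * C)).card ≤ C := Finset.card_image_le.trans (by simp)
  calc (rayBoundary g c ξ C n).card
    _ ≤ (carrierRays c ξ C (n * C) ∪ (carrierRays c ξ C (n * C)).image (g⁻¹ • ·)).card :=
        Finset.card_filter_le _ _
    _ ≤ C + C := (Finset.card_union_le _ _).trans
        (add_le_add hcard (Finset.card_image_le.trans hcard))
    _ = 2 * C := (two_mul C).symm

theorem pairwise_disjoint_rayBoundary
    (huniq : ∀ r l l', IsActiveAt g r l → IsActiveAt g r l' → l = l') :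
    Pairwise (Function.onFun Disjoint (rayBoundary g c ξ C)) := fun n n' hne =>
  Finset.disjoint_left.2 fun r hr hr' => hne <| by
    classical
    obtain ⟨l, rfl, hl⟩ := (Finset.mem_filter.1 hr).2
    obtain ⟨l', rfl, hl'⟩ := (Finset.mem_filter.1 hr').2
    rw [huniq r l l' hl hl']

theorem mem_rayBoundary (hg : g.IsCarriedBy c)
    (huniq : ∀ r l l', IsActiveAt g r l → IsActiveAt g r l' → l = l')
    (hC : ∀ r n l, EqFrom n r ξ → IsActiveAt g r l → l < n + C) {r : Ray ℤ} {l : ℕ}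
    (hl : IsActiveAt g r l) (hnl : n * C ≤ l)
    (hr : EqFrom (n * C) r ξ ∨ EqFrom (n * C) (g • r) ξ) : r ∈ rayBoundary g c ξ C n := by
  classical
  have div_eq (hlC : l < n * C + C) : l / C = n :=
    Nat.div_eq_of_lt_le hnl (by rwa [Nat.add_mul, one_mul])
  rw [rayBoundary, Finset.mem_filter, Finset.mem_union]
  rcases hr with hr | hgr
  · have hlC := hC r _ l hr hl
    exact ⟨.inl (mem_carrierRays hg hr hl hnl hlC), l, div_eq hlC, hl⟩
  · have htake : (g • r).take l = r.take l := take_eq_take_iff.2 fun t ht => by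
      have : ¬IsActiveAt g r t := fun hactive => ht.ne (huniq r t l hactive hl)
      rw [Ray.smul_apply, not_not.1 this, add_zero]
    have hgl : IsActiveAt g (g • r) l := by rwa [IsActiveAt, htake]
    have hlC := hC _ _ l hgr hgl
    refine ⟨.inr (Finset.mem_image.2 ⟨g • r, mem_carrierRays hg hgr hgl hnl hlC, ?_⟩),
      l, div_eq hlC, hl⟩
    exact inv_smul_smul g r

theorem energyLEOn_compl_rayBoundary (hg : g.IsCarriedBy c)
    (huniq : ∀ r l l', IsActiveAt g r l → IsActiveAt g r l' → l = l')
    (hC : ∀ r n l, EqFrom n r ξ → IsActiveAt g r l → l < n + C)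
    (hen : EnergyLEOn {v | v.length = n * C} (g • ·) φ ε) :
    EnergyLEOn (↑(rayBoundary g c ξ C n))ᶜ (g • ·) (extendAlong φ ξ (n * C)) ε := by
  classical
  intro E hE
  have hinner := energyLEOn_extendAlong (ξ := ξ) hen
    {r ∈ E | ∀ l ≥ n * C, ¬IsActiveAt g r l} fun r hr => (Finset.mem_filter.1 hr).2
  refine le_trans (le_of_eq (Finset.sum_filter_of_ne fun r hr hne l hnl hl => ?_).symm) hinner
  refine hE hr (mem_rayBoundary hg huniq hC hl hnl ?_)
  by_contra! hfar
  exact hne (by simp [extendAlong, hfar.1, hfar.2])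

theorem zeroCapacity_ray {ι : Type*} [Finite ι] {g : ι → Portrait ℤ}
    (hc : ∀ n, (c n).length = n) (hg : ∀ i, (g i).IsCarriedBy c)
    (huniq : ∀ i r l l', IsActiveAt (g i) r l → IsActiveAt (g i) r l' → l = l')
    (hC : ∀ i r n l, EqFrom n r ξ → IsActiveAt (g i) r l → l < n + C) :
    ZeroCapacity (fun i (r : Ray ℤ) => g i • r) {ξ} := by
  refine ZeroCapacity.of_disjoint_boundaries (2 * C) fun ε hε => ?_
  choose φ hφ hen using fun n => exists_isTestFunction_level hg hc (n * C) hε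
    (Set.finite_singleton (ξ.take (n * C))) (by simp)
  exact ⟨fun n => extendAlong (φ n) ξ (n * C), fun i n => rayBoundary (g i) c ξ C n,
    fun n => isTestFunction_extendAlong (hφ n), fun i => ⟨pairwise_disjoint_rayBoundary (huniq i),
      fun n => ⟨card_rayBoundary_le _ _ _ _ _,
        energyLEOn_compl_rayBoundary (hg i) (huniq i) (hC i) (hen n i)⟩⟩⟩

end Recurrence

/-! ### Lamps at rays -/

namespace Portrait

variable {A : Type*} [AddCommGroup A]

/-- The restriction of `g` to the subtree hanging at the vertex `v`. -/
def restrict (g : Portrait A) (v : List A) : Portrait A := ⟨fun u => g.label (u ++ v)⟩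

theorem smul_append (g : Portrait A) (u v : List A) : g • (u ++ v) = g.restrict v • u ++ g • v := by
  induction u with
  | nil => rfl
  | cons z u ih => rw [List.cons_append, smul_cons, ih]; rfl

/-- Along each ray, the labels of `g` within distance less than `d` below the ray eventually
vanish. -/
def VanishesNearRays (g : Portrait A) (d : ℕ) : Prop :=
  ∀ r : Ray A, ∃ M, ∀ m ≥ M, ∀ u : List A, u.length < d → g.label (u ++ r.take m) = 0

end Portrait

section RayLamps

variable {w : List ℤ} {p : ℕ}

open Classical in
/-- The lamp at `(r, j)`: the indicator function of the vertices reached from a vertex of `r` of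
depth congruent to `j` modulo `p` by appending the word `w`. -/
noncomputable def lampFunction (w : List ℤ) (p : ℕ) (q : Ray ℤ × ℕ) (v : List ℤ) : ℤ :=
  if ∃ m, m % p = q.2 ∧ v = w ++ q.1.take m then 1 else 0

theorem precomp_mk_lampFunction {g : Portrait ℤ} (hg : g.VanishesNearRays w.length)
    (q : Ray ℤ × ℕ) :
    LabelGerm.precomp g (LabelGerm.mk (lampFunction w p q)) =
      LabelGerm.mk (lampFunction w p (g⁻¹ • q.1, q.2)) := by
  obtain ⟨M, hM⟩ := hg (g⁻¹ • q.1)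
  have smul_eq (m : ℕ) (hm : M ≤ m) :
      g • (w ++ (g⁻¹ • q.1).take m) = w ++ q.1.take m := by
    have hw : g.restrict ((g⁻¹ • q.1).take m) • w = (1 : Portrait ℤ) • w :=
      Portrait.smul_eq_smul_of_label_eq (hM m hm) le_rfl
    rw [Portrait.smul_append, hw, one_smul, ← Ray.take_smul, smul_inv_smul]
  classical
  rw [LabelGerm.precomp_mk, LabelGerm.mk_eq_mk_iff]
  refine ⟨w.length + M, fun v hv => if_congr (exists_congr fun m => and_congr_right fun _ => ?_)
    rfl rfl⟩
  by_cases hm : M ≤ m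
  · rw [← smul_eq m hm, smul_left_cancel_iff]
  · refine iff_of_false (fun h => ?_) fun h => ?_ <;>
    · have := congrArg List.length h
      simp only [Portrait.length_smul, List.length_append, Ray.length_take] at this
      lia

theorem zeroCapacity_prod_right {X κ ι : Type*} {u : ι → X → X} {Q : Set (X × κ)} (hQ : Q.Finite)
    (h : ∀ q ∈ Q, ZeroCapacity u {q.1}) : ZeroCapacity (fun i => Prod.map (u i) id) Q := by
  refine ZeroCapacity.of_finite hQ fun q hq => ?_
  have himage := (h q hq).image (e := fun x => (x, q.2)) (w := fun i => Prod.map (u i) id)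
    (fun x x' hx => congrArg Prod.fst hx) (fun i x => rfl)
    fun i z ⟨x, hx⟩ => ⟨z.1, Prod.ext rfl (Prod.ext_iff.1 hx).2⟩
  rwa [Set.image_singleton] at himage

theorem isAmenable_closure_of_lamps {ι : Type*} {g : ι → Portrait ℤ} {Q : Set (Ray ℤ × ℕ)}
    (hQ : Q.Finite) (hcap : ∀ q ∈ Q, ZeroCapacity (fun i (r : Ray ℤ) => g i • r) {q.1})
    (hvanish : ∀ i, (g i).VanishesNearRays w.length)
    (hlabel : ∀ i, LabelGerm.mk (g i).label = 0 ∨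
      ∃ q ∈ Q, LabelGerm.mk (g i).label = LabelGerm.mk (lampFunction w p q)) :
    IsAmenable (Subgroup.closure (Set.range g)) := by
  refine Portrait.isAmenable_of_isAmenableAction_labelGerm _ (IsAmenableAction.closure ?_)
  intro ε hε
  let π (i : ι) : Equiv.Perm (Ray ℤ × ℕ) :=
    (MulAction.toPerm (g i)).symm.prodCongr (Equiv.refl ℕ)
  have hπ : ZeroCapacity (fun i => ⇑(π i)) Q := zeroCapacity_prod_right hQ fun q hq =>
    ZeroCapacity.symm (π := fun i => MulAction.toPerm (g i)) (hcap q hq)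
  obtain ⟨M, hM⟩ := hπ.exists_almostInvariant_affine
    (fun i q => precomp_mk_lampFunction (p := p) (hvanish i) q) hlabel hε
  refine ⟨M, ?_⟩
  rintro _ ⟨i, rfl⟩
  refine (hM i).of_leftInverse fun y => ?_
  beta_reduce
  rw [← LabelGerm.inv_smul_def, smul_inv_smul]

end RayLamps

/-! ### The kneading automaton -/

namespace Kneading

open Ray

variable {k p : ℕ} {x y : ℕ → ℤ}

/-- The preperiodic sequence `x₁ … x_k (y₁ … y_p)^∞`. -/
def criticalLetter (k p : ℕ) (x y : ℕ → ℤ) (n : ℕ) : ℤ := if n < k then x n else y ((n - k) % p)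

/-- The vertex of level `n` spelled by the critical letters, the latest letter being read first. -/
def criticalWord (k p : ℕ) (x y : ℕ → ℤ) (n : ℕ) : List ℤ :=
  (List.range n).map (criticalLetter k p x y)

@[simp] theorem length_criticalWord (n : ℕ) : (criticalWord k p x y n).length = n := by
  simp [criticalWord]

theorem criticalWord_succ (n : ℕ) :
    criticalWord k p x y (n + 1) = criticalWord k p x y n ++ [criticalLetter k p x y n] := by
  simp [criticalWord, List.range_succ]

/-- The state acts nontrivially at the critical vertex of level `n`. -/
def IsActiveLevel (k p : ℕ) : KState → ℕ → Prop
  | .a i, n => n = i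
  | .b j, n => k ≤ n ∧ (n - k) % p = j
  | .id, _ => False

open Classical in
/-- The portrait of the action of a state: it adds one to the letter below each critical vertex of
an active level. -/
noncomputable def statePortrait (k p : ℕ) (x y : ℕ → ℤ) (s : KState) : Portrait ℤ :=
  ⟨fun v => if v = criticalWord k p x y v.length ∧ IsActiveLevel k p s v.length then 1 else 0⟩

theorem label_statePortrait_ne_zero_iff {s : KState} {v : List ℤ} :
    (statePortrait k p x y s).label v ≠ 0 ↔
      v = criticalWord k p x y v.length ∧ IsActiveLevel k p s v.length := by
  simp [statePortrait]

theorem isCarriedBy_statePortrait (s : KState) :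
    (statePortrait k p x y s).IsCarriedBy (criticalWord k p x y) := fun v => by
  rw [or_iff_not_imp_left]
  intro h
  have hv := label_statePortrait_ne_zero_iff.1 h
  exact ⟨hv.1, if_pos hv⟩

theorem succ_mod_eq_succ_iff {n j : ℕ} (hj : j + 1 < p) :
    (n + 1) % p = j + 1 ↔ n % p = j := by
  have hlt := Nat.mod_lt n (by lia : 0 < p)
  rw [Nat.add_mod_eq_ite, Nat.mod_eq_of_lt (by lia : 1 < p)]
  split_ifs <;> lia

theorem succ_mod_eq_zero_iff {n : ℕ} (hp : 1 ≤ p) : (n + 1) % p = 0 ↔ n % p = p - 1 := by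
  have hlt := Nat.mod_lt n hp
  obtain rfl | hp' := eq_or_lt_of_le hp
  · lia
  · rw [Nat.add_mod_eq_ite, Nat.mod_eq_of_lt hp']
    split_ifs <;> lia

theorem isActiveLevel_b_succ {j n : ℕ} (hj : j + 1 < p) :
    IsActiveLevel k p (.b (j + 1)) (n + 1) ↔ IsActiveLevel k p (.b j) n := by
  rcases lt_or_ge n k with hn | hn
  · refine iff_of_false (fun h => ?_) fun h => hn.not_ge h.1
    have hmod := h.2
    rw [show n + 1 - k = 0 by lia, Nat.zero_mod] at hmod
    lia
  · rw [IsActiveLevel, IsActiveLevel, Nat.sub_add_comm hn, succ_mod_eq_succ_iff hj]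
    simp [hn, Nat.le_succ_of_le hn]

theorem isActiveLevel_b_zero_succ (hk : 1 ≤ k) (hp : 1 ≤ p) {n : ℕ} :
    IsActiveLevel k p (.b 0) (n + 1) ↔
      IsActiveLevel k p (.a (k - 1)) n ∨ IsActiveLevel k p (.b (p - 1)) n := by
  rw [IsActiveLevel, IsActiveLevel, IsActiveLevel]
  rcases lt_or_ge n k with hn | hn
  · rw [show n + 1 - k = 0 by lia, Nat.zero_mod]
    lia
  · rw [Nat.sub_add_comm hn, succ_mod_eq_zero_iff hp]
    lia

theorem criticalLetter_of_isActiveLevel_b {j n : ℕ} (h : IsActiveLevel k p (.b j) n) :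
    criticalLetter k p x y n = y j := by
  rw [criticalLetter, if_neg h.1.not_gt, h.2]

theorem isGen_or_eq_id_KTrans (hk : 1 ≤ k) (hp : 1 ≤ p) {s : KState}
    (hs : IsGen k p s ∨ s = .id) (z : ℤ) :
    IsGen k p (KTrans k p x y s z).2 ∨ (KTrans k p x y s z).2 = .id := by
  unfold IsGen at hs ⊢
  fun_cases KTrans <;> grind

theorem isActiveLevel_KTrans_b_zero (hk : 1 ≤ k) (hp : 1 ≤ p) (hxy : x (k - 1) ≠ y (p - 1))
    (z : ℤ) (n : ℕ) :
    IsActiveLevel k p (KTrans k p x y (.b 0) z).2 n ↔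
      z = criticalLetter k p x y n ∧ IsActiveLevel k p (.b 0) (n + 1) := by
  have ha (h : IsActiveLevel k p (.a (k - 1)) n) : criticalLetter k p x y n = x (k - 1) := by
    rw [criticalLetter, show n = k - 1 from h, if_pos (Nat.sub_one_lt_of_lt hk)]
  have hb := criticalLetter_of_isActiveLevel_b (k := k) (p := p) (x := x) (y := y)
    (j := p - 1) (n := n)
  rw [isActiveLevel_b_zero_succ hk hp, KTrans]
  split_ifs <;> grind [IsActiveLevel]

theorem isActiveLevel_KTrans (hk : 1 ≤ k) (hp : 1 ≤ p) (hxy : x (k - 1) ≠ y (p - 1))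
    {s : KState} (hs : IsGen k p s ∨ s = .id) (z : ℤ) (n : ℕ) :
    IsActiveLevel k p (KTrans k p x y s z).2 n ↔
      z = criticalLetter k p x y n ∧ IsActiveLevel k p s (n + 1) := by
  match s with
  | .id => simp [KTrans, IsActiveLevel]
  | .a 0 => simp [KTrans, IsActiveLevel]
  | .a (i + 1) =>
    have hi : i < k := by grind [IsGen]
    rw [KTrans]
    split_ifs <;> grind [IsActiveLevel, criticalLetter]
  | .b 0 => exact isActiveLevel_KTrans_b_zero hk hp hxy z n
  | .b (j + 1) =>
    have hb := criticalLetter_of_isActiveLevel_b (k := k) (p := p) (x := x) (y := y)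
      (j := j) (n := n)
    rw [isActiveLevel_b_succ (by grind [IsGen] : j + 1 < p), KTrans]
    split_ifs <;> grind [IsActiveLevel]

theorem restrict_statePortrait (hk : 1 ≤ k) (hp : 1 ≤ p) (hxy : x (k - 1) ≠ y (p - 1))
    {s : KState} (hs : IsGen k p s ∨ s = .id) (z : ℤ) :
    (statePortrait k p x y s).restrict [z] = statePortrait k p x y (KTrans k p x y s z).2 := by
  classical
  refine Portrait.ext (funext fun u => if_congr ?_ rfl rfl)
  rw [List.length_append, List.length_singleton, criticalWord_succ,
    isActiveLevel_KTrans hk hp hxy hs, List.append_singleton_inj, and_assoc]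

theorem KTrans_fst (hk : 1 ≤ k) (s : KState) (z : ℤ) :
    (KTrans k p x y s z).1 = z + (statePortrait k p x y s).label [] := by
  have hb : ∀ j, ¬IsActiveLevel k p (.b j) 0 := fun j h => by grind [IsActiveLevel]
  fun_cases KTrans <;> simp_all [statePortrait, criticalWord, IsActiveLevel]

theorem stateAct_eq_wordPerm (hk : 1 ≤ k) (hp : 1 ≤ p) (hxy : x (k - 1) ≠ y (p - 1))
    {s : KState} (hs : IsGen k p s ∨ s = .id) (v : List ℤ) :
    stateAct k p x y s v = Portrait.wordPerm (statePortrait k p x y s) v := by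
  induction v generalizing s with
  | nil => rfl
  | cons z v ih =>
    rw [stateAct, ih (isGen_or_eq_id_KTrans hk hp hs z), Portrait.wordPerm_apply,
      Portrait.wordPerm_apply, List.reverse_cons, Portrait.smul_append,
      restrict_statePortrait hk hp hxy hs, Portrait.smul_cons, Portrait.smul_nil, KTrans_fst hk,
      List.reverse_append]
    rfl

theorem map_closure_statePortrait (hk : 1 ≤ k) (hp : 1 ≤ p) (hxy : x (k - 1) ≠ y (p - 1)) :
    (Subgroup.closure (Set.range fun s : {s // IsGen k p s} => statePortrait k p x y s)).map
      Portrait.wordPerm = Kgroup k p x y := by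
  have hact {s : KState} (hs : IsGen k p s) :
      ⇑(Portrait.wordPerm (statePortrait k p x y s)) = stateAct k p x y s :=
    funext fun v => (stateAct_eq_wordPerm hk hp hxy (.inl hs) v).symm
  rw [MonoidHom.map_closure, Kgroup]
  congr 1
  ext g
  constructor
  · rintro ⟨_, ⟨⟨s, hs⟩, rfl⟩, rfl⟩
    exact ⟨s, hs, hact hs⟩
  · rintro ⟨s, hs, hg⟩
    exact ⟨_, ⟨⟨s, hs⟩, rfl⟩, DFunLike.coe_injective ((hact hs).trans hg.symm)⟩

instance finite_isGen (k p : ℕ) : Finite {s // IsGen k p s} := by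
  refine Set.Finite.to_subtype (s := {s | IsGen k p s}) ?_
  refine (((Set.finite_lt_nat k).image KState.a).union
    ((Set.finite_lt_nat p).image KState.b)).subset ?_
  rintro _ (⟨i, hi, rfl⟩ | ⟨j, hj, rfl⟩)
  exacts [.inl ⟨i, hi, rfl⟩, .inr ⟨j, hj, rfl⟩]

/-- The periodic sequence of the `y j` read backwards from `y (m - 1)`, indices being taken
modulo `p`; `p - 1` stands for `-1`. -/
def criticalRay (p : ℕ) (y : ℕ → ℤ) (m : ℕ) : Ray ℤ := fun t => y ((m + (p - 1) * (t + 1)) % p)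

theorem criticalRay_add_period (m t : ℕ) : criticalRay p y m (t + p) = criticalRay p y m t := by
  rw [criticalRay, criticalRay, add_right_comm t, mul_add, ← add_assoc, Nat.add_mul_mod_self_right]

theorem criticalRay_mod (m : ℕ) : criticalRay p y (m % p) = criticalRay p y m := by
  funext t
  rw [criticalRay, criticalRay, Nat.mod_add_mod]

theorem succ_add_pred_mul_succ_mod (hp : 1 ≤ p) (m t : ℕ) :
    (m + 1 + (p - 1) * (t + 1)) % p = (m + (p - 1) * t) % p := by
  obtain ⟨d, rfl⟩ := Nat.exists_eq_add_of_le' hp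
  rw [Nat.add_sub_cancel, show m + 1 + d * (t + 1) = m + d * t + (d + 1) by ring,
    Nat.add_mod_right]

theorem criticalRay_succ_zero (hp : 1 ≤ p) (m : ℕ) : criticalRay p y (m + 1) 0 = y (m % p) := by
  rw [criticalRay, succ_add_pred_mul_succ_mod hp, mul_zero, add_zero]

theorem criticalRay_succ_succ (hp : 1 ≤ p) (m t : ℕ) :
    criticalRay p y (m + 1) (t + 1) = criticalRay p y m t := by
  rw [criticalRay, criticalRay, succ_add_pred_mul_succ_mod hp]

theorem criticalRay_self (hp : 1 ≤ p) (m : ℕ) : criticalRay p y m m = y (p - 1) := by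
  induction m with
  | zero =>
    rw [criticalRay, zero_add, zero_add, mul_one, Nat.mod_eq_of_lt (Nat.sub_one_lt_of_lt hp)]
  | succ m ih => rw [criticalRay_succ_succ hp, ih]

theorem criticalWord_add (hp : 1 ≤ p) (m : ℕ) :
    criticalWord k p x y (k + m) = criticalWord k p x y k ++ (criticalRay p y m).take m := by
  induction m with
  | zero => rw [add_zero, take, List.append_nil]
  | succ m ih =>
    have htail : (fun t => criticalRay p y (m + 1) (t + 1)) = criticalRay p y m :=
      funext (criticalRay_succ_succ hp m)
    have hletter : criticalLetter k p x y (k + m) = y (m % p) := by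
      rw [criticalLetter, if_neg (Nat.le_add_right k m).not_gt, Nat.add_sub_cancel_left]
    rw [take_succ_eq_append, htail, criticalRay_succ_zero hp, ← List.append_assoc, ← ih,
      ← hletter, ← criticalWord_succ, add_assoc]

theorem isActiveLevel_b_iff {j n : ℕ} : IsActiveLevel k p (.b j) n ↔ ∃ m, m % p = j ∧ n = k + m :=
  ⟨fun h => ⟨n - k, h.2, (Nat.add_sub_cancel' h.1).symm⟩, by
    rintro ⟨m, rfl, rfl⟩
    exact ⟨Nat.le_add_right k m, by rw [Nat.add_sub_cancel_left]⟩⟩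

theorem label_statePortrait_b (hp : 1 ≤ p) (j : ℕ) :
    (statePortrait k p x y (.b j)).label =
      lampFunction (criticalWord k p x y k) p (criticalRay p y j, j) := by
  classical
  funext v
  refine if_congr ?_ rfl rfl
  rw [isActiveLevel_b_iff]
  constructor
  · rintro ⟨hv, m, rfl, hm⟩
    exact ⟨m, rfl, by rw [hv, hm, criticalWord_add hp, criticalRay_mod]⟩
  · rintro ⟨m, (rfl : m % p = j), hv⟩
    have hlen : v.length = k + m := by simp [hv]
    refine ⟨?_, m, rfl, hlen⟩
    rw [hlen, criticalWord_add hp, hv, criticalRay_mod]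

theorem mk_label_statePortrait_a (i : ℕ) :
    LabelGerm.mk (statePortrait k p x y (.a i)).label = 0 := by
  refine LabelGerm.mk_eq_mk_iff.2 ⟨i + 1, fun v hv => not_not.1 fun hne => ?_⟩
  have hi : v.length = i := (label_statePortrait_ne_zero_iff.1 hne).2
  lia

theorem exists_firstDifferAt_criticalRay (hk : 1 ≤ k) (hp : 1 ≤ p)
    (hxy : x (k - 1) ≠ y (p - 1)) {j n : ℕ} {r : Ray ℤ} {v : List ℤ}
    (hv : (statePortrait k p x y (.b j)).label v ≠ 0) (hr : r.take n <:+ v)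
    (hn : v.length < n + k) :
    ∃ m, v.length = k + m ∧ FirstDifferAt r (criticalRay p y j) m := by
  obtain ⟨hvc, hactive⟩ := label_statePortrait_ne_zero_iff.1 hv
  obtain ⟨m, rfl, hm⟩ := isActiveLevel_b_iff.1 hactive
  obtain ⟨d, rfl⟩ := Nat.exists_eq_add_of_le' hk
  rw [criticalRay_mod]
  -- The critical vertex `v` reads `criticalRay p y m` up to depth `m` and then `x d`, whereas the
  -- ray itself continues with `y (p - 1)`.
  have hcritical : x d :: (criticalRay p y m).take m <:+ v := by
    refine ⟨criticalWord (d + 1) p x y d, ?_⟩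
    rw [hvc, hm, criticalWord_add hp, criticalWord_succ, criticalLetter, if_pos d.lt_succ_self,
      List.append_assoc, List.singleton_append]
  have htake : r.take (m + 1) = x d :: (criticalRay p y m).take m :=
    (List.suffix_of_suffix_length_le ((r.take_suffix_take (by lia)).trans hr) hcritical
      (by simp)).eq_of_length (by simp)
  obtain ⟨hrm, hrt⟩ := List.cons.inj htake
  exact ⟨m, hm, take_eq_take_iff.1 hrt, by rwa [hrm, criticalRay_self hp]⟩

theorem exists_firstDifferAt_of_isActiveAt (hk : 1 ≤ k) (hp : 1 ≤ p)
    (hxy : x (k - 1) ≠ y (p - 1)) {j l : ℕ} {r : Ray ℤ}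
    (hl : IsActiveAt (statePortrait k p x y (.b j)) r l) :
    ∃ m, l = k + m ∧ FirstDifferAt r (criticalRay p y j) m := by
  simpa using exists_firstDifferAt_criticalRay hk hp hxy hl List.suffix_rfl
    (by rw [length_take]; lia)

theorem eq_of_isActiveAt_a {i l : ℕ} {r : Ray ℤ}
    (hl : IsActiveAt (statePortrait k p x y (.a i)) r l) : l = i :=
  (r.length_take l).symm.trans (label_statePortrait_ne_zero_iff.1 hl).2

theorem isActiveAt_unique (hk : 1 ≤ k) (hp : 1 ≤ p) (hxy : x (k - 1) ≠ y (p - 1)) {s : KState}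
    (hs : IsGen k p s) {r : Ray ℤ} {l l' : ℕ} (hl : IsActiveAt (statePortrait k p x y s) r l)
    (hl' : IsActiveAt (statePortrait k p x y s) r l') : l = l' := by
  rcases hs with ⟨i, -, rfl⟩ | ⟨j, -, rfl⟩
  · rw [eq_of_isActiveAt_a hl, eq_of_isActiveAt_a hl']
  · obtain ⟨m, rfl, hm⟩ := exists_firstDifferAt_of_isActiveAt hk hp hxy hl
    obtain ⟨m', rfl, hm'⟩ := exists_firstDifferAt_of_isActiveAt hk hp hxy hl'
    rw [hm.unique hm']

theorem lt_add_of_isActiveAt (hk : 1 ≤ k) (hp : 1 ≤ p) (hxy : x (k - 1) ≠ y (p - 1))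
    {s : KState} (hs : IsGen k p s) {r : Ray ℤ} {i n l : ℕ}
    (hr : EqFrom n r (criticalRay p y i)) (hl : IsActiveAt (statePortrait k p x y s) r l) :
    l < n + (k + p) := by
  rcases hs with ⟨i, hi, rfl⟩ | ⟨j, -, rfl⟩
  · rw [eq_of_isActiveAt_a hl]
    lia
  · obtain ⟨m, rfl, hagree, hdiffer⟩ := exists_firstDifferAt_of_isActiveAt hk hp hxy hl
    by_contra! hle
    obtain ⟨t, rfl⟩ := Nat.exists_eq_add_of_le' (by lia : p ≤ m)
    refine hdiffer ?_
    calc r (t + p)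
      _ = criticalRay p y i t := by rw [hr _ (by lia), criticalRay_add_period]
      _ = criticalRay p y j (t + p) := by
          rw [← hr t (by lia), hagree t (by lia), criticalRay_add_period]

theorem vanishesNearRays_statePortrait (hk : 1 ≤ k) (hp : 1 ≤ p) (hxy : x (k - 1) ≠ y (p - 1))
    {s : KState} (hs : IsGen k p s) : (statePortrait k p x y s).VanishesNearRays k := by
  intro r
  have length_le {n : ℕ} (u : List ℤ) : n ≤ (u ++ r.take n).length := by simp
  rcases hs with ⟨i, -, rfl⟩ | ⟨j, -, rfl⟩
  · refine ⟨i + 1, fun n hn u _ => not_not.1 fun hactive => ?_⟩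
    have hi : (u ++ r.take n).length = i := (label_statePortrait_ne_zero_iff.1 hactive).2
    exact (hn.trans ((length_le u).trans_eq hi)).not_gt i.lt_succ_self
  · have firstDiffer {n : ℕ} {u : List ℤ} (hu : u.length < k)
        (hactive : (statePortrait k p x y (.b j)).label (u ++ r.take n) ≠ 0) :=
      exists_firstDifferAt_criticalRay hk hp hxy hactive (List.suffix_append u _)
        (by rw [List.length_append, length_take]; lia)
    by_cases hex : ∃ m, FirstDifferAt r (criticalRay p y j) m
    · obtain ⟨m, hm⟩ := hex
      refine ⟨k + m + 1, fun n hn u hu => not_not.1 fun hactive => ?_⟩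
      obtain ⟨m', hlen, hm'⟩ := firstDiffer hu hactive
      have := hn.trans (length_le u)
      have := hm.unique hm'
      lia
    · refine ⟨0, fun n _ u hu => not_not.1 fun hactive => ?_⟩
      obtain ⟨m, -, hm⟩ := firstDiffer hu hactive
      exact hex ⟨m, hm⟩

theorem zeroCapacity_criticalRay (hk : 1 ≤ k) (hp : 1 ≤ p) (hxy : x (k - 1) ≠ y (p - 1)) (j : ℕ) :
    ZeroCapacity (fun (s : {s // IsGen k p s}) (r : Ray ℤ) => statePortrait k p x y s • r)
      {criticalRay p y j} :=
  zeroCapacity_ray length_criticalWord (fun s => isCarriedBy_statePortrait s)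
    (fun s _ _ _ => isActiveAt_unique hk hp hxy s.2) fun s _ _ _ =>
      lt_add_of_isActiveAt hk hp hxy s.2

theorem isAmenable_closure_statePortrait (hk : 1 ≤ k) (hp : 1 ≤ p)
    (hxy : x (k - 1) ≠ y (p - 1)) :
    IsAmenable
      (Subgroup.closure (Set.range fun s : {s // IsGen k p s} => statePortrait k p x y s)) := by
  refine isAmenable_closure_of_lamps (w := criticalWord k p x y k) (p := p)
    (Q := (fun j => (criticalRay p y j, j)) '' Set.Iio p) ((Set.finite_Iio p).image _) ?_ ?_ ?_
  · rintro _ ⟨j, -, rfl⟩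
    exact zeroCapacity_criticalRay hk hp hxy j
  · intro s
    rw [length_criticalWord]
    exact vanishesNearRays_statePortrait hk hp hxy s.2
  · rintro ⟨_, ⟨i, -, rfl⟩ | ⟨j, hj, rfl⟩⟩
    · exact .inl (mk_label_statePortrait_a i)
    · exact .inr ⟨_, ⟨j, hj, rfl⟩, congrArg _ (label_statePortrait_b hp j)⟩

theorem isAmenable_Kgroup (hk : 1 ≤ k) (hp : 1 ≤ p) (hxy : x (k - 1) ≠ y (p - 1)) :
    IsAmenable (Kgroup k p x y) := by
  rw [← map_closure_statePortrait hk hp hxy]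
  exact (isAmenable_closure_statePortrait hk hp hxy).of_surjective _
    (MonoidHom.subgroupMap_surjective Portrait.wordPerm _)

end Kneading

theorem stmt12 (k p : ℕ) (hk : 1 ≤ k) (hp : 1 ≤ p) (x y : ℕ → ℤ)
    (hxy : x (k - 1) ≠ y (p - 1)) :
    ∃ μ : Set ↥(Kgroup k p x y) → ℝ,
      μ Set.univ = 1 ∧
      (∀ A : Set ↥(Kgroup k p x y), 0 ≤ μ A) ∧
      (∀ A B : Set ↥(Kgroup k p x y), Disjoint A B → μ (A ∪ B) = μ A + μ B) ∧
      (∀ (g : ↥(Kgroup k p x y)) (A : Set ↥(Kgroup k p x y)),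
        μ ((fun a => g * a) '' A) = μ A) :=
  (Kneading.isAmenable_Kgroup hk hp hxy).exists_finitelyAdditive_measure
end

section
/- The kneading group K is not elementary subexponentially amenable: K does not belong to the smallest class of groups that contains all finitely generated groups of subexponential word growth and is closed under isomorphism, taking subgroups, taking quotients, group extensions, and directed unions. -/
/-- The ball of radius `n`: elements expressible as a product of at most `n`
elements of `S ∪ S⁻¹`. -/
def wordBall {G : Type*} [Group G] (S : Set G) (n : ℕ) : Set G :=
  {g | ∃ l : List G, l.length ≤ n ∧ (∀ a ∈ l, a ∈ S ∨ a⁻¹ ∈ S) ∧ l.prod = g}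

/-- A finitely generated group of subexponential word growth. -/
def HasSubexpGrowth (G : Type) [Group G] : Prop :=
  ∃ S : Finset G, Subgroup.closure (S : Set G) = ⊤ ∧
    ∀ C : ℝ, 1 < C → ∀ᶠ n in Filter.atTop, ((wordBall (S : Set G) n).ncard : ℝ) < C ^ n

/-- A class of groups containing all finitely generated groups of subexponential word
growth and closed under isomorphism, subgroups, quotients, extensions and directed unions. -/
def IsClosedClass (C : ∀ (G : Type) [Group G], Prop) : Prop :=
  (∀ (G : Type) [Group G], HasSubexpGrowth G → C G) ∧
  (∀ (G H : Type) [Group G] [Group H], Nonempty (G ≃* H) → C G → C H) ∧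
  (∀ (G : Type) [Group G] (H : Subgroup G), C G → C H) ∧
  (∀ (G : Type) [Group G] (N : Subgroup G) [N.Normal], C G → C (G ⧸ N)) ∧
  (∀ (G : Type) [Group G] (N : Subgroup G) [N.Normal], C N → C (G ⧸ N) → C G) ∧
  (∀ (G : Type) [Group G] (ι : Type) (H : ι → Subgroup G),
    Directed (· ≤ ·) H → (∀ i, C (H i)) → (∀ g : G, ∃ i, g ∈ H i) → C G)

/-- Membership in the smallest such class: elementary subexponentially amenable groups. -/
def IsElemSubexpAmenable (G : Type) [Group G] : Prop :=
  ∀ C : ∀ (G : Type) [Group G], Prop, IsClosedClass C → C G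

/-!
The groups that do not have `K` as a section form a closed class, provided that `K` is finitely
generated, contains a free monoid of rank two, and is a section of each of its nontrivial normal
subgroups. Indeed a free monoid in a section lifts to the ambient group, which then has exponential
growth, and if a section `K` of an extension is not a section of the quotient, then a nontrivial
normal subgroup of `K` is a section of the kernel.

For the kneading group, `b₁` restricts to `a_k` and `b_p` at two distinct letters whose difference
is `d`, and `a₁` translates the first letter. The elements `a₁ᵈ b₁` and `a₁ᵈ` generate a free
monoid. Up to commuting factors below the letters `z ± d`, a copy of `K` acting below the letter `z`
lies in `K`. Commutators remove these factors, so `K'` contains a copy of itself below every vertex.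
A normal subgroup with an element that moves the vertex `v` then contains the copy of `K''` below
`v`, and `K''` in turn restricts onto `K` at a vertex of the second level.
-/

open scoped commutatorElement

/-- `K` is a section of `G`, that is, a quotient of a subgroup of `G`. -/
def IsSection (K G : Type*) [Group K] [Group G] : Prop :=
  ∃ (H : Subgroup G) (φ : H →* K), Function.Surjective φ

namespace IsSection

variable {K L G : Type*} [Group K] [Group L] [Group G]

theorem of_injective_of_surjective (f : L →* G) (hf : Function.Injective f) (φ : L →* K)
    (hφ : Function.Surjective φ) : IsSection K G :=
  ⟨f.range, φ.comp (MonoidHom.ofInjective hf).symm.toMonoidHom,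
    hφ.comp (MonoidHom.ofInjective hf).symm.surjective⟩

theorem of_injective (f : K →* G) (hf : Function.Injective f) : IsSection K G :=
  of_injective_of_surjective f hf (MonoidHom.id K) Function.surjective_id

theorem of_surjective (φ : G →* K) (hφ : Function.Surjective φ) : IsSection K G :=
  of_injective_of_surjective (MonoidHom.id G) Function.injective_id φ hφ

theorem trans (hKL : IsSection K L) (hLG : IsSection L G) : IsSection K G := by
  obtain ⟨M, ψ, hψ⟩ := hKL
  obtain ⟨H, φ, hφ⟩ := hLG
  exact of_injective_of_surjective (H.subtype.comp (M.comap φ).subtype)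
    (H.subtype_injective.comp (M.comap φ).subtype_injective) (ψ.comp (φ.subgroupComap M))
    (hψ.comp (φ.subgroupComap_surjective_of_surjective M hφ))

theorem of_surjective_subgroupOf {H N : Subgroup G} (φ : N.subgroupOf H →* K)
    (hφ : Function.Surjective φ) : IsSection K N :=
  of_injective_of_surjective (H.subtype.subgroupComap N)
    (fun _ _ hab => Subtype.ext (Subtype.ext (congrArg (fun n : N => (n : G)) hab))) φ hφ

theorem quotient_of_map_subgroupOf_eq_bot {H : Subgroup G} {φ : H →* K}
    (hφ : Function.Surjective φ) {N : Subgroup G} [N.Normal]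
    (hN : (N.subgroupOf H).map φ = ⊥) : IsSection K (G ⧸ N) := by
  have hker : N.subgroupOf H ≤ φ.ker := (Subgroup.map_eq_bot_iff _).1 hN
  have hle : N.subgroupOf H ≤ N.comap H.subtype := le_rfl
  refine of_injective_of_surjective (QuotientGroup.map (N.subgroupOf H) N H.subtype hle) ?_
    (QuotientGroup.lift (N.subgroupOf H) φ hker)
    (QuotientGroup.lift_surjective_of_surjective _ _ hφ _)
  rw [← MonoidHom.ker_eq_bot_iff, QuotientGroup.ker_map, Subgroup.map_eq_bot_iff,
    QuotientGroup.ker_mk']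
  exact le_rfl

theorem quotient_or_exists_normal (N : Subgroup G) [N.Normal] (h : IsSection K G) :
    IsSection K (G ⧸ N) ∨ ∃ M : Subgroup K, M.Normal ∧ M ≠ ⊥ ∧ IsSection M N := by
  obtain ⟨H, φ, hφ⟩ := h
  by_cases hN : (N.subgroupOf H).map φ = ⊥
  · exact .inl (quotient_of_map_subgroupOf_eq_bot hφ hN)
  · exact .inr ⟨_, Subgroup.Normal.map inferInstance φ hφ, hN,
      of_surjective_subgroupOf _ (φ.subgroupMap_surjective _)⟩

theorem exists_of_directed [Group.FG K] {ι : Type*} {H : ι → Subgroup G}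
    (hdir : Directed (· ≤ ·) H) (hcover : ∀ g, ∃ i, g ∈ H i) (h : IsSection K G) :
    ∃ i, IsSection K (H i) := by
  classical
  obtain ⟨L, φ, hφ⟩ := h
  obtain ⟨T, hT⟩ := Group.fg_def.1 ‹Group.FG K›
  choose lift hlift using hφ
  have : Nonempty ι := ⟨(hcover 1).choose⟩
  obtain ⟨i, hi⟩ : ∃ i, ((T.image fun t => (lift t : G) : Finset G) : Set G) ⊆ H i :=
    Directed.exists_mem_subset_of_finset_subset_biUnion (f := fun i => (H i : Set G)) hdir
      fun g _ => Set.mem_iUnion.2 (hcover g)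
  refine ⟨i, of_surjective_subgroupOf (φ.comp ((H i).subgroupOf L).subtype) ?_⟩
  rw [← MonoidHom.range_eq_top, MonoidHom.range_comp, Subgroup.range_subtype, eq_top_iff, ← hT,
    Subgroup.closure_le]
  exact fun t ht => ⟨lift t, hi (Finset.mem_coe.2 (Finset.mem_image_of_mem _ ht)), hlift t⟩

theorem exists_injective_freeMonoid_lift {α : Type*} {f : α → K}
    (hf : Function.Injective (FreeMonoid.lift f)) (h : IsSection K G) :
    ∃ f' : α → G, Function.Injective (FreeMonoid.lift f') := by
  obtain ⟨H, φ, hφ⟩ := h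
  choose lift hlift using fun a => hφ (f a)
  have hinj : Function.Injective (FreeMonoid.lift lift) := by
    have hcomp : φ.comp (FreeMonoid.lift lift) = FreeMonoid.lift f :=
      FreeMonoid.hom_eq hlift
    exact Function.Injective.of_comp (f := φ) (by rwa [← MonoidHom.coe_comp, hcomp])
  refine ⟨H.subtype ∘ lift, ?_⟩
  rw [← FreeMonoid.comp_lift]
  exact H.subtype_injective.comp hinj

end IsSection

section Growth

variable {G : Type*} [Group G]

theorem finite_wordBall {S : Set G} (hS : S.Finite) (n : ℕ) : (wordBall S n).Finite := by
  have : Finite ↥(S ∪ S⁻¹) := hS.union hS.inv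
  refine ((List.finite_length_le ↥(S ∪ S⁻¹) n).image
    fun l => (l.map Subtype.val).prod).subset ?_
  rintro _ ⟨l, hl, hlS, rfl⟩
  lift l to List ↥(S ∪ S⁻¹) using hlS
  exact ⟨l, by simpa using hl, rfl⟩

theorem wordBall_mono (S : Set G) : Monotone (wordBall S) :=
  fun _ _ hmn _ ⟨l, hl, h⟩ => ⟨l, hl.trans hmn, h⟩

theorem mul_mem_wordBall {S : Set G} {m n : ℕ} {g h : G} (hg : g ∈ wordBall S m)
    (hh : h ∈ wordBall S n) : g * h ∈ wordBall S (m + n) := by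
  obtain ⟨l, hl, hlS, rfl⟩ := hg
  obtain ⟨l', hl', hlS', rfl⟩ := hh
  exact ⟨l ++ l', by simpa using Nat.add_le_add hl hl',
    fun a ha => (List.mem_append.1 ha).elim (hlS a) (hlS' a), List.prod_append⟩

theorem exists_mem_wordBall {S : Set G} {g : G} (hg : g ∈ Subgroup.closure S) :
    ∃ n, g ∈ wordBall S n := by
  rw [← Subgroup.mem_toSubmonoid, Subgroup.closure_toSubmonoid] at hg
  obtain ⟨l, hl, rfl⟩ := Submonoid.exists_list_of_mem_closure hg
  exact ⟨l.length, l, le_rfl, hl, rfl⟩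

theorem freeMonoid_lift_mem_wordBall {α : Type*} {S : Set G} {L : ℕ} {f : α → G}
    (hf : ∀ a, f a ∈ wordBall S L) (w : FreeMonoid α) :
    FreeMonoid.lift f w ∈ wordBall S (w.length * L) := by
  induction w using FreeMonoid.inductionOn' with
  | one => exact ⟨[], by simp, by simp, rfl⟩
  | of_mul a w ih =>
    rw [map_mul, FreeMonoid.lift_eval_of, FreeMonoid.length_mul, FreeMonoid.length_of, add_mul,
      one_mul]
    exact mul_mem_wordBall (hf a) ih

theorem card_pow_le_ncard_wordBall {α : Type*} [Fintype α] {S : Set G} (hS : S.Finite) {L : ℕ}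
    {f : α → G} (hf : ∀ a, f a ∈ wordBall S L) (hinj : Function.Injective (FreeMonoid.lift f))
    (n : ℕ) : Fintype.card α ^ n ≤ (wordBall S (n * L)).ncard := by
  let word : List.Vector α n → G := fun l => FreeMonoid.lift f (FreeMonoid.ofList l.1)
  have hword : Function.Injective word :=
    hinj.comp (FreeMonoid.ofList.injective.comp Subtype.val_injective)
  calc Fintype.card α ^ n = (Set.range word).ncard := by
        rw [← Set.image_univ, Set.ncard_image_of_injective _ hword, Set.ncard_univ,
          Nat.card_eq_fintype_card, card_vector]
    _ ≤ (wordBall S (n * L)).ncard := by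
        refine Set.ncard_le_ncard ?_ (finite_wordBall hS _)
        rintro _ ⟨l, rfl⟩
        simpa [word, FreeMonoid.length, l.2] using
          freeMonoid_lift_mem_wordBall hf (FreeMonoid.ofList l.1)

theorem not_hasSubexpGrowth_of_injective_freeMonoid_lift {G α : Type} [Group G] [Finite α]
    [Nontrivial α] {f : α → G} (hf : Function.Injective (FreeMonoid.lift f)) :
    ¬ HasSubexpGrowth G := by
  rintro ⟨S, hS, hgrowth⟩
  have := Fintype.ofFinite α
  choose r hr using fun a => exists_mem_wordBall (hS ▸ Subgroup.mem_top (f a))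
  obtain ⟨R, hR⟩ := Set.finite_range r |>.bddAbove
  have hf_mem (a : α) : f a ∈ wordBall (S : Set G) (R + 1) :=
    wordBall_mono _ ((hR ⟨a, rfl⟩).trans R.le_succ) (hr a)
  have hcard : (1 : ℝ) < Fintype.card α := by exact_mod_cast Fintype.one_lt_card
  let C : ℝ := (Fintype.card α : ℝ) ^ ((R + 1 : ℕ) : ℝ)⁻¹
  have hC : 1 < C := Real.one_lt_rpow hcard (by positivity)
  have hC_pow : C ^ (R + 1) = Fintype.card α :=
    Real.rpow_inv_natCast_pow (by positivity) R.succ_ne_zero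
  obtain ⟨N, hN⟩ := Filter.eventually_atTop.1 (hgrowth C hC)
  have hlt : ((wordBall (S : Set G) (N * (R + 1))).ncard : ℝ) < (Fintype.card α : ℝ) ^ N := by
    rw [← hC_pow, ← pow_mul, mul_comm (R + 1)]
    exact hN _ (Nat.le_mul_of_pos_right N R.succ_pos)
  exact hlt.not_ge (by
    exact_mod_cast card_pow_le_ncard_wordBall S.finite_toSet hf_mem hf N)

end Growth

theorem isClosedClass_not_isSection (K : Type) [Group K] [Group.FG K]
    (hgrowth : ∀ (G : Type) [Group G], HasSubexpGrowth G → ¬ IsSection K G)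
    (hnormal : ∀ N : Subgroup K, N.Normal → N ≠ ⊥ → IsSection K N) :
    IsClosedClass fun G _ => ¬ IsSection K G := by
  refine ⟨hgrowth, ?iso, ?subgroup, ?quotient, ?extension, ?union⟩
  case iso =>
    rintro G H _ _ ⟨e⟩ hG hH
    exact hG (hH.trans (.of_injective e.symm.toMonoidHom e.symm.injective))
  case subgroup => exact fun G _ H hG hH => hG (hH.trans (.of_injective _ H.subtype_injective))
  case quotient =>
    exact fun G _ N _ hG hQ => hG (hQ.trans (.of_surjective _ (QuotientGroup.mk'_surjective N)))
  case extension =>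
    intro G _ N _ hN hQ hG
    rcases hG.quotient_or_exists_normal N with hKQ | ⟨M, hM, hM_ne, hMN⟩
    · exact hQ hKQ
    · exact hN ((hnormal M hM hM_ne).trans hMN)
  case union =>
    intro G _ ι H hdir hH hcover hG
    obtain ⟨i, hi⟩ := hG.exists_of_directed hdir hcover
    exact hH i hi

theorem not_isElemSubexpAmenable_of_isSection_normal {K α : Type} [Group K] [Group.FG K]
    [Finite α] [Nontrivial α] {f : α → K} (hf : Function.Injective (FreeMonoid.lift f))
    (hnormal : ∀ N : Subgroup K, N.Normal → N ≠ ⊥ → IsSection K N) :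
    ¬ IsElemSubexpAmenable K := by
  intro hK
  refine hK _ (isClosedClass_not_isSection K (fun G _ hG hKG => ?_) hnormal)
    (.of_surjective (MonoidHom.id K) Function.surjective_id)
  obtain ⟨f', hf'⟩ := hKG.exists_injective_freeMonoid_lift hf
  exact not_hasSubexpGrowth_of_injective_freeMonoid_lift hf' hG

section FreeMonoid

variable {G Ω : Type*} [Group G] [MulAction G Ω] {t c : G} {ω : Ω}

theorem freeMonoid_lift_smul_of_fixes_backward_orbit
    (hfix : ∀ n : ℕ, n ≠ 0 → c • (t ^ n)⁻¹ • ω = (t ^ n)⁻¹ • ω) (w : FreeMonoid Bool) (n : ℕ) :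
    FreeMonoid.lift (cond · (t * c) t) w • (t ^ (n + w.length))⁻¹ • ω = (t ^ n)⁻¹ • ω := by
  induction w using FreeMonoid.inductionOn' generalizing n with
  | one => simp
  | of_mul e w ih =>
    have hstep : cond e (t * c) t • (t ^ (n + 1))⁻¹ • ω = (t ^ n)⁻¹ • ω := by
      have ht : t • (t ^ (n + 1))⁻¹ • ω = (t ^ n)⁻¹ • ω := by
        rw [smul_smul, pow_succ, mul_inv_rev, mul_inv_cancel_left]
      cases e
      · exact ht
      · rw [cond_true, mul_smul, hfix _ n.succ_ne_zero, ht]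
    rw [map_mul, FreeMonoid.lift_eval_of, FreeMonoid.length_mul, FreeMonoid.length_of, mul_smul,
      ← add_assoc, ih, hstep]

theorem length_le_of_freeMonoid_lift_eq
    (hfix : ∀ n : ℕ, n ≠ 0 → c • (t ^ n)⁻¹ • ω = (t ^ n)⁻¹ • ω) (hmove : c • ω ≠ ω)
    {w w' : FreeMonoid Bool}
    (h : FreeMonoid.lift (cond · (t * c) t) w = FreeMonoid.lift (cond · (t * c) t) w') :
    w'.length ≤ w.length := by
  by_contra! hlt
  obtain ⟨n, hn⟩ := Nat.exists_eq_add_of_lt hlt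
  have horbit : (t ^ (n + 1))⁻¹ • ω = ω := by
    have hw := freeMonoid_lift_smul_of_fixes_backward_orbit hfix w (n + 1)
    have hw' := freeMonoid_lift_smul_of_fixes_backward_orbit hfix w' 0
    rw [h, show n + 1 + w.length = 0 + w'.length by omega, hw'] at hw
    simpa using hw.symm
  exact hmove (by simpa only [horbit] using hfix (n + 1) n.succ_ne_zero)

/-- A word of length `n` in `t * c` and `t` carries `t⁻ⁿ • ω` to `ω`, because `c` acts trivially on
the way; the next letter is then detected by `c • ω ≠ ω`. -/
theorem injective_freeMonoid_lift_of_fixes_backward_orbit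
    (hfix : ∀ n : ℕ, n ≠ 0 → c • (t ^ n)⁻¹ • ω = (t ^ n)⁻¹ • ω) (hmove : c • ω ≠ ω) :
    Function.Injective (FreeMonoid.lift (cond · (t * c) t)) := by
  intro w w' h
  have hlen : w.length = w'.length :=
    le_antisymm (length_le_of_freeMonoid_lift_eq hfix hmove h.symm)
      (length_le_of_freeMonoid_lift_eq hfix hmove h)
  induction w using FreeMonoid.inductionOn' generalizing w' with
  | one => exact (FreeMonoid.length_eq_zero.1 hlen.symm).symm
  | of_mul e w ih =>
    cases w' using FreeMonoid.casesOn with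
    | one => simp at hlen
    | of_mul e' w' =>
      have hlen' : w.length = w'.length := by simpa using hlen
      rw [map_mul, map_mul, FreeMonoid.lift_eval_of, FreeMonoid.lift_eval_of] at h
      have hletter : cond e (t * c) t • ω = cond e' (t * c) t • ω := by
        have hw := freeMonoid_lift_smul_of_fixes_backward_orbit hfix w 0
        have hw' := freeMonoid_lift_smul_of_fixes_backward_orbit hfix w' 0
        simp only [pow_zero, inv_one, one_smul, zero_add] at hw hw'
        rw [hlen'] at hw
        calc cond e (t * c) t • ω
            = (cond e (t * c) t * FreeMonoid.lift (cond · (t * c) t) w) •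
                (t ^ w'.length)⁻¹ • ω := by rw [mul_smul, hw]
          _ = cond e' (t * c) t • ω := by rw [h, mul_smul, hw']
      have he : e = e' := by
        cases e <;> cases e' <;> simp [mul_smul, hmove, hmove.symm] at hletter ⊢
      subst he
      rw [ih (mul_left_cancel h) hlen']

end FreeMonoid

section Commutator

variable {G : Type*} [Group G]

theorem commutatorElement_commutatorElement_of_commute {g h k : G}
    (hh : Commute (g * h * g⁻¹) h) (hk : Commute (g * h * g⁻¹) k) : ⁅⁅g, h⁆, k⁆ = ⁅h⁻¹, k⁆ := by
  have hcomm : Commute (g * h * g⁻¹) ⁅h⁻¹, k⁆ := by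
    rw [commutatorElement_def]
    exact ((hh.inv_right.mul_right hk).mul_right hh.inv_right.inv_right).mul_right hk.inv_right
  calc ⁅⁅g, h⁆, k⁆ = g * h * g⁻¹ * ⁅h⁻¹, k⁆ * (k * (g * h * g⁻¹)⁻¹ * k⁻¹) := by
        simp only [commutatorElement_def]; group
    _ = ⁅h⁻¹, k⁆ := by
        rw [hcomm.eq, hk.inv_left.symm.eq, mul_inv_cancel_right, mul_inv_cancel_right]

theorem commutatorElement_mul_mul_of_commute {a b r s : G} (hrb : Commute r b)
    (hsa : Commute s a) (hrs : Commute r s) : ⁅a * r, b * s⁆ = ⁅a, b⁆ := by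
  calc ⁅a * r, b * s⁆ = a * (r * (b * s) * r⁻¹) * a⁻¹ * (b * s)⁻¹ := by
        simp only [commutatorElement_def]; group
    _ = a * b * (s * a⁻¹ * s⁻¹) * b⁻¹ := by
        rw [(hrb.mul_right hrs).eq, mul_inv_cancel_right]; group
    _ = ⁅a, b⁆ := by rw [hsa.inv_right.eq, mul_inv_cancel_right, commutatorElement_def]

variable {H : Type*} [Group H] {f : H →* G} {T : Set H} {K C : Subgroup G}

theorem exists_mul_mem_of_mem_closure (hC : C ≤ Subgroup.centralizer f.range)
    (hT : ∀ t ∈ T, ∃ r ∈ C, f t * r ∈ K) {g : H} (hg : g ∈ Subgroup.closure T) :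
    ∃ r ∈ C, f g * r ∈ K := by
  have hcomm {r : G} (hr : r ∈ C) (h : H) : Commute r (f h) :=
    (Subgroup.mem_centralizer_iff.1 (hC hr) (f h) ⟨h, rfl⟩).symm
  induction hg using Subgroup.closure_induction with
  | mem t ht => exact hT t ht
  | one => exact ⟨1, C.one_mem, by simp⟩
  | mul g h _ _ ihg ihh =>
    obtain ⟨r, hr, hgr⟩ := ihg
    obtain ⟨s, hs, hhs⟩ := ihh
    refine ⟨r * s, C.mul_mem hr hs, ?_⟩
    rw [map_mul, ← (hcomm hr h).mul_mul_mul_comm]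
    exact K.mul_mem hgr hhs
  | inv g _ ih =>
    obtain ⟨r, hr, hgr⟩ := ih
    refine ⟨r⁻¹, C.inv_mem hr, ?_⟩
    rw [map_inv, ← mul_inv_rev, (hcomm hr g).eq]
    exact K.inv_mem hgr

theorem commutator_closure_le_comap_commutator [IsMulCommutative C]
    (hC : C ≤ Subgroup.centralizer f.range) (hT : ∀ t ∈ T, ∃ r ∈ C, f t * r ∈ K) :
    ⁅Subgroup.closure T, Subgroup.closure T⁆ ≤ (⁅K, K⁆ : Subgroup G).comap f := by
  have hcomm {r : G} (hr : r ∈ C) (h : H) : Commute r (f h) :=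
    (Subgroup.mem_centralizer_iff.1 (hC hr) (f h) ⟨h, rfl⟩).symm
  rw [Subgroup.commutator_le]
  intro g hg h hh
  obtain ⟨r, hr, hgr⟩ := exists_mul_mem_of_mem_closure hC hT hg
  obtain ⟨s, hs, hhs⟩ := exists_mul_mem_of_mem_closure hC hT hh
  rw [Subgroup.mem_comap, map_commutatorElement,
    ← commutatorElement_mul_mul_of_commute (hcomm hr h) (hcomm hs g)
      (setLike_mul_comm hr hs)]
  exact Subgroup.commutator_mem_commutator hgr hhs

end Commutator

section Tree

variable {X : Type*}

/-- The copy of a permutation of words that acts below the vertex `u` of the tree `X*` of finite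
words, sending `u ++ v` to `u ++ g v` and fixing every word that does not extend `u`. -/
noncomputable def atWord (u : List X) : Equiv.Perm (List X) →* Equiv.Perm (List X) :=
  Equiv.Perm.viaEmbeddingHom ⟨(u ++ ·), List.append_right_injective u⟩

/-- `s` carries the subtree below `u` to the subtree below `v`, acting there as `g`: in the
notation of self-similar groups, `s(u) = v` and `s|_u = g`. -/
def MapsSubtree (u v : List X) (s g : Equiv.Perm (List X)) : Prop :=
  ∀ w, s (u ++ w) = v ++ g w

theorem atWord_append_apply (u : List X) (g : Equiv.Perm (List X)) (v : List X) :
    atWord u g (u ++ v) = u ++ g v :=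
  g.viaEmbedding_apply ⟨(u ++ ·), List.append_right_injective u⟩ v

theorem atWord_apply_of_not_prefix {u w : List X} (h : ¬ u <+: w) (g : Equiv.Perm (List X)) :
    atWord u g w = w :=
  g.viaEmbedding_apply_of_notMem _ w h

theorem atWord_injective (u : List X) : Function.Injective (atWord u) :=
  Equiv.Perm.viaEmbeddingHom_injective _

namespace MapsSubtree

variable {u v w : List X} {s s' g g' : Equiv.Perm (List X)}

protected theorem one (u : List X) : MapsSubtree u u 1 1 := fun _ => rfl

protected theorem mul (h' : MapsSubtree v w s' g') (h : MapsSubtree u v s g) :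
    MapsSubtree u w (s' * s) (g' * g) := fun t => by
  rw [Equiv.Perm.mul_apply, h, h', Equiv.Perm.mul_apply]

protected theorem inv (h : MapsSubtree u v s g) : MapsSubtree v u s⁻¹ g⁻¹ := fun t => by
  rw [Equiv.Perm.inv_eq_iff_eq, h, Equiv.Perm.coe_inv, Equiv.apply_symm_apply]

protected theorem commutator (h : MapsSubtree u u s g) (h' : MapsSubtree u u s' g') :
    MapsSubtree u u ⁅s, s'⁆ ⁅g, g'⁆ :=
  ((h.mul h').mul h.inv).mul h'.inv

protected theorem append {u' v' : List X} {g'' : Equiv.Perm (List X)}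
    (h : MapsSubtree u v s g) (h' : MapsSubtree u' v' g g'') :
    MapsSubtree (u ++ u') (v ++ v') s g'' := fun t => by
  rw [List.append_assoc, h, h', List.append_assoc]

protected theorem unique (h : MapsSubtree u v s g) (h' : MapsSubtree u v s g') : g = g' :=
  Equiv.ext fun t => List.append_right_injective v ((h t).symm.trans (h' t))

theorem atWord_self (u : List X) (g : Equiv.Perm (List X)) : MapsSubtree u u (atWord u g) g :=
  atWord_append_apply u g

theorem atWord_of_incomparable (huv : ¬ u <+: v) (hvu : ¬ v <+: u) (g : Equiv.Perm (List X)) :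
    MapsSubtree v v (atWord u g) 1 := fun t =>
  atWord_apply_of_not_prefix
    (fun h => (List.prefix_or_prefix_of_prefix h (List.prefix_append v t)).elim huv hvu) g

theorem conj_atWord (h : MapsSubtree u v s g) (t : Equiv.Perm (List X)) :
    s * atWord u t * s⁻¹ = atWord v (g * t * g⁻¹) := by
  ext1 w
  by_cases hw : v <+: w
  · obtain ⟨w, rfl⟩ := hw
    exact ((h.mul (atWord_self u t)).mul h.inv w).trans (atWord_self v _ w).symm
  · have hsw : ¬ u <+: s⁻¹ w := by
      rintro ⟨w', hw'⟩
      exact hw ⟨g w', by rw [← h, hw', Equiv.Perm.coe_inv, Equiv.apply_symm_apply]⟩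
    rw [Equiv.Perm.mul_apply, Equiv.Perm.mul_apply, atWord_apply_of_not_prefix hsw,
      Equiv.Perm.coe_inv, Equiv.apply_symm_apply, atWord_apply_of_not_prefix hw]

end MapsSubtree

theorem commute_atWord_of_incomparable {u v : List X} (huv : ¬ u <+: v) (hvu : ¬ v <+: u)
    (s t : Equiv.Perm (List X)) : Commute (atWord u s) (atWord v t) := by
  rw [commute_iff_eq, ← mul_inv_eq_iff_eq_mul,
    (MapsSubtree.atWord_of_incomparable huv hvu s).conj_atWord, one_mul, inv_one, mul_one]

theorem atWord_nil (g : Equiv.Perm (List X)) : atWord [] g = g := by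
  ext1 w
  exact atWord_append_apply [] g w

theorem atWord_append (u v : List X) (g : Equiv.Perm (List X)) :
    atWord (u ++ v) g = atWord u (atWord v g) := by
  ext1 w
  by_cases hu : u <+: w
  · obtain ⟨w, rfl⟩ := hu
    rw [atWord_append_apply]
    by_cases hv : v <+: w
    · obtain ⟨w, rfl⟩ := hv
      rw [atWord_append_apply, ← List.append_assoc, atWord_append_apply, List.append_assoc]
    · rw [atWord_apply_of_not_prefix hv,
        atWord_apply_of_not_prefix (mt (List.prefix_append_right_inj u).1 hv)]
  · rw [atWord_apply_of_not_prefix hu,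
      atWord_apply_of_not_prefix fun h => hu ((List.prefix_append u v).trans h)]

/-- The automorphism group of the rooted tree `X*` of finite words, as the permutations that
commute with truncation of words. -/
def treeAut (X : Type*) : Subgroup (Equiv.Perm (List X)) where
  carrier := {g | ∀ v n, g (v.take n) = (g v).take n}
  one_mem' _ _ := rfl
  mul_mem' {g h} hg hh v n := by
    rw [Equiv.Perm.mul_apply, hh, hg, Equiv.Perm.mul_apply]
  inv_mem' {g} hg v n := by
    rw [Equiv.Perm.inv_eq_iff_eq, hg, Equiv.Perm.coe_inv, Equiv.apply_symm_apply]

theorem commute_conj_atWord_of_apply_ne {g : Equiv.Perm (List X)} (hg : g ∈ treeAut X)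
    {v : List X} (hv : g v ≠ v) (s t : Equiv.Perm (List X)) :
    Commute (g * atWord v s * g⁻¹) (atWord v t) := by
  refine Equiv.Perm.Disjoint.commute fun w => ?_
  by_cases hw : v <+: w
  · left
    have hgw : ¬ v <+: g⁻¹ w := by
      rw [List.prefix_iff_eq_take] at hw ⊢
      rw [← (treeAut X).inv_mem hg w, ← hw, Equiv.Perm.eq_inv_iff_eq]
      exact hv
    rw [Equiv.Perm.mul_apply, Equiv.Perm.mul_apply, atWord_apply_of_not_prefix hgw,
      Equiv.Perm.coe_inv, Equiv.apply_symm_apply]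
  · exact .inr (atWord_apply_of_not_prefix hw t)

/-- The restrictions to the subtree below `w` of the elements of `H` that fix the vertex `w`. -/
def vertexProjection (w : List X) (H : Subgroup (Equiv.Perm (List X))) :
    Subgroup (Equiv.Perm (List X)) where
  carrier := {g | ∃ s ∈ H, MapsSubtree w w s g}
  one_mem' := ⟨1, H.one_mem, .one w⟩
  mul_mem' := by
    rintro _ _ ⟨s, hs, hsg⟩ ⟨s', hs', hsg'⟩
    exact ⟨s * s', H.mul_mem hs hs', hsg.mul hsg'⟩
  inv_mem' := by
    rintro _ ⟨s, hs, hsg⟩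
    exact ⟨s⁻¹, H.inv_mem hs, hsg.inv⟩

section VertexProjection

variable {G H L D : Subgroup (Equiv.Perm (List X))} {v w : List X}

theorem vertexProjection_mono (hHL : H ≤ L) : vertexProjection w H ≤ vertexProjection w L :=
  fun _ ⟨s, hs, hsg⟩ => ⟨s, hHL hs, hsg⟩

theorem commutator_vertexProjection_le :
    ⁅vertexProjection w H, vertexProjection w L⁆ ≤ vertexProjection w ⁅H, L⁆ := by
  rw [Subgroup.commutator_le]
  rintro _ ⟨s, hs, hsg⟩ _ ⟨t, ht, htg⟩
  exact ⟨⁅s, t⁆, Subgroup.commutator_mem_commutator hs ht, hsg.commutator htg⟩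

theorem vertexProjection_vertexProjection_le :
    vertexProjection w (vertexProjection v H) ≤ vertexProjection (v ++ w) H := by
  rintro _ ⟨_, ⟨s, hs, hsg⟩, hg⟩
  exact ⟨s, hs, hsg.append hg⟩

theorem le_vertexProjection_of_map_atWord_le (h : H.map (atWord w) ≤ L) :
    H ≤ vertexProjection w L :=
  fun g hg => ⟨atWord w g, h ⟨g, hg, rfl⟩, .atWord_self w g⟩

theorem isSection_of_le_vertexProjection (h : G ≤ vertexProjection w H) : IsSection G H := by
  let M : Subgroup (H × G) :=
    { carrier := {q | MapsSubtree w w q.1 q.2}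
      one_mem' := .one w
      mul_mem' := fun hq hr => hq.mul hr
      inv_mem' := fun hq => hq.inv }
  refine .of_injective_of_surjective ((MonoidHom.fst H G).comp M.subtype) ?_
    ((MonoidHom.snd H G).comp M.subtype) ?_
  · rintro ⟨⟨s, g⟩, hsg⟩ ⟨⟨s', g'⟩, hsg'⟩ (rfl : s = s')
    exact Subtype.ext (Prod.ext rfl (Subtype.ext (hsg.unique hsg')))
  · rintro ⟨g, hg⟩
    obtain ⟨s, hs, hsg⟩ := h hg
    exact ⟨⟨(⟨s, hs⟩, ⟨g, hg⟩), hsg⟩, rfl⟩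

/-- If `g` moves `v` then `⁅⁅g, atWord v s⁻¹⁆, atWord v t⁆ = atWord v ⁅s, t⁆`, since conjugation by
`g` carries `atWord v s⁻¹` to an element supported off the subtree below `v`. -/
theorem map_atWord_commutator_le_of_apply_ne (hG : G ≤ treeAut X) (hD : D.map (atWord v) ≤ G)
    (hH : H ≤ G) (hHG : ⁅H, G⁆ ≤ H) {g : Equiv.Perm (List X)} (hg : g ∈ H) (hv : g v ≠ v) :
    (⁅D, D⁆ : Subgroup _).map (atWord v) ≤ H := by
  rw [Subgroup.map_le_iff_le_comap, Subgroup.commutator_le]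
  intro s hs t ht
  have hcomm := commute_conj_atWord_of_apply_ne (hG (hH hg)) hv s⁻¹
  rw [Subgroup.mem_comap, map_commutatorElement, ← inv_inv (atWord v s), ← map_inv,
    ← commutatorElement_commutatorElement_of_commute (hcomm s⁻¹) (hcomm t)]
  refine hHG (Subgroup.commutator_mem_commutator (hHG (Subgroup.commutator_mem_commutator hg ?_))
    (hD ⟨t, ht, rfl⟩))
  exact hD ⟨s⁻¹, D.inv_mem hs, rfl⟩

theorem isSection_of_normal_of_le_vertexProjection (hG : G ≤ treeAut X)
    (hD : ∀ v, D.map (atWord v) ≤ G) (hGD : G ≤ vertexProjection w ⁅D, D⁆) (N : Subgroup G)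
    (hN : N.Normal) (hN_ne : N ≠ ⊥) : IsSection G N := by
  obtain ⟨g, hg, hg_ne⟩ := N.bot_or_exists_ne_one.resolve_left hN_ne
  obtain ⟨v, hv⟩ : ∃ v, (g : Equiv.Perm (List X)) v ≠ v := by
    contrapose! hg_ne
    exact Subtype.ext (Equiv.ext hg_ne)
  let H := N.map G.subtype
  have hHG : ⁅H, G⁆ ≤ H := by
    calc ⁅H, G⁆ = ⁅N.map G.subtype, (⊤ : Subgroup G).map G.subtype⁆ := by
          rw [← MonoidHom.range_eq_map, G.range_subtype]
      _ = (⁅N, ⊤⁆ : Subgroup G).map G.subtype := (Subgroup.map_commutator _ _ _).symm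
      _ ≤ H := Subgroup.map_mono (Subgroup.commutator_le_left N ⊤)
  have hDH : (⁅D, D⁆ : Subgroup _).map (atWord v) ≤ H :=
    map_atWord_commutator_le_of_apply_ne hG (hD v) (Subgroup.map_subtype_le N) hHG ⟨g, hg, rfl⟩ hv
  have hGH : G ≤ vertexProjection (v ++ w) H :=
    calc G ≤ vertexProjection w ⁅D, D⁆ := hGD
      _ ≤ vertexProjection w (vertexProjection v H) :=
          vertexProjection_mono (le_vertexProjection_of_map_atWord_le hDH)
      _ ≤ vertexProjection (v ++ w) H := vertexProjection_vertexProjection_le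
  let e := N.equivMapOfInjective G.subtype G.subtype_injective
  exact (isSection_of_le_vertexProjection hGH).trans
    (.of_injective e.symm.toMonoidHom e.symm.injective)

end VertexProjection

end Tree

section Letters

variable {X : Type*} {z z' : X}

theorem not_singleton_prefix_singleton (h : z ≠ z') : ¬ [z] <+: [z'] := by
  simpa using h

theorem MapsSubtree.atWord_singleton_of_ne (h : z ≠ z') (g : Equiv.Perm (List X)) :
    MapsSubtree [z'] [z'] (atWord [z] g) 1 :=
  .atWord_of_incomparable (not_singleton_prefix_singleton h)
    (not_singleton_prefix_singleton h.symm) g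

theorem commute_atWord_singleton_of_ne (h : z ≠ z') (s t : Equiv.Perm (List X)) :
    Commute (atWord [z] s) (atWord [z'] t) :=
  commute_atWord_of_incomparable (not_singleton_prefix_singleton h)
    (not_singleton_prefix_singleton h.symm) s t

theorem atWord_singleton_apply_nil (z : X) (g : Equiv.Perm (List X)) : atWord [z] g [] = [] :=
  atWord_apply_of_not_prefix (by simp) g

theorem eq_of_forall_mapsSubtree_singleton {s s' : Equiv.Perm (List X)} (hnil : s [] = s' [])
    (h : ∀ z, ∃ v g, MapsSubtree [z] v s g ∧ MapsSubtree [z] v s' g) : s = s' := by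
  ext1 w
  rcases w with _ | ⟨z, w⟩
  · exact hnil
  · obtain ⟨v, g, hs, hs'⟩ := h z
    exact (hs w).trans (hs' w).symm

end Letters

section KneadingGroup

variable (k p : ℕ) (x y : ℕ → ℤ)

theorem bijective_kTrans_fst (s : KState) :
    Function.Bijective fun z => (KTrans k p x y s z).1 := by
  by_cases hs : s = .a 0
  · subst hs
    exact (Equiv.addRight (1 : ℤ)).bijective
  · convert Function.bijective_id using 2 with z
    unfold KTrans
    split <;> grind

theorem bijective_stateAct (s : KState) : Function.Bijective (stateAct k p x y s) := by
  constructor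
  · intro v w h
    induction v generalizing s w with
    | nil => cases w with
      | nil => rfl
      | cons => simp [stateAct] at h
    | cons z v ih => cases w with
      | nil => simp [stateAct] at h
      | cons z' w =>
        obtain ⟨hz, hv⟩ := List.cons_eq_cons.1 h
        obtain rfl := (bijective_kTrans_fst k p x y s).injective hz
        rw [ih _ hv]
  · intro w
    induction w generalizing s with
    | nil => exact ⟨[], rfl⟩
    | cons z w ih =>
      obtain ⟨z, rfl⟩ := (bijective_kTrans_fst k p x y s).surjective z
      obtain ⟨v, rfl⟩ := ih (KTrans k p x y s z).2
      exact ⟨z :: v, rfl⟩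

/-- The automorphism of the tree `ℤ*` induced by a state of the kneading automaton. -/
noncomputable def statePerm (s : KState) : Equiv.Perm (List ℤ) :=
  Equiv.ofBijective (stateAct k p x y s) (bijective_stateAct k p x y s)

theorem mapsSubtree_statePerm (s : KState) (z : ℤ) :
    MapsSubtree [z] [(KTrans k p x y s z).1] (statePerm k p x y s)
      (statePerm k p x y (KTrans k p x y s z).2) :=
  fun _ => rfl

theorem statePerm_id : statePerm k p x y .id = 1 := by
  ext1 v
  induction v with
  | nil => rfl
  | cons z v ih => exact congrArg (z :: ·) ih

theorem sGens_eq_image_statePerm : SGens k p x y = statePerm k p x y '' {s | IsGen k p s} := by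
  ext g
  constructor
  · rintro ⟨s, hs, hg⟩
    exact ⟨s, hs, DFunLike.coe_injective hg.symm⟩
  · rintro ⟨s, hs, rfl⟩
    exact ⟨s, hs, rfl⟩

theorem finite_setOf_isGen : {s | IsGen k p s}.Finite := by
  refine (((Set.finite_Iio k).image KState.a).union ((Set.finite_Iio p).image KState.b)).subset ?_
  rintro s (⟨i, hi, rfl⟩ | ⟨j, hj, rfl⟩)
  · exact .inl ⟨i, hi, rfl⟩
  · exact .inr ⟨j, hj, rfl⟩

instance : Group.FG (Kgroup k p x y) :=
  have : Finite (SGens k p x y) :=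
    sGens_eq_image_statePerm k p x y ▸ (finite_setOf_isGen k p).image _
  Group.closure_finite_fg _

variable {k p x y}

theorem statePerm_a_mem_kgroup {i : ℕ} (hi : i < k) : statePerm k p x y (.a i) ∈ Kgroup k p x y :=
  Subgroup.subset_closure ⟨_, .inl ⟨i, hi, rfl⟩, rfl⟩

theorem statePerm_b_mem_kgroup {j : ℕ} (hj : j < p) : statePerm k p x y (.b j) ∈ Kgroup k p x y :=
  Subgroup.subset_closure ⟨_, .inr ⟨j, hj, rfl⟩, rfl⟩

theorem stateAct_take (s : KState) (v : List ℤ) (n : ℕ) :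
    stateAct k p x y s (v.take n) = (stateAct k p x y s v).take n := by
  induction v generalizing s n with
  | nil => simp [stateAct]
  | cons z v ih =>
    cases n with
    | zero => rfl
    | succ n => exact congrArg _ (ih _ n)

theorem kgroup_le_treeAut : Kgroup k p x y ≤ treeAut ℤ := by
  rw [Kgroup, sGens_eq_image_statePerm, Subgroup.closure_le]
  rintro _ ⟨s, -, rfl⟩
  exact stateAct_take s

theorem statePerm_eq_atWord {s s' : KState} {z₀ : ℤ}
    (h : ∀ z, KTrans k p x y s z = if z = z₀ then (z, s') else (z, .id)) :
    statePerm k p x y s = atWord [z₀] (statePerm k p x y s') := by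
  refine eq_of_forall_mapsSubtree_singleton (atWord_singleton_apply_nil _ _).symm fun z =>
    ⟨_, _, mapsSubtree_statePerm k p x y s z, ?_⟩
  rw [h]
  split_ifs with hz
  · subst hz
    exact .atWord_self _ _
  · rw [statePerm_id]
    exact .atWord_singleton_of_ne (Ne.symm hz) _

theorem statePerm_a_succ (i : ℕ) :
    statePerm k p x y (.a (i + 1)) = atWord [x i] (statePerm k p x y (.a i)) :=
  statePerm_eq_atWord fun _ => rfl

theorem statePerm_b_succ (j : ℕ) :
    statePerm k p x y (.b (j + 1)) = atWord [y j] (statePerm k p x y (.b j)) :=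
  statePerm_eq_atWord fun _ => rfl

theorem statePerm_b_zero_cons_x (v : List ℤ) :
    statePerm k p x y (.b 0) (x (k - 1) :: v) =
      x (k - 1) :: statePerm k p x y (.a (k - 1)) v := by
  simpa only [KTrans, if_true] using! mapsSubtree_statePerm k p x y (.b 0) (x (k - 1)) v

theorem statePerm_b_zero_cons_of_ne {z : ℤ} (hx : z ≠ x (k - 1)) (hy : z ≠ y (p - 1))
    (v : List ℤ) : statePerm k p x y (.b 0) (z :: v) = z :: v := by
  simpa only [KTrans, if_neg hx, if_neg hy, statePerm_id] using!
    mapsSubtree_statePerm k p x y (.b 0) z v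

theorem statePerm_b_zero (hxy : x (k - 1) ≠ y (p - 1)) :
    statePerm k p x y (.b 0) = atWord [x (k - 1)] (statePerm k p x y (.a (k - 1))) *
      atWord [y (p - 1)] (statePerm k p x y (.b (p - 1))) := by
  refine eq_of_forall_mapsSubtree_singleton ?_ fun z =>
    ⟨_, _, mapsSubtree_statePerm k p x y _ z, ?_⟩
  · rw [Equiv.Perm.mul_apply, atWord_singleton_apply_nil, atWord_singleton_apply_nil]
    rfl
  simp only [KTrans]
  split_ifs with hx hy
  · subst hx
    exact .mul (.atWord_self _ _) (.atWord_singleton_of_ne hxy.symm _)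
  · subst hy
    exact .mul (.atWord_singleton_of_ne hxy _) (.atWord_self _ _)
  · rw [statePerm_id]
    exact .mul (.atWord_singleton_of_ne (Ne.symm hx) _) (.atWord_singleton_of_ne (Ne.symm hy) _)

theorem mapsSubtree_zpow_statePerm_a_zero (n z : ℤ) :
    MapsSubtree [z] [z + n] (statePerm k p x y (.a 0) ^ n) 1 := by
  have hone (z : ℤ) : MapsSubtree [z] [z + 1] (statePerm k p x y (.a 0)) 1 :=
    statePerm_id k p x y ▸ mapsSubtree_statePerm k p x y (.a 0) z
  induction n generalizing z with
  | zero => simpa only [add_zero, zpow_zero] using MapsSubtree.one [z]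
  | succ n ih =>
    have h := (ih (z + 1)).mul (hone z)
    rwa [mul_one, add_assoc, add_comm 1, ← zpow_add_one] at h
  | pred n ih =>
    have h := (ih (z - 1)).mul (sub_add_cancel z 1 ▸ (hone (z - 1)).inv)
    rwa [inv_one, mul_one, sub_add_eq_add_sub, add_sub_assoc, ← zpow_sub_one] at h

theorem zpow_statePerm_a_zero_conj_atWord (n z : ℤ) (g : Equiv.Perm (List ℤ)) :
    statePerm k p x y (.a 0) ^ n * atWord [z] g * (statePerm k p x y (.a 0) ^ n)⁻¹ =
      atWord [z + n] g := by
  rw [(mapsSubtree_zpow_statePerm_a_zero n z).conj_atWord, one_mul, inv_one, mul_one]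

theorem zpow_statePerm_a_zero_conj_mem_kgroup (hk : 1 ≤ k) (n : ℤ) {g : Equiv.Perm (List ℤ)}
    (hg : g ∈ Kgroup k p x y) :
    statePerm k p x y (.a 0) ^ n * g * (statePerm k p x y (.a 0) ^ n)⁻¹ ∈ Kgroup k p x y :=
  have hσ := Subgroup.zpow_mem _ (statePerm_a_mem_kgroup hk) n
  mul_mem (mul_mem hσ hg) (inv_mem hσ)

theorem atWord_statePerm_a_mem_kgroup {i : ℕ} (hi : i + 1 < k) (z : ℤ) :
    atWord [z] (statePerm k p x y (.a i)) ∈ Kgroup k p x y := by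
  rw [← add_sub_cancel (x i) z, ← zpow_statePerm_a_zero_conj_atWord, ← statePerm_a_succ]
  exact zpow_statePerm_a_zero_conj_mem_kgroup (by lia) _ (statePerm_a_mem_kgroup hi)

theorem atWord_statePerm_b_mem_kgroup (hk : 1 ≤ k) {j : ℕ} (hj : j + 1 < p) (z : ℤ) :
    atWord [z] (statePerm k p x y (.b j)) ∈ Kgroup k p x y := by
  rw [← add_sub_cancel (y j) z, ← zpow_statePerm_a_zero_conj_atWord, ← statePerm_b_succ]
  exact zpow_statePerm_a_zero_conj_mem_kgroup hk _ (statePerm_b_mem_kgroup hj)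

variable (k p x y) in
/-- The signed distance from `x_k` to `y_p`, the two letters at which `b₁` has a nontrivial
restriction. -/
def letterGap : ℤ := y (p - 1) - x (k - 1)

theorem letterGap_ne_zero (hxy : x (k - 1) ≠ y (p - 1)) : letterGap k p x y ≠ 0 :=
  sub_ne_zero.2 hxy.symm

theorem atWord_statePerm_mul_mem_kgroup (hk : 1 ≤ k) (hp : 1 ≤ p)
    (hxy : x (k - 1) ≠ y (p - 1)) (z : ℤ) :
    atWord [z] (statePerm k p x y (.a (k - 1))) *
      atWord [z + letterGap k p x y] (statePerm k p x y (.b (p - 1))) ∈ Kgroup k p x y := by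
  have hconj : statePerm k p x y (.a 0) ^ (z - x (k - 1)) * statePerm k p x y (.b 0) *
        (statePerm k p x y (.a 0) ^ (z - x (k - 1)))⁻¹ =
      atWord [z] (statePerm k p x y (.a (k - 1))) *
        atWord [z + letterGap k p x y] (statePerm k p x y (.b (p - 1))) := by
    rw [statePerm_b_zero hxy, ← conj_mul, zpow_statePerm_a_zero_conj_atWord,
      zpow_statePerm_a_zero_conj_atWord, add_sub_cancel, letterGap, add_sub_left_comm]
  rw [← hconj]
  exact zpow_statePerm_a_zero_conj_mem_kgroup hk _ (statePerm_b_mem_kgroup hp)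

variable (k p x y) in
/-- The elements that accompany copies of `K` below the letter `z`: an element of `K` acts below
`z` as prescribed up to a factor from this group, which lives below the letters `z ± letterGap`. -/
def companion (z : ℤ) : Subgroup (Equiv.Perm (List ℤ)) :=
  Subgroup.closure {atWord [z + letterGap k p x y] (statePerm k p x y (.b (p - 1))),
    atWord [z - letterGap k p x y] (statePerm k p x y (.a (k - 1)))}

theorem isMulCommutative_companion (hxy : x (k - 1) ≠ y (p - 1)) (z : ℤ) :
    IsMulCommutative (companion k p x y z) := by
  have hne : z + letterGap k p x y ≠ z - letterGap k p x y := by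
    have := letterGap_ne_zero hxy
    lia
  refine Subgroup.isMulCommutative_closure ?_
  rintro _ (rfl | rfl) _ (rfl | rfl)
  · rfl
  · exact commute_atWord_singleton_of_ne hne _ _
  · exact commute_atWord_singleton_of_ne hne.symm _ _
  · rfl

theorem companion_le_centralizer (hxy : x (k - 1) ≠ y (p - 1)) (z : ℤ) :
    companion k p x y z ≤ Subgroup.centralizer (atWord [z]).range := by
  have hd := letterGap_ne_zero hxy
  rw [companion, Subgroup.closure_le]
  rintro _ (rfl | rfl) _ ⟨g, rfl⟩
  · exact commute_atWord_singleton_of_ne (by lia) _ _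
  · exact commute_atWord_singleton_of_ne (by lia) _ _

theorem mapsSubtree_of_mem_companion {z z' : ℤ} (hadd : z + letterGap k p x y ≠ z')
    (hsub : z - letterGap k p x y ≠ z') {r : Equiv.Perm (List ℤ)}
    (hr : r ∈ companion k p x y z) : MapsSubtree [z'] [z'] r 1 := by
  induction hr using Subgroup.closure_induction with
  | mem r hr =>
    rcases hr with rfl | rfl
    · exact .atWord_singleton_of_ne hadd _
    · exact .atWord_singleton_of_ne hsub _
  | one => exact .one _
  | mul r s _ _ ihr ihs => simpa only [mul_one] using ihr.mul ihs
  | inv r _ ih => simpa only [inv_one] using ih.inv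

theorem exists_companion_of_mem_sGens (hk : 1 ≤ k) (hp : 1 ≤ p) (hxy : x (k - 1) ≠ y (p - 1))
    (z : ℤ) {g : Equiv.Perm (List ℤ)} (hg : g ∈ SGens k p x y) :
    ∃ r ∈ companion k p x y z, atWord [z] g * r ∈ Kgroup k p x y := by
  rw [sGens_eq_image_statePerm] at hg
  obtain ⟨_, ⟨i, hi, rfl⟩ | ⟨j, hj, rfl⟩, rfl⟩ := hg
  · rcases (Nat.succ_le_of_lt hi).lt_or_eq with hi | rfl
    · exact ⟨1, one_mem _, by simpa only [mul_one] using atWord_statePerm_a_mem_kgroup hi z⟩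
    · exact ⟨_, Subgroup.subset_closure (.inl rfl), atWord_statePerm_mul_mem_kgroup hk hp hxy z⟩
  · rcases (Nat.succ_le_of_lt hj).lt_or_eq with hj | rfl
    · exact ⟨1, one_mem _, by simpa only [mul_one] using atWord_statePerm_b_mem_kgroup hk hj z⟩
    · refine ⟨_, Subgroup.subset_closure (.inr rfl), ?_⟩
      have h := atWord_statePerm_mul_mem_kgroup hk hp hxy (z - letterGap k (j + 1) x y)
      have hne : z ≠ z - letterGap k (j + 1) x y := by
        have := letterGap_ne_zero hxy
        lia
      rw [sub_add_cancel] at h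
      rwa [(commute_atWord_singleton_of_ne hne _ _).eq]

theorem exists_companion (hk : 1 ≤ k) (hp : 1 ≤ p) (hxy : x (k - 1) ≠ y (p - 1)) (z : ℤ)
    {g : Equiv.Perm (List ℤ)} (hg : g ∈ Kgroup k p x y) :
    ∃ r ∈ companion k p x y z, atWord [z] g * r ∈ Kgroup k p x y :=
  exists_mul_mem_of_mem_closure (companion_le_centralizer hxy z)
    (fun _ => exists_companion_of_mem_sGens hk hp hxy z) hg

theorem map_atWord_commutator_kgroup_le (hk : 1 ≤ k) (hp : 1 ≤ p)
    (hxy : x (k - 1) ≠ y (p - 1)) (v : List ℤ) :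
    (⁅Kgroup k p x y, Kgroup k p x y⁆ : Subgroup _).map (atWord v) ≤
      ⁅Kgroup k p x y, Kgroup k p x y⁆ := by
  rw [Subgroup.map_le_iff_le_comap]
  induction v with
  | nil => exact fun g hg => by rwa [Subgroup.mem_comap, atWord_nil]
  | cons z v ih =>
    intro g hg
    have := isMulCommutative_companion hxy z
    rw [Subgroup.mem_comap, ← List.singleton_append, atWord_append]
    exact commutator_closure_le_comap_commutator (companion_le_centralizer hxy z)
      (fun _ => exists_companion_of_mem_sGens hk hp hxy z) (ih hg)

/-- Translating by twice the gap moves the letter `z` off itself and off the two letters of its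
companion, so the commutator with this translation keeps the restriction at `z`. -/
theorem kgroup_le_vertexProjection_commutator (hk : 1 ≤ k) (hp : 1 ≤ p)
    (hxy : x (k - 1) ≠ y (p - 1)) (z : ℤ) :
    Kgroup k p x y ≤ vertexProjection [z] ⁅Kgroup k p x y, Kgroup k p x y⁆ := by
  intro g hg
  have hd := letterGap_ne_zero hxy
  let t := statePerm k p x y (.a 0) ^ (2 * letterGap k p x y)
  have ht : t ∈ Kgroup k p x y := Subgroup.zpow_mem _ (statePerm_a_mem_kgroup hk) _
  obtain ⟨z', ht_maps, hz'⟩ : ∃ z', MapsSubtree [z'] [z] t 1 ∧ z' = z - 2 * letterGap k p x y := by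
    refine ⟨_, ?_, rfl⟩
    simpa only [sub_add_cancel] using
      mapsSubtree_zpow_statePerm_a_zero (2 * letterGap k p x y) (z - 2 * letterGap k p x y)
  obtain ⟨r, hr, hgr⟩ := exists_companion hk hp hxy z hg
  have hz_maps : MapsSubtree [z] [z] (atWord [z] g * r) g := by
    simpa only [mul_one] using
      (MapsSubtree.atWord_self [z] g).mul (mapsSubtree_of_mem_companion (by lia) (by lia) hr)
  have hz'_maps : MapsSubtree [z'] [z'] (atWord [z] g * r) 1 := by
    simpa only [mul_one] using (MapsSubtree.atWord_singleton_of_ne (by lia) g).mul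
      (mapsSubtree_of_mem_companion (by lia) (by lia) hr)
  refine ⟨⁅atWord [z] g * r, t⁆, Subgroup.commutator_mem_commutator hgr ht, ?_⟩
  have h := hz_maps.mul ((ht_maps.mul hz'_maps.inv).mul ht_maps.inv)
  simpa only [commutatorElement_def, inv_one, mul_one, mul_assoc] using h

theorem kgroup_le_vertexProjection_commutator_commutator (hk : 1 ≤ k) (hp : 1 ≤ p)
    (hxy : x (k - 1) ≠ y (p - 1)) :
    Kgroup k p x y ≤ vertexProjection [0, 0]
      ⁅⁅Kgroup k p x y, Kgroup k p x y⁆, ⁅Kgroup k p x y, Kgroup k p x y⁆⁆ := by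
  have hK := kgroup_le_vertexProjection_commutator hk hp hxy 0
  calc Kgroup k p x y
      ≤ vertexProjection [0] ⁅Kgroup k p x y, Kgroup k p x y⁆ := hK
    _ ≤ vertexProjection [0] (vertexProjection [0] _) := vertexProjection_mono
        ((Subgroup.commutator_mono hK hK).trans commutator_vertexProjection_le)
    _ ≤ vertexProjection [0, 0] _ := vertexProjection_vertexProjection_le

theorem statePerm_a_ne_one (i : ℕ) : statePerm k p x y (.a i) ≠ 1 := by
  induction i with
  | zero => exact fun h => by simpa [statePerm, stateAct, KTrans] using DFunLike.congr_fun h [0]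
  | succ i ih =>
    rw [statePerm_a_succ]
    exact (map_ne_one_iff _ (atWord_injective _)).2 ih

theorem exists_injective_freeMonoid_lift_kgroup (hk : 1 ≤ k) (hp : 1 ≤ p)
    (hxy : x (k - 1) ≠ y (p - 1)) :
    ∃ f : Bool → Kgroup k p x y, Function.Injective (FreeMonoid.lift f) := by
  have hd := letterGap_ne_zero hxy
  obtain ⟨v, hv⟩ : ∃ v, statePerm k p x y (.a (k - 1)) v ≠ v := by
    by_contra! h
    exact statePerm_a_ne_one _ (Equiv.ext h)
  let σ : Kgroup k p x y := ⟨_, statePerm_a_mem_kgroup hk⟩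
  let c : Kgroup k p x y := ⟨_, statePerm_b_mem_kgroup hp⟩
  refine ⟨_, injective_freeMonoid_lift_of_fixes_backward_orbit (t := σ ^ letterGap k p x y)
    (c := c) (ω := x (k - 1) :: v) (fun n hn => ?_) ?_⟩
  · have hbackward : ((σ ^ letterGap k p x y) ^ n)⁻¹ • (x (k - 1) :: v) =
        (x (k - 1) - letterGap k p x y * n) :: v := by
      rw [← zpow_natCast, ← zpow_mul, ← zpow_neg]
      exact mapsSubtree_zpow_statePerm_a_zero (-(letterGap k p x y * n)) (x (k - 1)) v
    rw [hbackward]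
    refine statePerm_b_zero_cons_of_ne ?_ ?_ v
    · simpa using ⟨hd, hn⟩
    · have hgap : letterGap k p x y * (n + 1) ≠ 0 := mul_ne_zero hd (by lia)
      contrapose! hgap
      rw [letterGap] at hgap ⊢
      linear_combination -hgap
  · exact fun h => hv (List.cons_injective ((statePerm_b_zero_cons_x v).symm.trans h))

end KneadingGroup

theorem stmt13 (k p : ℕ) (hk : 1 ≤ k) (hp : 1 ≤ p) (x y : ℕ → ℤ)
    (hxy : x (k - 1) ≠ y (p - 1)) :
    ¬ IsElemSubexpAmenable ↥(Kgroup k p x y) := by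
  obtain ⟨f, hf⟩ := exists_injective_freeMonoid_lift_kgroup hk hp hxy
  exact not_isElemSubexpAmenable_of_isSection_normal hf <|
    isSection_of_normal_of_le_vertexProjection kgroup_le_treeAut
      (fun v => (map_atWord_commutator_kgroup_le hk hp hxy v).trans
        (Subgroup.commutator_le_self _))
      (kgroup_le_vertexProjection_commutator_commutator hk hp hxy)
end

section
/- The kneading group K is left-orderable: there exists a linear order ≤ on K such that for all g, a, b ∈ K, a ≤ b implies g·a ≤ g·b. -/
/-!
Order `ℤ*` lexicographically. Each state either fixes every first letter or adds `1` to every first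
letter, so it acts on words by a strictly increasing map, and hence so does every element of the
kneading group.
A group acting faithfully on a linear order by increasing maps is left-orderable: well-order the
points, and compare two elements at the first point on which they differ.
-/

section LeftOrderable

/-- Left-orderability, witnessed by an unbundled non-strict order. -/
def IsLeftOrderable (G : Type*) [Mul G] : Prop :=
  ∃ le : G → G → Prop, IsLinearOrder G le ∧ ∀ g a b : G, le a b → le (g * a) (g * b)

theorem strictMono_toLex_comp {ι α β : Type*} [LinearOrder ι] [PartialOrder α] [PartialOrder β]
    {f : α → β} (hf : StrictMono f) :
    StrictMono fun u : Lex (ι → α) => toLex (f ∘ ofLex u) := by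
  rintro u v ⟨i, heq, hlt⟩
  exact ⟨i, fun j hj => congrArg f (heq j hj), hf hlt⟩

variable {ι G α : Type*}

/-- The images under `g` of a family of points `e`, as an element of the lexicographic power of `α`.
Comparing these tuples orders the acting elements by the first point on which they differ. -/
def orbitLex [SMul G α] (e : ι → α) (g : G) : Lex (ι → α) :=
  toLex fun i => g • e i

theorem orbitLex_injective [SMul G α] [FaithfulSMul G α] {e : ι → α}
    (he : Function.Surjective e) : Function.Injective (orbitLex e : G → Lex (ι → α)) :=
  fun _ _ h => FaithfulSMul.eq_of_smul_eq_smul (he.forall.mpr (congrFun (congrArg ofLex h)))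

theorem orbitLex_mul [Semigroup G] [SemigroupAction G α] (e : ι → α) (g a : G) :
    orbitLex e (g * a) = toLex ((g • ·) ∘ ofLex (orbitLex e a)) :=
  congrArg toLex (funext fun i => mul_smul g a (e i))

theorem orbitLex_mul_le_orbitLex_mul [LinearOrder ι] [PartialOrder α] [Semigroup G]
    [SemigroupAction G α] (e : ι → α) {g a b : G} (hg : StrictMono (g • · : α → α))
    (hab : orbitLex e a ≤ orbitLex e b) : orbitLex e (g * a) ≤ orbitLex e (g * b) := by
  rw [orbitLex_mul, orbitLex_mul]
  exact (strictMono_toLex_comp hg).monotone hab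

theorem isLeftOrderable_of_strictMono_smul [LinearOrder α] [Semigroup G] [SemigroupAction G α]
    [FaithfulSMul G α] (hG : ∀ g : G, StrictMono (g • · : α → α)) : IsLeftOrderable G := by
  obtain ⟨e⟩ : Nonempty ((Cardinal.mk α).ord.ToType ≃ α) :=
    Cardinal.eq.mp (Cardinal.mk_ord_toType _)
  exact ⟨Function.onFun (· ≤ ·) (orbitLex e),
    (orbitLex_injective e.surjective).isLinearOrder_onFun (r := (· ≤ ·)),
    fun g _ _ => orbitLex_mul_le_orbitLex_mul e (hG g)⟩

end LeftOrderable

theorem strictMono_of_mem_closure {α : Type*} [LinearOrder α] {S : Set (Equiv.Perm α)}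
    (hS : ∀ g ∈ S, StrictMono g) {g : Equiv.Perm α} (hg : g ∈ Subgroup.closure S) :
    StrictMono g := by
  induction hg using Subgroup.closure_induction with
  | mem g hg => exact hS g hg
  | one => exact strictMono_id
  | mul g h _ _ ihg ihh => exact ihg.comp ihh
  | inv g _ ih => exact fun v w hvw => ih.lt_iff_lt.mp (by simpa using hvw)

section KneadingAutomaton

variable (k p : ℕ) (x y : ℕ → ℤ)

theorem KTrans_fst (s : KState) (z : ℤ) :
    (KTrans k p x y s z).1 = if s = .a 0 then z + 1 else z := by
  rcases s with (_ | _) | (_ | _) | _ <;> grind [KTrans]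

theorem KTrans_fst_strictMono (s : KState) : StrictMono fun z => (KTrans k p x y s z).1 := by
  intro z w hzw
  simp only [KTrans_fst]
  split_ifs <;> omega

theorem stateAct_strictMono (s : KState) : StrictMono (stateAct k p x y s) := by
  intro v w hvw
  induction v generalizing s w with
  | nil =>
    cases w with
    | nil => exact absurd hvw (lt_irrefl _)
    | cons => exact List.nil_lt_cons _ _
  | cons z v ih =>
    cases w with
    | nil => exact absurd hvw (List.not_lt_nil _)
    | cons z' w =>
      rw [stateAct, stateAct, List.cons_lt_cons_iff]
      rcases List.cons_lt_cons_iff.mp hvw with hz | ⟨rfl, htail⟩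
      · exact Or.inl (KTrans_fst_strictMono k p x y s hz)
      · exact Or.inr ⟨rfl, ih _ htail⟩

theorem strictMono_of_mem_Kgroup {g : Equiv.Perm (List ℤ)} (hg : g ∈ Kgroup k p x y) :
    StrictMono g := by
  refine strictMono_of_mem_closure ?_ hg
  rintro g ⟨s, -, hs⟩
  exact hs ▸ stateAct_strictMono k p x y s

end KneadingAutomaton

theorem stmt14 (k p : ℕ) (hk : 1 ≤ k) (hp : 1 ≤ p) (x y : ℕ → ℤ)
    (hxy : x (k - 1) ≠ y (p - 1)) :
    ∃ le : ↥(Kgroup k p x y) → ↥(Kgroup k p x y) → Prop,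
      IsLinearOrder ↥(Kgroup k p x y) le ∧
      ∀ g a b : ↥(Kgroup k p x y), le a b → le (g * a) (g * b) := by
  exact isLeftOrderable_of_strictMono_smul (α := List ℤ)
    fun g => strictMono_of_mem_Kgroup k p x y g.property
end

section
/- The kneading group K is residually solvable: for every g ∈ K with g ≠ 1 there exists a solvable group G and a group homomorphism φ : K → G with φ(g) ≠ 1. -/
/-!
Every state of the kneading automaton permutes the first letter by a translation of `ℤ`, so `K` lies
in the group of tree automorphisms that act at each vertex by a translation. In that group, two
elements that fix level `n` of the tree move the children of each vertex of level `n` by commuting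
translations; hence their commutator fixes level `n + 1`, and the `n`-th derived subgroup fixes
level `n`. A nontrivial element moves some word, of length `n` say, and so survives in the solvable
quotient by the `n`-th derived subgroup.
-/

section DerivedSeries

universe u

variable {G : Type u} [Group G]

theorem isSolvable_quotient_derivedSeries (n : ℕ) :
    Group.IsSolvable (G ⧸ derivedSeries G n) := by
  refine ⟨n, ?_⟩
  rw [← map_derivedSeries_eq (QuotientGroup.mk'_surjective _), Subgroup.map_eq_bot_iff,
    QuotientGroup.ker_mk']

theorem exists_monoidHom_isSolvable_of_notMem_derivedSeries {g : G} {n : ℕ}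
    (hg : g ∉ derivedSeries G n) :
    ∃ (Q : Type u) (_ : Group Q) (φ : G →* Q), Group.IsSolvable Q ∧ φ g ≠ 1 :=
  ⟨G ⧸ derivedSeries G n, inferInstance, QuotientGroup.mk' _,
    isSolvable_quotient_derivedSeries n, fun h => hg ((QuotientGroup.eq_one_iff g).1 h)⟩

end DerivedSeries

/-- `g` sends the children of the vertex `v` of the tree of words over `A` to the children of `w`,
translating the last letter by `c`. Words grow at their end, so the children of `v` are the words
`v ++ [z]`. -/
def TranslatesChildren {A : Type*} [Add A] (g : Equiv.Perm (List A)) (v w : List A) (c : A) :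
    Prop :=
  ∀ z, g (v ++ [z]) = w ++ [z + c]

namespace TranslatesChildren

section AddGroup

variable {A : Type*} [AddGroup A] {g h : Equiv.Perm (List A)} {u v w : List A} {c d : A}

protected theorem one (v : List A) : TranslatesChildren 1 v v 0 := fun z => by simp

protected theorem mul (hg : TranslatesChildren g v w d) (hh : TranslatesChildren h u v c) :
    TranslatesChildren (g * h) u w (c + d) := fun z => by
  rw [Equiv.Perm.mul_apply, hh z, hg (z + c), add_assoc]

protected theorem inv (hg : TranslatesChildren g v w c) : TranslatesChildren g⁻¹ w v (-c) :=
  fun z => by rw [Equiv.Perm.inv_eq_iff_eq, hg, neg_add_cancel_right]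

end AddGroup

open scoped commutatorElement in
protected theorem commutatorElement {A : Type*} [AddCommGroup A] {g h : Equiv.Perm (List A)}
    {v : List A} {c d : A} (hg : TranslatesChildren g v v c) (hh : TranslatesChildren h v v d) :
    TranslatesChildren ⁅g, h⁆ v v 0 := by
  have shift_eq_zero : -d + (-c + (d + c)) = 0 := by abel
  simpa only [shift_eq_zero, commutatorElement_def] using ((hg.mul hh).mul hg.inv).mul hh.inv

end TranslatesChildren

/-- The automorphisms of the rooted tree of words over `A` whose local action at every vertex is a
translation. A permutation of words that fixes the root and maps the children of each `v` to those
of `g v` is a tree automorphism, so the latter need not be required separately. -/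
def translationTree (A : Type*) [AddGroup A] : Subgroup (Equiv.Perm (List A)) where
  carrier := {g | g [] = [] ∧ ∀ v, ∃ c, TranslatesChildren g v (g v) c}
  one_mem' := ⟨rfl, fun v => ⟨0, .one v⟩⟩
  mul_mem' := by
    rintro g h ⟨hg_root, hg⟩ ⟨hh_root, hh⟩
    refine ⟨by rw [Equiv.Perm.mul_apply, hh_root, hg_root], fun v => ?_⟩
    obtain ⟨c, hc⟩ := hh v
    obtain ⟨d, hd⟩ := hg (h v)
    exact ⟨c + d, hd.mul hc⟩
  inv_mem' := by
    rintro g ⟨hg_root, hg⟩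
    refine ⟨by rw [Equiv.Perm.inv_eq_iff_eq, hg_root], fun v => ?_⟩
    obtain ⟨c, hc⟩ := hg (g⁻¹ v)
    rw [show g (g⁻¹ v) = v from g.apply_symm_apply v] at hc
    exact ⟨-c, hc.inv⟩

section TranslationTree

variable {A : Type*} [AddCommGroup A]

open scoped commutatorElement in
theorem commutatorElement_smul_append_singleton {g h : translationTree A} {v : List A}
    (hg : g • v = v) (hh : h • v = v) (z : A) : ⁅g, h⁆ • (v ++ [z]) = v ++ [z] := by
  obtain ⟨c, hc⟩ := g.2.2 v
  obtain ⟨d, hd⟩ := h.2.2 v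
  rw [show g.1 v = v from hg] at hc
  rw [show h.1 v = v from hh] at hd
  have hfix := hc.commutatorElement hd z
  rwa [add_zero] at hfix

theorem derivedSeries_translationTree_le_fixingSubgroup (n : ℕ) :
    derivedSeries (translationTree A) n ≤
      fixingSubgroup (translationTree A) {v : List A | v.length = n} := by
  induction n with
  | zero =>
    intro g _
    rw [mem_fixingSubgroup_iff]
    intro v hv
    rw [List.length_eq_zero_iff.1 hv]
    exact g.2.1
  | succ n ih =>
    rw [derivedSeries_succ, Subgroup.commutator_le]
    intro g hg h hh
    have hg_fix := (mem_fixingSubgroup_iff _).1 (ih hg)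
    have hh_fix := (mem_fixingSubgroup_iff _).1 (ih hh)
    rw [mem_fixingSubgroup_iff]
    intro w hw
    obtain rfl | ⟨v, z, rfl⟩ := List.eq_nil_or_concat' w
    · simp at hw
    · have hv : v.length = n := by simpa using hw
      exact commutatorElement_smul_append_singleton (hg_fix v hv) (hh_fix v hv) z

theorem exists_notMem_derivedSeries_translationTree {g : translationTree A} (hg : g ≠ 1) :
    ∃ n, g ∉ derivedSeries (translationTree A) n := by
  contrapose! hg
  refine Subtype.ext (Equiv.ext fun w => ?_)
  exact (mem_fixingSubgroup_iff _).1
    (derivedSeries_translationTree_le_fixingSubgroup w.length (hg w.length)) w rfl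

end TranslationTree

section KneadingAutomaton

variable (k p : ℕ) (x y : ℕ → ℤ)

/-- The restriction `s|_v` of the state `s` to the subtree at the vertex `v`: the state reached from
`s` after reading the word `v`. -/
def stateRestrict (s : KState) (v : List ℤ) : KState :=
  v.foldl (fun t z => (KTrans k p x y t z).2) s

theorem stateAct_append (s : KState) (v w : List ℤ) :
    stateAct k p x y s (v ++ w) =
      stateAct k p x y s v ++ stateAct k p x y (stateRestrict k p x y s v) w := by
  induction v generalizing s with
  | nil => rfl
  | cons z v ih => simp only [List.cons_append, stateAct, ih, stateRestrict, List.foldl_cons]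

theorem exists_KTrans_fst_eq_add (s : KState) : ∃ c, ∀ z, (KTrans k p x y s z).1 = z + c := by
  rcases s with (_ | i) | (_ | i) | _
  case a.zero => exact ⟨1, fun _ => rfl⟩
  all_goals
    refine ⟨0, fun z => ?_⟩
    simp only [KTrans, add_zero]
    try split_ifs <;> rfl

theorem Kgroup_le_translationTree : Kgroup k p x y ≤ translationTree ℤ := by
  refine (Subgroup.closure_le _).2 ?_
  rintro g ⟨s, -, hs⟩
  refine ⟨by rw [hs, stateAct], fun v => ?_⟩
  obtain ⟨c, hc⟩ := exists_KTrans_fst_eq_add k p x y (stateRestrict k p x y s v)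
  exact ⟨c, fun z => by simp only [hs, stateAct_append, stateAct, hc]⟩

end KneadingAutomaton

theorem stmt15 (k p : ℕ) (hk : 1 ≤ k) (hp : 1 ≤ p) (x y : ℕ → ℤ)
    (hxy : x (k - 1) ≠ y (p - 1)) :
    ∀ g : ↥(Kgroup k p x y), g ≠ 1 →
      ∃ (G : Type) (_ : Group G) (φ : ↥(Kgroup k p x y) →* G),
        IsSolvable G ∧ φ g ≠ 1 := by
  intro g hg
  let ι := Subgroup.inclusion (Kgroup_le_translationTree k p x y)
  have hιg : ι g ≠ 1 :=
    (map_ne_one_iff ι (Subgroup.inclusion_injective _)).2 hg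
  obtain ⟨n, hn⟩ := exists_notMem_derivedSeries_translationTree hιg
  obtain ⟨G, _, φ, hG, hφ⟩ := exists_monoidHom_isSolvable_of_notMem_derivedSeries hn
  exact ⟨G, inferInstance, φ.comp ι, hG, hφ⟩
end

section
/- Define states c_m for m ≥ 0 by c_m = a_{m+1} if 0 ≤ m < k, and c_m = b_{j+1} with j = (m − k) mod p if m ≥ k. Then for every m ≥ 0, every s ∈ S and every v ∈ ℤ^m: the section s|_v equals the automorphism induced by the state a₁ (i.e. s|_v acts on length-one words by z ↦ z+1) if and only if (s, v) = (c_m, w_m); and for every other pair (s, v), the section s|_v fixes every length-one word. -/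
/-- The section (restriction) of a state at a finite word, so that
`stateAct s (v ++ w) = stateAct s v ++ stateAct (stateSec s v) w`. -/
def stateSec (k p : ℕ) (x y : ℕ → ℤ) : KState → List ℤ → KState
  | s, [] => s
  | s, z :: v => stateSec k p x y (KTrans k p x y s z).2 v

/-- The kneading sequence (0-indexed): `kappa k p x y n` is the paper's `κ_{n+1}`,
i.e. the sequence `x₁ … x_k y₁ … y_p y₁ … y_p ⋯`. -/
def kappa (k p : ℕ) (x y : ℕ → ℤ) (n : ℕ) : ℤ :=
  if n < k then x n else y ((n - k) % p)

/-- `wword k p x y m` is `w_m`, the reverse of the length-`m` prefix of the kneading sequence. -/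
def wword (k p : ℕ) (x y : ℕ → ℤ) (m : ℕ) : List ℤ :=
  ((List.range m).map (kappa k p x y)).reverse

/-- The state `c_m`: the paper's `a_{m+1}` for `m < k`, and `b_{j+1}` with
`j = (m - k) mod p` for `m ≥ k`. -/
def cstate (k p : ℕ) (m : ℕ) : KState :=
  if m < k then .a m else .b ((m - k) % p)

/-!
Read backwards from `a₁`, the kneading automaton is deterministic on generators: the only
generator restricting to `c_m` at a single letter is `c_{m+1}`, and only at the letter `κ_{m+1}`
(at the junction, `x_k ≠ y_p` keeps apart the two arrows leaving `b₁`). Hence the only path of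
length `m` from a generator to `a₁ = c_0` starts at `c_m` and is labelled by `w_m`. Since `a₁` is
the only state that moves a letter, this decides which sections act as `a₁` and shows that all
others fix the first level.
-/

section Automaton

variable {k p : ℕ} {x y : ℕ → ℤ}

theorem isGen_a_iff {i : ℕ} : IsGen k p (.a i) ↔ i < k := by
  simp [IsGen]

theorem isGen_b_iff {j : ℕ} : IsGen k p (.b j) ↔ j < p := by
  simp [IsGen]

theorem KTrans_snd_eq_a_iff {s : KState} {z : ℤ} {i : ℕ} :
    (KTrans k p x y s z).2 = .a i ↔
      s = .a (i + 1) ∧ z = x i ∨ s = .b 0 ∧ z = x (k - 1) ∧ i = k - 1 := by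
  rcases s with (_ | n) | (_ | n) | _ <;> grind [KTrans]

theorem KTrans_snd_eq_b_iff {s : KState} {z : ℤ} {j : ℕ} :
    (KTrans k p x y s z).2 = .b j ↔
      s = .b (j + 1) ∧ z = y j ∨
        s = .b 0 ∧ z ≠ x (k - 1) ∧ z = y (p - 1) ∧ j = p - 1 := by
  rcases s with (_ | n) | (_ | n) | _ <;> grind [KTrans]

theorem IsGen.KTrans_snd (hk : 1 ≤ k) {s : KState} (hs : IsGen k p s) {z : ℤ}
    (hid : (KTrans k p x y s z).2 ≠ .id) :
    IsGen k p (KTrans k p x y s z).2 := by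
  cases htarget : (KTrans k p x y s z).2 with
  | a i =>
    rw [isGen_a_iff]
    rcases KTrans_snd_eq_a_iff.mp htarget with ⟨rfl, -⟩ | ⟨-, -, rfl⟩
    · exact Nat.lt_of_succ_lt (isGen_a_iff.mp hs)
    · exact Nat.sub_one_lt_of_lt hk
  | b j =>
    rw [isGen_b_iff]
    rcases KTrans_snd_eq_b_iff.mp htarget with ⟨rfl, -⟩ | ⟨rfl, -, -, rfl⟩
    · exact Nat.lt_of_succ_lt (isGen_b_iff.mp hs)
    · exact Nat.sub_one_lt_of_lt (isGen_b_iff.mp hs)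
  | id => exact absurd htarget hid

theorem stateSec_id (v : List ℤ) : stateSec k p x y .id v = .id := by
  induction v with
  | nil => rfl
  | cons _ _ ih => exact ih

theorem stateAct_singleton_eq_self_iff {s : KState} {z : ℤ} :
    stateAct k p x y s [z] = [z] ↔ s ≠ .a 0 := by
  rcases s with (_ | n) | (_ | n) | _ <;> grind [stateAct, KTrans]

theorem stateAct_eq_stateAct_a_zero_iff {s : KState} :
    stateAct k p x y s = stateAct k p x y (.a 0) ↔ s = .a 0 := by
  refine ⟨fun hact => ?_, fun hs => by rw [hs]⟩
  by_contra hs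
  have hfix : stateAct k p x y (.a 0) [0] = [0] :=
    hact ▸ stateAct_singleton_eq_self_iff.mpr hs
  exact stateAct_singleton_eq_self_iff.mp hfix rfl

end Automaton

section KneadingPath

variable {k p : ℕ} {x y : ℕ → ℤ} {m : ℕ}

theorem cstate_of_lt (hm : m < k) : cstate k p m = .a m := if_pos hm

theorem cstate_add (n : ℕ) : cstate k p (k + n) = .b (n % p) := by
  simp [cstate]

theorem kappa_of_lt (hm : m < k) : kappa k p x y m = x m := if_pos hm

theorem kappa_add (n : ℕ) : kappa k p x y (k + n) = y (n % p) := by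
  simp [kappa]

theorem cstate_ne_id : cstate k p m ≠ .id := by
  unfold cstate
  split <;> simp

theorem wword_succ : wword k p x y (m + 1) = kappa k p x y m :: wword k p x y m := by
  simp [wword, List.range_succ]

theorem KTrans_snd_eq_cstate_iff_of_lt (hm : m < k) {s : KState} (hs : IsGen k p s) {z : ℤ} :
    (KTrans k p x y s z).2 = cstate k p m ↔
      s = cstate k p (m + 1) ∧ z = kappa k p x y m := by
  rw [cstate_of_lt hm, kappa_of_lt hm, KTrans_snd_eq_a_iff]
  rcases Nat.lt_or_eq_of_le hm with hlt | rfl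
  · rw [cstate_of_lt hlt]
    have hne : m ≠ k - 1 := by lia
    simp [hne]
  · have hs_ne : s ≠ .a (m + 1) := by
      rintro rfl
      exact (isGen_a_iff.mp hs).false
    have hjunction : cstate (m + 1) p (m + 1) = .b 0 := by
      simpa using cstate_add (k := m + 1) 0
    simp [hjunction, hs_ne]

theorem KTrans_snd_eq_cstate_add_iff (hp : 1 ≤ p) (hxy : x (k - 1) ≠ y (p - 1)) (n : ℕ)
    {s : KState} (hs : IsGen k p s) {z : ℤ} :
    (KTrans k p x y s z).2 = cstate k p (k + n) ↔
      s = cstate k p (k + n + 1) ∧ z = kappa k p x y (k + n) := by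
  rw [add_assoc, cstate_add, cstate_add, kappa_add, KTrans_snd_eq_b_iff, ← Nat.mod_add_mod]
  rcases Nat.lt_or_eq_of_le (Nat.mod_lt n hp) with hlt | heq
  · have hne : n % p ≠ p - 1 := by lia
    simp [hne, Nat.mod_eq_of_lt hlt]
  · have hs_ne : s ≠ .b (n % p + 1) := by
      rintro rfl
      exact (isGen_b_iff.mp hs).ne heq
    have hlast : n % p = p - 1 := Nat.eq_sub_of_add_eq heq
    have hwrap : (n % p + 1) % p = 0 := by rw [show n % p + 1 = p from heq, Nat.mod_self]
    have hletter : z = y (p - 1) → z ≠ x (k - 1) := fun hz => hz ▸ hxy.symm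
    simp only [hs_ne, hwrap, false_and, false_or]
    simp only [hlast, and_true, and_iff_right_of_imp hletter]

theorem KTrans_snd_eq_cstate_iff (hp : 1 ≤ p) (hxy : x (k - 1) ≠ y (p - 1)) {s : KState}
    (hs : IsGen k p s) {z : ℤ} :
    (KTrans k p x y s z).2 = cstate k p m ↔
      s = cstate k p (m + 1) ∧ z = kappa k p x y m := by
  rcases Nat.lt_or_ge m k with hm | hm
  · exact KTrans_snd_eq_cstate_iff_of_lt hm hs
  · obtain ⟨n, rfl⟩ := Nat.exists_eq_add_of_le hm
    exact KTrans_snd_eq_cstate_add_iff hp hxy n hs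

theorem stateSec_eq_a_zero_iff (hk : 1 ≤ k) (hp : 1 ≤ p) (hxy : x (k - 1) ≠ y (p - 1))
    {s : KState} (hs : IsGen k p s) (v : List ℤ) :
    stateSec k p x y s v = .a 0 ↔
      s = cstate k p v.length ∧ v = wword k p x y v.length := by
  induction v generalizing s with
  | nil => simp [stateSec, wword, cstate_of_lt (Nat.zero_lt_of_lt hk)]
  | cons z v ih =>
    have hstep : stateSec k p x y (KTrans k p x y s z).2 v = .a 0 ↔
        (KTrans k p x y s z).2 = cstate k p v.length ∧ v = wword k p x y v.length := by
      by_cases hid : (KTrans k p x y s z).2 = .id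
      · simp [hid, stateSec_id, cstate_ne_id.symm]
      · exact ih (hs.KTrans_snd hk hid)
    rw [stateSec, hstep, KTrans_snd_eq_cstate_iff hp hxy hs, List.length_cons, wword_succ,
      List.cons.injEq, and_assoc]

end KneadingPath

theorem stmt17 (k p : ℕ) (hk : 1 ≤ k) (hp : 1 ≤ p) (x y : ℕ → ℤ)
    (hxy : x (k - 1) ≠ y (p - 1)) :
    ∀ (m : ℕ) (s : KState) (v : List ℤ), IsGen k p s → v.length = m →
      (stateAct k p x y (stateSec k p x y s v) = stateAct k p x y (.a 0) ↔
        s = cstate k p m ∧ v = wword k p x y m) ∧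
      (¬(s = cstate k p m ∧ v = wword k p x y m) →
        ∀ z : ℤ, stateAct k p x y (stateSec k p x y s v) [z] = [z]) := by
  rintro m s v hs rfl
  rw [stateAct_eq_stateAct_a_zero_iff, ← stateSec_eq_a_zero_iff hk hp hxy hs v]
  exact ⟨Iff.rfl, fun hne z => stateAct_singleton_eq_self_iff.mpr hne⟩
end
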